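/- arXiv:1103.5886 — 3 statements merged into one kernel-verified Lean document; each statement's English description precedes it below -/
import Mathlib

section
/- There is an absolute constant C such that for any h > 2 and all sufficiently large x, #{n : p_n ≤ x, p_{n+1} − p_n ≤ h} ≤ C·min(h/log x, 1)·π(x). -/
open Finset

/-- The `n`-th prime number (`nthPrime 0 = 2`). -/
noncomputable def nthPrime (n : ℕ) : ℕ := Nat.nth Nat.Prime n

/-- The prime counting function `π(x)` at a real argument: the number of primes `≤ x`. -/
noncomputable def primePi (x : ℝ) : ℕ := Nat.primeCounting ⌊x⌋₊

/-- `P_H(n) = ∏_{h ∈ H} (n + h)`. -/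
def tuplePoly (H : Finset ℕ) (n : ℕ) : ℕ := ∏ h ∈ H, (n + h)

/-- `ν_p(H)`: the number of distinct residue classes modulo `p` occupied by `H`. -/
def nuP (p : ℕ) (H : Finset ℕ) : ℕ := (H.image (· % p)).card

/-- `H` is admissible: for every prime `p`, the elements of `H` miss a residue class mod `p`. -/
def Admissible (H : Finset ℕ) : Prop := ∀ p : ℕ, p.Prime → nuP p H < p

/-- The singular series `𝔖(H) = ∏_p (1 - 1/p)^{-|H|} (1 - ν_p(H)/p)`. -/
noncomputable def singularSeries (H : Finset ℕ) : ℝ :=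
  ∏' p : Nat.Primes, ((1 - 1/((p : ℕ) : ℝ)) ^ (-(H.card : ℤ)) * (1 - (nuP p H : ℝ)/((p : ℕ) : ℝ)))

/-- `Λ_R(n; H, ℓ) = (1/(|H|+ℓ)!) ∑_{d ∣ P_H(n), d ≤ R} μ(d) (log (R/d))^{|H|+ℓ}`. -/
noncomputable def LambdaR (R : ℝ) (n : ℕ) (H : Finset ℕ) (ℓ : ℕ) : ℝ :=
  (1 / (H.card + ℓ).factorial : ℝ) *
    ∑ d ∈ (tuplePoly H n).divisors.filter (fun d : ℕ => (d : ℝ) ≤ R),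
      (ArithmeticFunction.moebius d : ℝ) * (Real.log (R / d)) ^ (H.card + ℓ)

/-- `𝒫(x)`: the product of all primes `≤ x`. -/
noncomputable def primorialReal (x : ℝ) : ℕ :=
  ∏ p ∈ (Finset.range (⌊x⌋₊ + 1)).filter Nat.Prime, p

/-- `θ(n) = log n` if `n` is prime, and `0` otherwise. -/
noncomputable def theta (n : ℕ) : ℝ := if n.Prime then Real.log n else 0

/-- `∑_{p ≤ N, p prime, p ≡ a (mod q)} log p`. -/
noncomputable def primeSumAP (N q a : ℕ) : ℝ :=
  ∑ p ∈ (Finset.range (N+1)).filter (fun p => p.Prime ∧ p % q = a % q), Real.log p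

/-- The primes have level of distribution `ϑ`: for every `A > 0` and `ε > 0`,
`∑_{q ≤ N^{ϑ-ε}} max_{(a,q)=1} |∑_{p ≤ N, p ≡ a (q)} log p - N/φ(q)| ≪_{A,ε} N (log N)^{-A}`
(the max over `a` is expressed via an arbitrary coprime choice function `a : ℕ → ℕ`). -/
def HasLevelOfDistribution (ϑ : ℝ) : Prop :=
  ∀ A : ℝ, 0 < A → ∀ ε : ℝ, 0 < ε → ∃ C : ℝ, 0 < C ∧
    ∀ N : ℕ, 2 ≤ N → ∀ a : ℕ → ℕ, (∀ q : ℕ, Nat.Coprime (a q) q) →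
      ∑ q ∈ Finset.Icc 1 ⌊(N : ℝ) ^ (ϑ - ε)⌋₊,
        |primeSumAP N q (a q) - (N : ℝ) / (Nat.totient q)| ≤ C * N / (Real.log N) ^ A

/-- The number of `j` with `N < p_j ≤ 2N` and `p_{j+1} - p_j ≤ h`. -/
noncomputable def gapCount (N : ℕ) (h : ℝ) : ℕ :=
  ((Finset.range (2*N+1)).filter (fun j =>
    N < nthPrime j ∧ nthPrime j ≤ 2*N ∧ ((nthPrime (j+1) : ℝ) - nthPrime j) ≤ h)).card

/-- The number of `j` with `N < p_j ≤ 2N` and `p_{j+2} - p_j ≤ h`. -/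
noncomputable def gapCount2 (N : ℕ) (h : ℝ) : ℕ :=
  ((Finset.range (2*N+1)).filter (fun j =>
    N < nthPrime j ∧ nthPrime j ≤ 2*N ∧ ((nthPrime (j+2) : ℝ) - nthPrime j) ≤ h)).card


/-- Completely multiplicative weight: each prime factor not dividing `k` counts `2`. -/
def cW (k n : ℕ) : ℕ := (n.primeFactorsList.map (fun p => if p ∣ k then 1 else 2)).prod

lemma cW_mul (k : ℕ) {m n : ℕ} (hm : m ≠ 0) (hn : n ≠ 0) : cW k (m * n) = cW k m * cW k n := by
  unfold cW
  rw [((Nat.perm_primeFactorsList_mul hm hn).map _).prod_eq]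
  simp

lemma cW_one (k : ℕ) : cW k 1 = 1 := by simp [cW]

lemma cW_prime (k : ℕ) {p : ℕ} (hp : p.Prime) : cW k p = if p ∣ k then 1 else 2 := by
  simp [cW, Nat.primeFactorsList_prime hp]

lemma card_dvd_le (k n : ℕ) (hn : n ≠ 0) :
    (n.divisors.filter (fun b => b.Coprime k)).card ≤ cW k n := by
  induction n using induction_on_primes with
  | zero => exact absurd rfl hn
  | one =>
    rw [cW_one]
    exact (Finset.card_filter_le _ _).trans (by simp)
  | prime_mul p a hp ih =>
    have ha : a ≠ 0 := by rintro rfl; simp at hn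
    have ih := ih ha
    rw [cW_mul k hp.ne_zero ha, cW_prime k hp]
    split_ifs with hpk
    · rw [one_mul]
      refine le_trans (Finset.card_le_card ?_) ih
      intro b hb
      simp only [Finset.mem_filter, Nat.mem_divisors] at hb ⊢
      refine ⟨⟨?_, ha⟩, hb.2⟩
      have : b.Coprime p := hb.2.coprime_dvd_right hpk
      exact this.dvd_of_dvd_mul_left hb.1.1
    · have hsub : ((p * a).divisors.filter (fun b => b.Coprime k)) ⊆
          (a.divisors.filter (fun b => b.Coprime k)) ∪
            (a.divisors.filter (fun b => b.Coprime k)).image (fun b => p * b) := by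
        intro b hb
        simp only [Finset.mem_filter, Nat.mem_divisors, Finset.mem_union, Finset.mem_image] at hb ⊢
        by_cases hpb : p ∣ b
        · right
          obtain ⟨c, rfl⟩ := hpb
          refine ⟨c, ⟨⟨Nat.dvd_of_mul_dvd_mul_left hp.pos hb.1.1, ha⟩, ?_⟩, rfl⟩
          exact hb.2.coprime_dvd_left (Dvd.intro_left p rfl)
        · left
          refine ⟨⟨?_, ha⟩, hb.2⟩
          have : b.Coprime p := ((Nat.Prime.coprime_iff_not_dvd hp).2 hpb).symm
          exact this.dvd_of_dvd_mul_left hb.1.1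
      refine (Finset.card_le_card hsub).trans ((Finset.card_union_le _ _).trans ?_)
      have := Finset.card_image_le (s := a.divisors.filter (fun b => b.Coprime k))
        (f := fun b => p * b)
      omega

/-- the density function `c(n)/n` -/
noncomputable def fW (k : ℕ) : ℕ →* ℝ where
  toFun n := (cW k n : ℝ) / n
  map_one' := by simp [cW_one]
  map_mul' m n := by
    by_cases hm : m = 0
    · simp [hm]
    by_cases hn : n = 0
    · simp [hn]
    rw [cW_mul k hm hn]
    push_cast
    rw [mul_div_mul_comm]

lemma fW_apply (k n : ℕ) : fW k n = (cW k n : ℝ) / n := rfl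

lemma fW_nonneg (k n : ℕ) : 0 ≤ fW k n := by rw [fW_apply]; positivity

lemma fW_prime_pos (k : ℕ) {p : ℕ} (hp : p.Prime) : 0 < fW k p := by
  rw [fW_apply, cW_prime k hp]
  have := hp.pos
  split_ifs <;> positivity

lemma cW_prime_lt {k : ℕ} (hk : 2 ∣ k) {p : ℕ} (hp : p.Prime) : cW k p + 1 ≤ p := by
  rw [cW_prime k hp]
  have h2 := hp.two_le
  split_ifs with h
  · omega
  · have : p ≠ 2 := by rintro rfl; exact h hk
    omega

lemma fW_prime_lt {k : ℕ} (hk : 2 ∣ k) {p : ℕ} (hp : p.Prime) : fW k p < 1 := by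
  rw [fW_apply, div_lt_one (by exact_mod_cast hp.pos)]
  exact_mod_cast cW_prime_lt hk hp

lemma fW_prime_inv_le {k : ℕ} (hk : 2 ∣ k) {p : ℕ} (hp : p.Prime) : (1 - fW k p)⁻¹ ≤ p := by
  have hpos : (0:ℝ) < p := by exact_mod_cast hp.pos
  have h : (cW k p : ℝ) + 1 ≤ p := by exact_mod_cast cW_prime_lt hk hp
  have : (1:ℝ) / p ≤ 1 - fW k p := by
    rw [fW_apply, div_le_iff₀ hpos, sub_mul, div_mul_cancel₀ _ hpos.ne']
    linarith
  calc (1 - fW k p)⁻¹ ≤ ((1:ℝ) / p)⁻¹ := inv_anti₀ (by positivity) this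
    _ = p := by simp

/-- number of roots mod d -/
lemma card_roots_zmod (k : ℕ) (d : ℕ) (hd : Squarefree d) :
    Nat.card {a : ZMod d // a * (a + k) = 0} = cW k d := by
  induction d using induction_on_primes with
  | zero => simp at hd
  | one =>
    rw [cW_one, Nat.card_eq_one_iff_unique]
    exact ⟨⟨fun a b => Subtype.ext (Subsingleton.elim _ _)⟩, ⟨0, Subsingleton.elim _ _⟩⟩
  | prime_mul p a hp ih =>
    have hcop : p.Coprime a := Nat.coprime_of_squarefree_mul hd
    have ha : Squarefree a := hd.squarefree_of_dvd (Dvd.intro_left p rfl)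
    rw [cW_mul k hp.ne_zero ha.ne_zero, ← ih ha]
    have e := ZMod.chineseRemainder hcop
    have e2 : {x : ZMod (p * a) // x * (x + k) = 0} ≃
        {x : ZMod p // x * (x + k) = 0} × {x : ZMod a // x * (x + k) = 0} := by
      refine (e.toEquiv.subtypeEquiv (q := fun y : ZMod p × ZMod a =>
        y.1 * (y.1 + (k : ZMod p)) = 0 ∧ y.2 * (y.2 + (k : ZMod a)) = 0)
        ?_).trans (Equiv.subtypeProdEquivProd (p := fun x : ZMod p => x * (x + k) = 0)
          (q := fun x : ZMod a => x * (x + k) = 0))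
      intro x
      rw [← e.map_eq_zero_iff, map_mul, map_add, map_natCast, Prod.ext_iff]
      rfl
    rw [Nat.card_congr e2, Nat.card_prod]
    congr 1
    have := Fact.mk hp
    rw [cW_prime k hp]
    have hk : (k : ZMod p) = 0 ↔ p ∣ k := ZMod.natCast_eq_zero_iff k p
    have hset : {x : ZMod p | x * (x + k) = 0} = {0, -(k : ZMod p)} := by
      ext x
      simp [add_eq_zero_iff_eq_neg]
    change Nat.card ({x : ZMod p | x * (x + k) = 0} : Set (ZMod p)) = _
    rw [hset, Nat.card_coe_set_eq]
    split_ifs with h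
    · rw [hk.2 h]; simp
    · exact Set.ncard_pair (fun h0 => h (hk.1 (by simpa using h0.symm)))

lemma count_roots (k d : ℕ) (hd : Squarefree d) :
    Nat.count (fun n => d ∣ n * (n + k)) d = cW k d := by
  have : NeZero d := ⟨hd.ne_zero⟩
  rw [← card_roots_zmod k d hd, Nat.count_eq_card_filter_range, Nat.card_eq_fintype_card,
    Fintype.card_subtype]
  refine Finset.card_bij (fun n _ => (n : ZMod d)) ?_ ?_ ?_
  · intro n hn
    simp only [Finset.mem_filter, Finset.mem_univ, true_and] at hn ⊢
    have := (ZMod.natCast_eq_zero_iff (n * (n + k)) d).2 hn.2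
    push_cast at this
    exact this
  · intro m hm n hn h
    simp only [Finset.mem_filter, Finset.mem_range] at hm hn
    rw [ZMod.natCast_eq_natCast_iff'] at h
    rwa [Nat.mod_eq_of_lt hm.1, Nat.mod_eq_of_lt hn.1] at h
  · intro b hb
    simp only [Finset.mem_filter, Finset.mem_univ, true_and] at hb
    refine ⟨b.val, ?_, by simp⟩
    simp only [Finset.mem_filter, Finset.mem_range]
    refine ⟨ZMod.val_lt b, ?_⟩
    rw [← ZMod.natCast_eq_zero_iff]
    push_cast
    simpa using hb

lemma count_mul_add {p : ℕ → Prop} [DecidablePred p] {d : ℕ} (hp : Function.Periodic p d)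
    (q r : ℕ) : Nat.count p (q * d + r) = q * Nat.count p d + Nat.count p r := by
  induction q with
  | zero => simp
  | succ q ih =>
    rw [show (q + 1) * d + r = d + (q * d + r) by ring, Nat.count_add]
    have : (fun x => p (d + x)) = p := by
      funext x; rw [add_comm]; exact hp x
    simp only [this]
    rw [ih]; ring

lemma count_approx (k d N : ℕ) (hd : Squarefree d) :
    |(((Finset.range N).filter (fun n => d ∣ n * (n + k))).card : ℝ) - fW k d * N| ≤ d := by
  have hd0 : 0 < d := Nat.pos_of_ne_zero hd.ne_zero
  have hper : Function.Periodic (fun n => d ∣ n * (n + k)) d := by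
    intro n
    simp only [eq_iff_iff]
    have : (n + d) * (n + d + k) = n * (n + k) + d * (2 * n + k + d) := by ring
    rw [this]
    exact Nat.dvd_add_iff_left (Dvd.intro _ rfl) |>.symm
  rw [← Nat.count_eq_card_filter_range]
  have h1 := count_mul_add hper (N / d) (N % d)
  rw [Nat.div_add_mod', count_roots k d hd] at h1
  have hlt : N % d < d := Nat.mod_lt _ hd0
  have h2 : Nat.count (fun n => d ∣ n * (n + k)) (N % d) ≤ cW k d := by
    rw [← count_roots k d hd]
    exact Nat.count_monotone _ hlt.le
  have h3 : cW k d ≤ d := by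
    rw [← count_roots k d hd]; exact Nat.count_le _
  have hN : (N : ℝ) = (N / d : ℕ) * d + (N % d : ℕ) := by exact_mod_cast (Nat.div_add_mod' N d).symm
  have hdR : (0:ℝ) < d := by exact_mod_cast hd0
  have h4 : fW k d * N = (N / d : ℕ) * cW k d + cW k d * ((N % d : ℕ) / d) := by
    rw [fW_apply, hN]
    field_simp
  have h5 : ((N % d : ℕ) / d : ℝ) ≤ 1 := by
    rw [div_le_one hdR]; exact_mod_cast hlt.le
  have h6 : (0:ℝ) ≤ ((N % d : ℕ) / d : ℝ) := by positivity
  rw [h1, h4]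
  push_cast at *
  have h2' : (Nat.count (fun n => d ∣ n * (n + k)) (N % d) : ℝ) ≤ cW k d := by exact_mod_cast h2
  have h3' : (cW k d : ℝ) ≤ d := by exact_mod_cast h3
  have h7 : (0:ℝ) ≤ cW k d := by positivity
  have h8 : (0:ℝ) ≤ (Nat.count (fun n => d ∣ n * (n + k)) (N % d) : ℝ) := by positivity
  have h9 := mul_le_of_le_one_right h7 h5
  have h10 := mul_nonneg h7 h6
  rw [abs_le]
  constructor <;> linarith

/-- The Selberg terms. -/
noncomputable def gW (k l : ℕ) : ℝ := fW k l * ∏ p ∈ l.primeFactors, (1 - fW k p)⁻¹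

lemma gW_nonneg {k : ℕ} (hk : 2 ∣ k) (l : ℕ) : 0 ≤ gW k l := by
  refine mul_nonneg (fW_nonneg _ _) (Finset.prod_nonneg fun p hp => ?_)
  have := fW_prime_lt hk (Nat.prime_of_mem_primeFactors hp)
  exact inv_nonneg.2 (by linarith)

lemma sum_fiber_le {k : ℕ} (hk : 2 ∣ k) (l : ℕ) (T : Finset ℕ)
    (hT : ∀ n ∈ T, n ≠ 0 ∧ ∏ p ∈ n.primeFactors, p = l) :
    ∑ n ∈ T, fW k n ≤ gW k l := by
  rcases T.eq_empty_or_nonempty with rfl | ⟨n0, hn0⟩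
  · simpa using gW_nonneg hk l
  have hl0 : 0 < l := by
    rw [← (hT n0 hn0).2]
    exact Finset.prod_pos fun p hp => (Nat.prime_of_mem_primeFactors hp).pos
  have hdvd : ∀ n ∈ T, l ∣ n := fun n hn => by
    rw [← (hT n hn).2]; exact Nat.prod_primeFactors_dvd n
  have hpf : ∀ n ∈ T, n.primeFactors = l.primeFactors := fun n hn => by
    rw [← (hT n hn).2, Nat.primeFactors_prod (fun p hp => Nat.prime_of_mem_primeFactors hp)]
  have hs := (EulerProduct.summable_and_hasSum_factoredNumbers_prod_filter_prime_geometric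
    (f := fW k) (fun {p} hp => by
      rw [Real.norm_of_nonneg (fW_nonneg _ _)]; exact fW_prime_lt hk hp) l.primeFactors).2
  rw [show (fun m : Nat.factoredNumbers l.primeFactors => fW k m) =
    (fW k : ℕ → ℝ) ∘ (Subtype.val) from rfl, hasSum_subtype_iff_indicator] at hs
  have hfilter : l.primeFactors.filter Nat.Prime = l.primeFactors :=
    Finset.filter_true_of_mem fun p hp => Nat.prime_of_mem_primeFactors hp
  rw [hfilter] at hs
  have hinj : Set.InjOn (fun n => n / l) (T : Set ℕ) := by
    intro a ha b hb h
    simp only at h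
    rw [← Nat.div_mul_cancel (hdvd a ha), ← Nat.div_mul_cancel (hdvd b hb), h]
  have hle := sum_le_hasSum (T.image (fun n => n / l)) (fun i _ => Set.indicator_nonneg
    (fun x _ => fW_nonneg k x) i) hs
  rw [Finset.sum_image hinj] at hle
  calc ∑ n ∈ T, fW k n = ∑ n ∈ T, fW k l *
        ((Nat.factoredNumbers l.primeFactors).indicator (fW k) (n / l)) := by
        refine Finset.sum_congr rfl fun n hn => ?_
        have hmem : n / l ∈ Nat.factoredNumbers l.primeFactors := by
          apply Nat.mem_factoredNumbers_of_primeFactors_subset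
          · exact (Nat.div_pos (Nat.le_of_dvd (Nat.pos_of_ne_zero (hT n hn).1) (hdvd n hn)) hl0).ne'
          · rw [← hpf n hn]
            exact Nat.primeFactors_mono (Nat.div_dvd_of_dvd (hdvd n hn)) (hT n hn).1
        rw [Set.indicator_of_mem hmem, ← map_mul, Nat.mul_div_cancel' (hdvd n hn)]
    _ = fW k l * ∑ n ∈ T, ((Nat.factoredNumbers l.primeFactors).indicator (fW k) (n / l)) := by
        rw [Finset.mul_sum]
    _ ≤ gW k l := mul_le_mul_of_nonneg_left hle (fW_nonneg _ _)

lemma sum_fW_le_sum_gW {k : ℕ} (hk : 2 ∣ k) (z : ℕ) :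
    ∑ n ∈ Finset.Icc 1 z, fW k n ≤ ∑ l ∈ (Finset.Icc 1 z).filter Squarefree, gW k l := by
  rw [← Finset.sum_fiberwise_of_maps_to (s := Finset.Icc 1 z)
    (t := (Finset.Icc 1 z).filter Squarefree) (g := fun n => ∏ p ∈ n.primeFactors, p)]
  · refine Finset.sum_le_sum fun l _ => sum_fiber_le hk l _ fun n hn => ?_
    simp only [Finset.mem_filter, Finset.mem_Icc] at hn
    exact ⟨by omega, hn.2⟩
  · intro n hn
    simp only [Finset.mem_filter, Finset.mem_Icc] at hn ⊢
    refine ⟨⟨?_, ?_⟩, ?_⟩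
    · exact Nat.one_le_iff_ne_zero.2 (Finset.prod_pos fun p hp => (Nat.prime_of_mem_primeFactors hp).pos).ne'
    · exact (Nat.le_of_dvd (by omega) (Nat.prod_primeFactors_dvd n)).trans hn.2
    · rw [← Nat.radical_eq_prod_primeFactors]
      exact UniqueFactorizationMonoid.squarefree_radical

lemma mul_sum_le_sum_fW (k y : ℕ) :
    (∑ a ∈ Finset.Icc 1 y, (1 : ℝ) / a) *
      (∑ b ∈ (Finset.Icc 1 y).filter (fun b => b.Coprime k), (1 : ℝ) / b) ≤
    ∑ n ∈ Finset.Icc 1 (y * y), fW k n := by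
  rw [Finset.sum_mul_sum, ← Finset.sum_product']
  calc _ ≤ ∑ x ∈ (Finset.Icc 1 (y * y)).sigma
        (fun n => n.divisors.filter (fun b => b.Coprime k)), (1:ℝ) / x.1 := by
        have hcongr : ∀ x ∈ Finset.Icc 1 y ×ˢ (Finset.Icc 1 y).filter (fun b => b.Coprime k),
            (1:ℝ) / x.1 * (1 / x.2) =
            (fun x : (_ : ℕ) × ℕ => (1:ℝ) / x.1) ((⟨x.1 * x.2, x.2⟩ : (_ : ℕ) × ℕ)) := by
          intro x _
          push_cast; rw [one_div_mul_one_div]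
        rw [Finset.sum_congr rfl hcongr, ← Finset.sum_image (f := fun x : (_ : ℕ) × ℕ => (1:ℝ) / x.1)
          (g := fun x : ℕ × ℕ => (⟨x.1 * x.2, x.2⟩ : (_ : ℕ) × ℕ))]
        · refine Finset.sum_le_sum_of_subset_of_nonneg ?_ (fun _ _ _ => by positivity)
          intro x hx
          simp only [Finset.mem_image, Finset.mem_product, Finset.mem_filter, Finset.mem_Icc] at hx
          obtain ⟨⟨a, b⟩, ⟨⟨ha1, ha2⟩, ⟨hb1, hb2⟩, hb⟩, rfl⟩ := hx
          simp only [Finset.mem_sigma, Finset.mem_Icc, Finset.mem_filter, Nat.mem_divisors]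
          have : a * b ≠ 0 := Nat.mul_ne_zero (by omega) (by omega)
          exact ⟨⟨Nat.one_le_iff_ne_zero.2 this, Nat.mul_le_mul ha2 hb2⟩,
            ⟨Dvd.intro_left a rfl, this⟩, hb⟩
        · rintro ⟨a, b⟩ hx ⟨c, d⟩ hx' h
          simp only [Finset.coe_product, Set.mem_prod, Finset.mem_coe, Finset.mem_filter,
            Finset.mem_Icc] at hx hx'
          simp only [Sigma.mk.injEq, heq_eq_eq] at h
          obtain ⟨h1, rfl⟩ := h
          have := Nat.eq_of_mul_eq_mul_right (by omega) h1
          rw [this]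
    _ = ∑ n ∈ Finset.Icc 1 (y * y), ((n.divisors.filter (fun b => b.Coprime k)).card : ℝ) / n := by
        rw [Finset.sum_sigma]
        refine Finset.sum_congr rfl fun n _ => ?_
        simp [div_eq_mul_inv]
    _ ≤ _ := by
        refine Finset.sum_le_sum fun n hn => ?_
        rw [fW_apply]
        have := card_dvd_le k n (by simp at hn; omega)
        gcongr

lemma prod_mul_harm_le (y : ℕ) (S : Finset ℕ) (hS : ∀ p ∈ S, p.Prime) :
    (∏ p ∈ S, (1 - 1 / (p : ℝ))) * ∑ b ∈ Finset.Icc 1 y, (1 : ℝ) / b ≤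
      ∑ b ∈ (Finset.Icc 1 y).filter (fun b => ∀ p ∈ S, ¬ p ∣ b), (1 : ℝ) / b := by
  induction S using Finset.induction_on with
  | empty => simp
  | insert q S hq ih =>
    have ih := ih fun p hp => hS p (Finset.mem_insert_of_mem hp)
    have hqp := hS q (Finset.mem_insert_self _ _)
    have hqR : (1:ℝ) < q := by exact_mod_cast hqp.one_lt
    rw [Finset.prod_insert hq, mul_assoc]
    set A := (Finset.Icc 1 y).filter (fun b => ∀ p ∈ S, ¬ p ∣ b) with hA
    have h0 : 0 ≤ 1 - 1 / (q:ℝ) := by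
      rw [sub_nonneg, div_le_one (by linarith)]; exact hqR.le
    refine (mul_le_mul_of_nonneg_left ih h0).trans ?_
    have hsplit := Finset.sum_filter_add_sum_filter_not A (fun b => q ∣ b) (fun b => (1:ℝ) / b)
    have heq : (Finset.Icc 1 y).filter (fun b => ∀ p ∈ insert q S, ¬ p ∣ b) =
        A.filter (fun b => ¬ q ∣ b) := by
      ext b
      simp only [hA, Finset.mem_filter, Finset.forall_mem_insert]
      tauto
    rw [heq]
    have hmul : ∑ b ∈ A.filter (fun b => q ∣ b), (1:ℝ) / b ≤ 1 / q * ∑ b ∈ A, (1:ℝ) / b := by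
      rw [Finset.mul_sum]
      have : ∑ b ∈ A.filter (fun b => q ∣ b), (1:ℝ) / b ≤
          ∑ b ∈ A.image (fun c => q * c), (1:ℝ) / b := by
        refine Finset.sum_le_sum_of_subset_of_nonneg ?_ (fun _ _ _ => by positivity)
        intro b hb
        simp only [hA, Finset.mem_filter, Finset.mem_Icc, Finset.mem_image] at hb ⊢
        obtain ⟨⟨⟨hb1, hb2⟩, hb3⟩, c, rfl⟩ := hb
        refine ⟨c, ⟨⟨?_, ?_⟩, fun p hp hpc => hb3 p hp (hpc.mul_left q)⟩, rfl⟩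
        · rcases Nat.eq_zero_or_pos c with rfl | h
          · simp at hb1
          · exact h
        · exact (Nat.le_mul_of_pos_left c hqp.pos).trans hb2
      refine this.trans (le_of_eq ?_)
      rw [Finset.sum_image (fun a _ b _ h => Nat.eq_of_mul_eq_mul_left hqp.pos h)]
      refine Finset.sum_congr rfl fun c _ => ?_
      push_cast; rw [one_div_mul_one_div]
    linarith

lemma half_le_prod (S : Finset ℕ) (hS : ∀ p ∈ S, 2 ≤ p) :
    (1 / 2 : ℝ) ≤ ∏ p ∈ S, (1 - 1 / (p : ℝ) ^ 2) := by
  have key : ∀ M : ℕ, ∏ n ∈ Finset.Icc 2 (M + 1), (1 - 1 / (n : ℝ) ^ 2) =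
      ((M : ℝ) + 2) / (2 * ((M : ℝ) + 1)) := by
    intro M
    induction M with
    | zero => norm_num
    | succ M ih =>
      rw [← Finset.insert_Icc_right_eq_Icc_add_one (by omega), Finset.prod_insert (by simp), ih]
      push_cast
      field_simp
      ring
  have hf : ∀ p : ℕ, 2 ≤ p → 0 ≤ 1 - 1 / (p:ℝ)^2 ∧ 1 - 1 / (p:ℝ)^2 ≤ 1 := by
    intro p hp
    have hp' : (2:ℝ) ≤ p := by exact_mod_cast hp
    constructor
    · rw [sub_nonneg, div_le_one (by positivity)]; nlinarith
    · have : 0 ≤ 1 / (p:ℝ)^2 := by positivity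
      linarith
  have hsub : S ⊆ Finset.Icc 2 (S.sup id + 1) := fun p hp => by
    have := Finset.le_sup (f := id) hp
    simp only [id] at this
    simp only [Finset.mem_Icc]
    exact ⟨hS p hp, by omega⟩
  have h1 := Finset.prod_sdiff (f := fun p : ℕ => (1 - 1 / (p : ℝ) ^ 2)) hsub
  rw [key] at h1
  have h2 : ∏ p ∈ Finset.Icc 2 (S.sup id + 1) \ S, (1 - 1 / (p : ℝ) ^ 2) ≤ 1 := by
    refine Finset.prod_le_one (fun p hp => ?_) (fun p hp => ?_) <;>
    · simp only [Finset.mem_sdiff, Finset.mem_Icc] at hp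
      first | exact (hf p hp.1.1).1 | exact (hf p hp.1.1).2
  have h3 : 0 ≤ ∏ p ∈ S, (1 - 1 / (p : ℝ) ^ 2) := Finset.prod_nonneg fun p hp => (hf p (hS p hp)).1
  have h4 : (1/2 : ℝ) ≤ ((S.sup id : ℕ) + 2) / (2 * ((S.sup id : ℕ) + 1)) := by
    rw [div_le_div_iff₀ (by norm_num) (by positivity)]; linarith
  nlinarith

/-- `σ(k)/k` -/
noncomputable def sW (k : ℕ) : ℝ := ∑ d ∈ k.divisors, (1 : ℝ) / d

lemma prod_lower (k : ℕ) (hk : k ≠ 0) :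
    1 / 2 ≤ (∏ p ∈ k.primeFactors, (1 - 1 / (p : ℝ))) * sW k := by
  have h1 : ∏ p ∈ k.primeFactors, (1 + 1 / (p : ℝ)) ≤ sW k := by
    rw [Finset.prod_one_add]
    have : ∀ T ∈ k.primeFactors.powerset, ∏ p ∈ T, (1 / (p:ℝ)) = 1 / ((∏ p ∈ T, p : ℕ) : ℝ) := by
      intro T _
      push_cast
      simp
    rw [Finset.sum_congr rfl this, sW]
    rw [← Finset.sum_image (f := fun d : ℕ => (1:ℝ) / d) (g := fun T : Finset ℕ => ∏ p ∈ T, p)]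
    · refine Finset.sum_le_sum_of_subset_of_nonneg ?_ (fun _ _ _ => by positivity)
      intro d hd
      simp only [Finset.mem_image, Finset.mem_powerset] at hd
      obtain ⟨T, hT, rfl⟩ := hd
      exact Nat.mem_divisors.2 ⟨(Finset.prod_dvd_prod_of_subset _ _ _ hT).trans
        (Nat.prod_primeFactors_dvd k), hk⟩
    · intro T hT T' hT' h
      simp only [Finset.coe_powerset, Set.mem_preimage, Set.mem_powerset_iff, Finset.coe_subset] at hT hT'
      have := congrArg Nat.primeFactors h
      simp only at this
      rwa [Nat.primeFactors_prod (fun p hp => Nat.prime_of_mem_primeFactors (hT hp)),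
        Nat.primeFactors_prod (fun p hp => Nat.prime_of_mem_primeFactors (hT' hp))] at this
  have h2 := half_le_prod k.primeFactors fun p hp => (Nat.prime_of_mem_primeFactors hp).two_le
  have h3 : ∏ p ∈ k.primeFactors, (1 - 1 / (p : ℝ) ^ 2) =
      (∏ p ∈ k.primeFactors, (1 - 1 / (p : ℝ))) * ∏ p ∈ k.primeFactors, (1 + 1 / (p : ℝ)) := by
    rw [← Finset.prod_mul_distrib]
    refine Finset.prod_congr rfl fun p _ => ?_
    ring
  rw [h3] at h2
  refine h2.trans (mul_le_mul_of_nonneg_left h1 (Finset.prod_nonneg fun p hp => ?_))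
  have : (1:ℝ) < p := by exact_mod_cast (Nat.prime_of_mem_primeFactors hp).one_lt
  rw [sub_nonneg, div_le_one (by linarith)]; exact this.le

lemma sum_gW_lower {k : ℕ} (hk : 2 ∣ k) (hk0 : k ≠ 0) (y : ℕ) :
    Real.log (y + 1) ^ 2 ≤
      2 * sW k * ∑ l ∈ (Finset.Icc 1 (y * y)).filter Squarefree, gW k l := by
  set H := ∑ b ∈ Finset.Icc 1 y, (1 : ℝ) / b with hH
  set Pr := ∏ p ∈ k.primeFactors, (1 - 1 / (p : ℝ))
  set G := ∑ l ∈ (Finset.Icc 1 (y * y)).filter Squarefree, gW k l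
  have hlog : Real.log (y + 1) ≤ H := by
    have := log_add_one_le_harmonic y
    rw [harmonic_eq_sum_Icc] at this
    push_cast at this
    simpa [hH] using this
  have hlog0 : 0 ≤ Real.log (y + 1) := Real.log_nonneg (by linarith [Nat.cast_nonneg (α := ℝ) y])
  have h1 := prod_mul_harm_le y k.primeFactors fun p hp => Nat.prime_of_mem_primeFactors hp
  have heq : (Finset.Icc 1 y).filter (fun b => ∀ p ∈ k.primeFactors, ¬ p ∣ b) =
      (Finset.Icc 1 y).filter (fun b => b.Coprime k) := by
    refine Finset.filter_congr fun b _ => ?_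
    constructor
    · intro h
      refine Nat.Coprime.symm (Nat.coprime_of_dvd fun p hp hpk hpb => h p ?_ hpb)
      exact Nat.mem_primeFactors.2 ⟨hp, hpk, hk0⟩
    · intro h p hp hpb
      exact Nat.not_coprime_of_dvd_of_dvd (Nat.prime_of_mem_primeFactors hp).one_lt hpb
        (Nat.dvd_of_mem_primeFactors hp) h
  rw [heq] at h1
  have h2 := mul_sum_le_sum_fW k y
  have h3 := sum_fW_le_sum_gW hk (y * y)
  have h4 := prod_lower k hk0
  have hH0 : 0 ≤ H := hlog0.trans hlog
  have hs0 : 0 ≤ sW k := Finset.sum_nonneg fun _ _ => by positivity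
  have h5 : H * (Pr * H) ≤ G := (mul_le_mul_of_nonneg_left h1 hH0).trans (h2.trans h3)
  calc Real.log (y + 1) ^ 2 ≤ H ^ 2 := by gcongr
    _ ≤ 2 * (Pr * sW k) * H ^ 2 := by nlinarith [sq_nonneg H]
    _ = 2 * sW k * (H * (Pr * H)) := by ring
    _ ≤ _ := by gcongr

lemma primorial_sqfree (z : ℕ) : Squarefree (primorial z) := by
  have : ∏ p ∈ (primorial z).primeFactors, p = primorial z := by
    rw [primeFactors_primorial, primorial_eq_prod_primesLE]
  rw [← this, ← Nat.radical_eq_prod_primeFactors]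
  exact UniqueFactorizationMonoid.squarefree_radical

lemma dvd_primorial_of {z d : ℕ} (hd : Squarefree d) (hz : d ≤ z) : d ∣ primorial z := by
  rw [← Nat.prod_primeFactors_of_squarefree hd, primorial]
  refine Finset.prod_dvd_prod_of_subset _ _ _ fun p hp => ?_
  have h1 := Nat.le_of_mem_primeFactors hp
  simp only [Finset.mem_filter, Finset.mem_range]
  exact ⟨by omega, Nat.prime_of_mem_primeFactors hp⟩

lemma mono_quad {k : ℕ} : StrictMono (fun n : ℕ => n * (n + k)) := by
  intro a b h
  simp only
  nlinarith [Nat.zero_le k, Nat.zero_le a]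

/-- The sieve problem for prime pairs with difference `k`. -/
noncomputable def pairSieve (k : ℕ) (hk : 2 ∣ k) (N z : ℕ) : BoundingSieve where
  support := (Finset.range N).image (fun n => n * (n + k))
  prodPrimes := primorial z
  prodPrimes_squarefree := primorial_sqfree z
  weights := fun _ => 1
  weights_nonneg := fun _ => zero_le_one
  totalMass := N
  nu := ⟨fun n => fW k n, by simp [fW_apply]⟩
  nu_mult := ⟨by simp, fun {m n} _ => by simp⟩
  nu_pos_of_prime := fun p hp _ => fW_prime_pos k hp
  nu_lt_one_of_prime := fun p hp _ => fW_prime_lt hk hp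

lemma pairSieve_terms (k : ℕ) (hk : 2 ∣ k) (N z l : ℕ) :
    (pairSieve k hk N z).selbergTerms l = gW k l := by
  rw [BoundingSieve.selbergTerms_apply]; rfl

lemma pairSieve_rem (k : ℕ) (hk : 2 ∣ k) (N z d : ℕ) (hd : Squarefree d) :
    |(pairSieve k hk N z).rem d| ≤ d := by
  have h := count_approx k d N hd
  have : (pairSieve k hk N z).multSum d =
      (((Finset.range N).filter (fun n => d ∣ n * (n + k))).card : ℝ) := by
    unfold BoundingSieve.multSum
    change ∑ n ∈ (Finset.range N).image (fun n => n * (n + k)), (if d ∣ n then (1:ℝ) else 0) = _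
    rw [Finset.sum_image (fun a _ b _ h => mono_quad.injective h), Finset.card_filter]
    push_cast
    rfl
  rw [BoundingSieve.rem, this]
  exact h

lemma sum_moebius_between {l m : ℕ} (hm : Squarefree m) :
    ∑ d ∈ m.divisors.filter (fun d => l ∣ d), (ArithmeticFunction.moebius d : ℝ) =
      if m = l then (ArithmeticFunction.moebius l : ℝ) else 0 := by
  by_cases hlm : l ∣ m
  · obtain ⟨q, rfl⟩ := hlm
    have hl0 : l ≠ 0 := fun h => hm.ne_zero (by simp [h])
    have hq0 : q ≠ 0 := fun h => hm.ne_zero (by simp [h])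
    have himg : (l * q).divisors.filter (fun d => l ∣ d) = q.divisors.image (fun e => l * e) := by
      ext d
      simp only [Finset.mem_filter, Nat.mem_divisors, Finset.mem_image]
      constructor
      · rintro ⟨⟨h1, h2⟩, e, rfl⟩
        exact ⟨e, ⟨Nat.dvd_of_mul_dvd_mul_left (Nat.pos_of_ne_zero hl0) h1, hq0⟩, rfl⟩
      · rintro ⟨e, ⟨h1, h2⟩, rfl⟩
        exact ⟨⟨Nat.mul_dvd_mul_left l h1, hm.ne_zero⟩, Dvd.intro e rfl⟩
    rw [himg, Finset.sum_image (fun a _ b _ h =>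
      Nat.eq_of_mul_eq_mul_left (Nat.pos_of_ne_zero hl0) h)]
    have h1 : ∀ e ∈ q.divisors, (ArithmeticFunction.moebius (l * e) : ℝ) =
        ArithmeticFunction.moebius l * ArithmeticFunction.moebius e := by
      intro e he
      have hsq : Squarefree (l * e) :=
        hm.squarefree_of_dvd (Nat.mul_dvd_mul_left l (Nat.dvd_of_mem_divisors he))
      rw [ArithmeticFunction.isMultiplicative_moebius.map_mul_of_coprime
        (Nat.coprime_of_squarefree_mul hsq)]
      push_cast; rfl
    rw [Finset.sum_congr rfl h1, ← Finset.mul_sum]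
    have h2 : ∑ e ∈ q.divisors, (ArithmeticFunction.moebius e : ℝ) = if q = 1 then 1 else 0 := by
      have := congrArg (fun f : ArithmeticFunction ℤ => f q)
        ArithmeticFunction.coe_zeta_mul_moebius
      simp only [ArithmeticFunction.coe_zeta_mul_apply, ArithmeticFunction.one_apply] at this
      exact_mod_cast congrArg (fun t : ℤ => (t : ℝ)) this
    rw [h2]
    have h3 : l * q = l ↔ q = 1 := by
      constructor
      · intro h; exact Nat.eq_of_mul_eq_mul_left (Nat.pos_of_ne_zero hl0) (by simpa using h)
      · rintro rfl; simp
    simp only [h3, mul_ite, mul_one, mul_zero]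
  · rw [if_neg (by rintro rfl; exact hlm dvd_rfl), Finset.filter_false_of_mem, Finset.sum_empty]
    intro d hd hld
    exact hlm (hld.trans (Nat.dvd_of_mem_divisors hd))

/-- support of the sieve weights -/
def DW (z : ℕ) : Finset ℕ := (Finset.Icc 1 z).filter Squarefree

noncomputable def GW (k z : ℕ) : ℝ := ∑ l ∈ DW z, gW k l

noncomputable def wW (k z d : ℕ) : ℝ :=
  ArithmeticFunction.moebius d / (fW k d * GW k z) * ∑ l ∈ (DW z).filter (fun l => d ∣ l), gW k l

lemma gW_one (k : ℕ) : gW k 1 = 1 := by simp [gW]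

lemma gW_mul (k : ℕ) {m n : ℕ} (h : m.Coprime n) : gW k (m * n) = gW k m * gW k n := by
  unfold gW
  rw [h.primeFactors_mul, Finset.prod_union h.disjoint_primeFactors, map_mul]
  ring

lemma GW_pos {k : ℕ} (hk : 2 ∣ k) {z : ℕ} (hz : 1 ≤ z) : 0 < GW k z := by
  have h1 : (1 : ℕ) ∈ DW z := by simp [DW, hz]
  have := Finset.single_le_sum (f := gW k) (fun i _ => gW_nonneg hk i) h1
  rw [gW_one] at this
  exact lt_of_lt_of_le one_pos this

lemma wW_one {k : ℕ} (hk : 2 ∣ k) {z : ℕ} (hz : 1 ≤ z) : wW k z 1 = 1 := by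
  have := (GW_pos hk hz).ne'
  unfold wW
  simp only [one_dvd, Finset.filter_true]
  change _ * GW k z = 1
  simp [this]

lemma wW_zero {k z d : ℕ} (h : z < d) : wW k z d = 0 := by
  unfold wW
  rw [Finset.filter_false_of_mem]
  · simp
  · intro l hl hd
    simp only [DW, Finset.mem_filter, Finset.mem_Icc] at hl
    have := Nat.le_of_dvd (by omega) hd
    omega

lemma fW_pos {k d : ℕ} (hd : d ≠ 0) : 0 < fW k d := by
  rw [fW_apply]
  have : 0 < cW k d := by
    unfold cW
    apply List.prod_pos
    intro a ha
    simp only [List.mem_map] at ha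
    obtain ⟨p, _, rfl⟩ := ha
    split_ifs <;> norm_num
  have : 0 < d := Nat.pos_of_ne_zero hd
  positivity

lemma wW_abs {k : ℕ} (hk : 2 ∣ k) {z : ℕ} (hz : 1 ≤ z) {d : ℕ} (hd : Squarefree d) :
    |wW k z d| ≤ z := by
  rcases lt_or_ge z d with h | h
  · rw [wW_zero h]; simp
  have hG := GW_pos hk hz
  have hf : 0 < fW k d := fW_pos hd.ne_zero
  have hd0 : 0 < d := Nat.pos_of_ne_zero hd.ne_zero
  have h1 : ∑ l ∈ (DW z).filter (fun l => d ∣ l), gW k l ≤ gW k d * GW k z := by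
    rw [GW, Finset.mul_sum]
    calc ∑ l ∈ (DW z).filter (fun l => d ∣ l), gW k l
        = ∑ l ∈ (DW z).filter (fun l => d ∣ l), gW k d * gW k (l / d) := by
          refine Finset.sum_congr rfl fun l hl => ?_
          simp only [DW, Finset.mem_filter] at hl
          obtain ⟨⟨_, h2⟩, e, rfl⟩ := hl
          rw [Nat.mul_div_cancel_left _ hd0, gW_mul k (Nat.coprime_of_squarefree_mul h2)]
      _ = ∑ e ∈ ((DW z).filter (fun l => d ∣ l)).image (fun l => l / d), gW k d * gW k e := by
          rw [Finset.sum_image]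
          intro a ha b hb hab
          simp only [Finset.coe_filter, Set.mem_setOf_eq] at ha hb
          simp only at hab
          rw [← Nat.div_mul_cancel ha.2, ← Nat.div_mul_cancel hb.2, hab]
      _ ≤ _ := by
          refine Finset.sum_le_sum_of_subset_of_nonneg ?_
            (fun i _ _ => mul_nonneg (gW_nonneg hk _) (gW_nonneg hk _))
          intro e he
          simp only [DW, Finset.mem_image, Finset.mem_filter, Finset.mem_Icc] at he ⊢
          obtain ⟨l, ⟨⟨⟨h1, h2⟩, h3⟩, e, rfl⟩, rfl⟩ := he
          rw [Nat.mul_div_cancel_left _ hd0]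
          refine ⟨⟨?_, ?_⟩, h3.squarefree_of_dvd (Dvd.intro_left d rfl)⟩
          · rcases Nat.eq_zero_or_pos e with rfl | h
            · simp at h1
            · exact h
          · exact (Nat.le_mul_of_pos_left e hd0).trans h2
  have h2 : 0 ≤ ∑ l ∈ (DW z).filter (fun l => d ∣ l), gW k l :=
    Finset.sum_nonneg fun i _ => gW_nonneg hk i
  have h3 : ∏ p ∈ d.primeFactors, (1 - fW k p)⁻¹ ≤ d := by
    conv_rhs => rw [← Nat.prod_primeFactors_of_squarefree hd]
    push_cast
    refine Finset.prod_le_prod (fun p hp => ?_) fun p hp =>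
      fW_prime_inv_le hk (Nat.prime_of_mem_primeFactors hp)
    have := fW_prime_lt hk (Nat.prime_of_mem_primeFactors hp)
    exact inv_nonneg.2 (by linarith)
  have hmu : |(ArithmeticFunction.moebius d : ℝ)| ≤ 1 := by
    exact_mod_cast ArithmeticFunction.abs_moebius_le_one (n := d)
  calc |wW k z d| = |(ArithmeticFunction.moebius d : ℝ)| / (fW k d * GW k z) *
        ∑ l ∈ (DW z).filter (fun l => d ∣ l), gW k l := by
        rw [wW, abs_mul, abs_div, abs_of_nonneg h2, abs_of_pos (mul_pos hf hG)]
    _ ≤ 1 / (fW k d * GW k z) * (gW k d * GW k z) := by gcongr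
    _ = ∏ p ∈ d.primeFactors, (1 - fW k p)⁻¹ := by
        unfold gW; field_simp
    _ ≤ d := h3
    _ ≤ z := by exact_mod_cast h

lemma yW_eq {k : ℕ} {z l : ℕ} :
    (∑ d ∈ (primorial z).divisors, if l ∣ d then fW k d * wW k z d else 0) =
      if l ∈ DW z then ArithmeticFunction.moebius l * gW k l / GW k z else 0 := by
  have h1 : ∀ d ∈ (primorial z).divisors, (if l ∣ d then fW k d * wW k z d else 0) =
      ∑ m ∈ DW z, gW k m / GW k z *
        (if d ∣ m ∧ l ∣ d then (ArithmeticFunction.moebius d : ℝ) else 0) := by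
    intro d hd
    have hf : fW k d ≠ 0 := (fW_pos (Nat.pos_of_mem_divisors hd).ne').ne'
    by_cases hl : l ∣ d
    · simp only [hl, if_true, and_true]
      rw [wW, Finset.sum_filter, Finset.mul_sum, Finset.mul_sum]
      refine Finset.sum_congr rfl fun m _ => ?_
      split_ifs
      · field_simp
      · simp
    · simp [hl]
  rw [Finset.sum_congr rfl h1, Finset.sum_comm]
  have h2 : ∀ m ∈ DW z, ∑ d ∈ (primorial z).divisors, gW k m / GW k z *
        (if d ∣ m ∧ l ∣ d then (ArithmeticFunction.moebius d : ℝ) else 0) =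
      gW k m / GW k z * if m = l then (ArithmeticFunction.moebius l : ℝ) else 0 := by
    intro m hm
    simp only [DW, Finset.mem_filter, Finset.mem_Icc] at hm
    rw [← sum_moebius_between hm.2, ← Finset.mul_sum, ← Finset.sum_filter]
    congr 2
    ext d
    simp only [Finset.mem_filter, Nat.mem_divisors]
    constructor
    · rintro ⟨_, h1, h2⟩
      exact ⟨⟨h1, by omega⟩, h2⟩
    · rintro ⟨⟨h1, _⟩, h2⟩
      exact ⟨⟨h1.trans (dvd_primorial_of hm.2 hm.1.2), primorial_ne_zero z⟩, h1, h2⟩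
  rw [Finset.sum_congr rfl h2]
  simp only [mul_ite, mul_zero, Finset.sum_ite_eq']
  split_ifs <;> ring

lemma main_le {k : ℕ} (hk : 2 ∣ k) (N : ℕ) {z : ℕ} (hz : 1 ≤ z) :
    (pairSieve k hk N z).mainSum (BoundingSieve.lambdaSquared (wW k z)) ≤ 1 / GW k z := by
  have hG := GW_pos hk hz
  rw [BoundingSieve.mainSum_lambdaSquared_eq_sum_mul_sum_sq]
  simp only [pairSieve_terms]
  change ∑ l ∈ (primorial z).divisors, (gW k l)⁻¹ *
    (∑ d ∈ (primorial z).divisors, if l ∣ d then fW k d * wW k z d else 0) ^ 2 ≤ _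
  simp only [yW_eq]
  calc ∑ l ∈ (primorial z).divisors, (gW k l)⁻¹ *
      (if l ∈ DW z then ArithmeticFunction.moebius l * gW k l / GW k z else 0) ^ 2
      ≤ ∑ l ∈ (primorial z).divisors, if l ∈ DW z then gW k l / GW k z ^ 2 else 0 := by
        refine Finset.sum_le_sum fun l _ => ?_
        split_ifs with h
        · have hmu : (ArithmeticFunction.moebius l : ℝ) ^ 2 ≤ 1 := by
            have : |(ArithmeticFunction.moebius l : ℝ)| ≤ 1 := by
              exact_mod_cast ArithmeticFunction.abs_moebius_le_one (n := l)
            exact (sq_le_one_iff_abs_le_one _).2 this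
          have hg := gW_nonneg hk l
          rcases hg.eq_or_lt with h0 | h0
          · rw [← h0]; simp
          · calc (gW k l)⁻¹ * (ArithmeticFunction.moebius l * gW k l / GW k z) ^ 2
                = (ArithmeticFunction.moebius l : ℝ) ^ 2 * (gW k l / GW k z ^ 2) := by
                  field_simp
              _ ≤ 1 * (gW k l / GW k z ^ 2) := by gcongr
              _ = _ := one_mul _
        · simp
    _ = ∑ l ∈ (primorial z).divisors.filter (fun l => l ∈ DW z), gW k l / GW k z ^ 2 := by
        rw [Finset.sum_filter]
    _ ≤ ∑ l ∈ DW z, gW k l / GW k z ^ 2 := by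
        refine Finset.sum_le_sum_of_subset_of_nonneg ?_
          (fun i _ _ => div_nonneg (gW_nonneg hk i) (by positivity))
        intro l hl
        exact (Finset.mem_filter.1 hl).2
    _ = 1 / GW k z := by
        rw [← Finset.sum_div, ← GW]
        field_simp

lemma err_le {k : ℕ} (hk : 2 ∣ k) (N : ℕ) {z : ℕ} (hz : 1 ≤ z) :
    (pairSieve k hk N z).errSum (BoundingSieve.lambdaSquared (wW k z)) ≤ (z : ℝ) ^ 10 := by
  unfold BoundingSieve.errSum
  change ∑ d ∈ (primorial z).divisors, _ ≤ _
  have hterm : ∀ d ∈ (primorial z).divisors,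
      |BoundingSieve.lambdaSquared (wW k z) d| * |(pairSieve k hk N z).rem d| ≤
        if d ≤ z ^ 2 then (z : ℝ) ^ 8 else 0 := by
    intro d hd
    have hsq : Squarefree d := (primorial_sqfree z).squarefree_of_dvd (Nat.dvd_of_mem_divisors hd)
    have hd0 : d ≠ 0 := hsq.ne_zero
    split_ifs with hdz
    · have hcard : (d.divisors.card : ℝ) ≤ (z : ℝ) ^ 2 := by
        exact_mod_cast (Nat.card_divisors_le_self d).trans hdz
      have h1 : |BoundingSieve.lambdaSquared (wW k z) d| ≤ (z : ℝ) ^ 6 := by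
        unfold BoundingSieve.lambdaSquared
        calc _ ≤ ∑ d1 ∈ d.divisors, ∑ d2 ∈ d.divisors, (z : ℝ) ^ 2 := by
              refine (Finset.abs_sum_le_sum_abs _ _).trans (Finset.sum_le_sum fun d1 h1 => ?_)
              refine (Finset.abs_sum_le_sum_abs _ _).trans (Finset.sum_le_sum fun d2 h2 => ?_)
              split_ifs
              · rw [abs_mul, sq]
                have a1 := wW_abs hk hz (hsq.squarefree_of_dvd (Nat.dvd_of_mem_divisors h1))
                have a2 := wW_abs hk hz (hsq.squarefree_of_dvd (Nat.dvd_of_mem_divisors h2))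
                exact mul_le_mul a1 a2 (abs_nonneg _) (by positivity)
              · rw [abs_zero]; positivity
          _ = (d.divisors.card : ℝ) * ((d.divisors.card : ℝ) * (z:ℝ) ^ 2) := by
              simp
          _ ≤ (z:ℝ)^2 * ((z:ℝ)^2 * (z:ℝ)^2) := by gcongr
          _ = _ := by ring
      have h2 : |(pairSieve k hk N z).rem d| ≤ (z:ℝ) ^ 2 :=
        (pairSieve_rem k hk N z d hsq).trans (by exact_mod_cast hdz)
      calc _ ≤ (z:ℝ)^6 * (z:ℝ)^2 := mul_le_mul h1 h2 (abs_nonneg _) (by positivity)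
        _ = _ := by ring
    · have : BoundingSieve.lambdaSquared (wW k z) d = 0 := by
        unfold BoundingSieve.lambdaSquared
        refine Finset.sum_eq_zero fun d1 h1 => Finset.sum_eq_zero fun d2 h2 => ?_
        split_ifs with h
        · by_cases hz1 : z < d1
          · rw [wW_zero hz1, zero_mul]
          by_cases hz2 : z < d2
          · rw [wW_zero hz2, mul_zero]
          exfalso
          apply hdz
          rw [h]
          have hd1 := Nat.pos_of_mem_divisors h1
          have hd2 := Nat.pos_of_mem_divisors h2
          calc d1.lcm d2 ≤ d1 * d2 := Nat.le_of_dvd (Nat.mul_pos hd1 hd2) (Nat.lcm_dvd_mul d1 d2)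
            _ ≤ z * z := Nat.mul_le_mul (by omega) (by omega)
            _ = z ^ 2 := by ring
        · rfl
      rw [this]; simp
  refine (Finset.sum_le_sum hterm).trans ?_
  rw [← Finset.sum_filter, Finset.sum_const, nsmul_eq_mul]
  have hc : ((primorial z).divisors.filter (fun d => d ≤ z ^ 2)).card ≤ z ^ 2 := by
    calc _ ≤ (Finset.Icc 1 (z ^ 2)).card := Finset.card_le_card fun d hd => by
          simp only [Finset.mem_filter, Finset.mem_Icc] at hd ⊢
          exact ⟨Nat.pos_of_mem_divisors hd.1, hd.2⟩
      _ = z ^ 2 := by simp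
  have hc' : (((primorial z).divisors.filter (fun d => d ≤ z ^ 2)).card : ℝ) ≤ (z:ℝ) ^ 2 := by
    exact_mod_cast hc
  calc _ ≤ (z:ℝ)^2 * (z:ℝ)^8 := by gcongr
    _ = _ := by ring

lemma pair_count_le {k : ℕ} (hk : 2 ∣ k) (N : ℕ) {z : ℕ} (hz : 1 ≤ z) :
    (((Finset.range N).filter (fun n => n.Prime ∧ (n + k).Prime)).card : ℝ) ≤
      (z + 1) + N / GW k z + (z : ℝ) ^ 10 := by
  have hs := BoundingSieve.siftedSum_le_mainSum_errSum_of_upperMoebius (s := pairSieve k hk N z) _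
    (BoundingSieve.upperMoebius_lambdaSquared (wW k z) (wW_one hk hz))
  have hm := main_le hk N hz
  have he := err_le hk N hz
  have htm : (pairSieve k hk N z).totalMass = N := rfl
  have h1 : (pairSieve k hk N z).siftedSum ≤ N / GW k z + (z:ℝ)^10 := by
    refine hs.trans ?_
    rw [htm, div_eq_mul_one_div]
    gcongr
  have h2 : (pairSieve k hk N z).siftedSum =
      (((Finset.range N).filter (fun n => (primorial z).Coprime (n * (n + k)))).card : ℝ) := by
    unfold BoundingSieve.siftedSum
    change ∑ d ∈ (Finset.range N).image (fun n => n * (n + k)),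
      (if (primorial z).Coprime d then (1:ℝ) else 0) = _
    rw [Finset.sum_image (fun a _ b _ h => mono_quad.injective h), Finset.card_filter]
    push_cast
    rfl
  have h3 : ((Finset.range N).filter (fun n => n.Prime ∧ (n + k).Prime)) ⊆
      Finset.range (z + 1) ∪
        ((Finset.range N).filter (fun n => (primorial z).Coprime (n * (n + k)))) := by
    intro n hn
    simp only [Finset.mem_filter, Finset.mem_range, Finset.mem_union] at hn ⊢
    by_cases hnz : n < z + 1
    · exact Or.inl hnz
    · right
      refine ⟨hn.1, ?_⟩
      have hq : ∀ q : ℕ, q.Prime → z < q → (primorial z).Coprime q := by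
        intro q hq hzq
        rw [Nat.coprime_comm, Nat.Prime.coprime_iff_not_dvd hq]
        intro hdvd
        have := (Nat.mem_primeFactors.2 ⟨hq, hdvd, primorial_ne_zero z⟩)
        rw [primeFactors_primorial, Nat.mem_primesLE] at this
        omega
      exact Nat.Coprime.mul_right (hq n hn.2.1 (by omega)) (hq _ hn.2.2 (by omega))
  have h4 := (Finset.card_le_card h3).trans (Finset.card_union_le _ _)
  rw [Finset.card_range] at h4
  have h5 : (((Finset.range N).filter (fun n => n.Prime ∧ (n + k).Prime)).card : ℝ) ≤
      (z + 1) + (((Finset.range N).filter (fun n => (primorial z).Coprime (n * (n + k)))).card : ℝ) := by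
    exact_mod_cast h4
  rw [← h2] at h5
  linarith

lemma pair_count_le2 {k : ℕ} (hk : 2 ∣ k) (hk0 : k ≠ 0) (N : ℕ) {y : ℕ} (hy : 1 ≤ y) :
    (((Finset.range N).filter (fun n => n.Prime ∧ (n + k).Prime)).card : ℝ)
      ≤ 3 * (y:ℝ)^20 + (2 * N / Real.log (y+1)^2) * sW k := by
  have hy1 : (1:ℝ) ≤ y := by exact_mod_cast hy
  have hL : 0 < Real.log (y+1) := Real.log_pos (by linarith)
  have hz : 1 ≤ y*y := Nat.one_le_iff_ne_zero.2 (by positivity)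
  have h1 := pair_count_le hk N hz
  have hG := GW_pos hk hz
  have h2 : Real.log (y+1)^2 ≤ 2 * sW k * GW k (y*y) := sum_gW_lower hk hk0 y
  have h3 : (N:ℝ) / GW k (y*y) ≤ (2 * N / Real.log (y+1)^2) * sW k := by
    rw [div_mul_eq_mul_div, div_le_div_iff₀ hG (by positivity)]
    have : (0:ℝ) ≤ N := Nat.cast_nonneg N
    nlinarith
  have h4 : (1:ℝ) ≤ (y:ℝ)^20 := one_le_pow₀ hy1
  have h5 : (y:ℝ)^2 ≤ (y:ℝ)^20 := pow_le_pow_right₀ hy1 (by norm_num)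
  have h6 : (((y*y : ℕ):ℝ))^10 = (y:ℝ)^20 := by push_cast; ring
  rw [h6] at h1
  push_cast at h1
  nlinarith

lemma sum_inv_sq (H : ℕ) : ∑ d ∈ Finset.Icc 1 H, (1:ℝ)/((d:ℝ)^2) ≤ 2 - 1/(H:ℝ) := by
  induction H with
  | zero => simp
  | succ n ih =>
    rw [Finset.sum_Icc_succ_top (by omega)]
    rcases Nat.eq_zero_or_pos n with rfl | hn
    · norm_num
    have h0 : (0:ℝ) < n := by exact_mod_cast hn
    have : (1:ℝ)/(((n+1:ℕ):ℝ)^2) ≤ 1/(n:ℝ) - 1/((n+1:ℕ):ℝ) := by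
      push_cast
      rw [div_sub_div _ _ h0.ne' (by positivity), div_le_div_iff₀ (by positivity) (by positivity)]
      nlinarith
    linarith

lemma sum_sW (H : ℕ) : ∑ k ∈ Finset.Icc 1 H, sW k ≤ 2 * H := by
  have h1 : ∀ k ∈ Finset.Icc 1 H, sW k = ∑ d ∈ Finset.Icc 1 H, if d ∣ k then (1:ℝ)/d else 0 := by
    intro k hk
    rw [Finset.mem_Icc] at hk
    rw [← Finset.sum_filter]
    unfold sW
    apply Finset.sum_congr _ (fun _ _ => rfl)
    ext d
    simp only [Nat.mem_divisors, Finset.mem_filter, Finset.mem_Icc]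
    constructor
    · rintro ⟨h, _⟩
      exact ⟨⟨Nat.pos_of_dvd_of_pos h (by omega), (Nat.le_of_dvd (by omega) h).trans hk.2⟩, h⟩
    · rintro ⟨_, h⟩
      exact ⟨h, by omega⟩
  rw [Finset.sum_congr rfl h1, Finset.sum_comm]
  have h2 : ∀ d ∈ Finset.Icc 1 H, (∑ k ∈ Finset.Icc 1 H, if d ∣ k then (1:ℝ)/d else 0)
      ≤ H * ((1:ℝ)/((d:ℝ)^2)) := by
    intro d hd
    rw [Finset.mem_Icc] at hd
    rw [← Finset.sum_filter, Finset.sum_const, nsmul_eq_mul]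
    have : ((Finset.Icc 1 H).filter (fun k => d ∣ k)).card = H / d := by
      exact Nat.Ioc_filter_dvd_card_eq_div H d
    rw [this]
    have hd0 : (0:ℝ) < d := by exact_mod_cast hd.1
    have := Nat.cast_div_le (α := ℝ) (m := H) (n := d)
    calc ((H/d : ℕ):ℝ) * (1/d) ≤ (H/d : ℝ) * (1/d) := by gcongr
      _ = _ := by field_simp
  refine (Finset.sum_le_sum h2).trans ?_
  rw [← Finset.mul_sum]
  have := sum_inv_sq H
  have h0 : (0:ℝ) ≤ 1/(H:ℝ) := by positivity
  nlinarith [Nat.cast_nonneg (α := ℝ) H]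

lemma nthPrime_prime (n : ℕ) : (nthPrime n).Prime := Nat.prime_nth_prime n

lemma nthPrime_mono : StrictMono nthPrime := Nat.nth_strictMono Nat.infinite_setOf_prime

lemma trivial_count (x h : ℝ) (hx : 0 ≤ x) :
    ((Finset.range (⌊x⌋₊ + 1)).filter (fun n =>
          (nthPrime n : ℝ) ≤ x ∧ ((nthPrime (n+1) : ℝ) - nthPrime n) ≤ h)).card ≤ primePi x := by
  unfold primePi
  rw [← Nat.primesLE_card_eq_primeCounting]
  apply Finset.card_le_card_of_injOn nthPrime
  · intro n hn
    simp only [Finset.coe_filter, Set.mem_setOf_eq] at hn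
    simp only [Finset.mem_coe, Nat.mem_primesLE]
    exact ⟨Nat.le_floor hn.2.1, nthPrime_prime n⟩
  · exact nthPrime_mono.injective.injOn

lemma gap_count (x h : ℝ) (hx : 0 ≤ x) :
    ((Finset.range (⌊x⌋₊ + 1)).filter (fun n =>
          (nthPrime n : ℝ) ≤ x ∧ ((nthPrime (n+1) : ℝ) - nthPrime n) ≤ h)).card ≤
      1 + ∑ k ∈ (Finset.Icc 1 ⌊h⌋₊).filter (fun k => 2 ∣ k),
        ((Finset.range (⌊x⌋₊+1)).filter (fun n => n.Prime ∧ (n + k).Prime)).card := by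
  set S := (Finset.range (⌊x⌋₊ + 1)).filter (fun n =>
          (nthPrime n : ℝ) ≤ x ∧ ((nthPrime (n+1) : ℝ) - nthPrime n) ≤ h) with hS
  have h1 : S.card ≤ (S.erase 0).card + 1 := by
    have := Finset.pred_card_le_card_erase (s := S) (a := 0)
    omega
  have h2 : (S.erase 0).card ≤ (((Finset.Icc 1 ⌊h⌋₊).filter (fun k => 2 ∣ k)).biUnion (fun k =>
      (Finset.range (⌊x⌋₊+1)).filter (fun n => n.Prime ∧ (n + k).Prime))).card := by
    apply Finset.card_le_card_of_injOn nthPrime _ nthPrime_mono.injective.injOn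
    intro n hn
    have hn' : n ∈ S.erase 0 := hn
    rw [Finset.mem_erase, hS, Finset.mem_filter] at hn'
    obtain ⟨hn0, _, hnx, hnh⟩ := hn'
    have hlt : nthPrime n < nthPrime (n+1) := nthPrime_mono (Nat.lt_succ_self n)
    have h2lt : 2 < nthPrime n := 
      lt_of_le_of_lt (nthPrime_prime 0).two_le (nthPrime_mono (Nat.pos_of_ne_zero hn0))
    have ho1 := (nthPrime_prime n).odd_of_ne_two (by omega)
    have ho2 := (nthPrime_prime (n+1)).odd_of_ne_two (by omega)
    rw [Finset.mem_coe, Finset.mem_biUnion]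
    refine ⟨nthPrime (n+1) - nthPrime n, ?_, ?_⟩
    · rw [Finset.mem_filter, Finset.mem_Icc]
      refine ⟨⟨by omega, Nat.le_floor ?_⟩, ?_⟩
      · rw [Nat.cast_sub hlt.le]; exact hnh
      · exact (Nat.Odd.sub_odd ho2 ho1).two_dvd
    · rw [Finset.mem_filter, Finset.mem_range, Nat.add_sub_cancel' hlt.le]
      exact ⟨Nat.lt_succ_of_le (Nat.le_floor hnx), nthPrime_prime _, nthPrime_prime _⟩
  have h3 := h2.trans Finset.card_biUnion_le
  omega

lemma count_bound (x h : ℝ) (hx : 2 ≤ x) (hh : 2 < h) :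
    (((Finset.range (⌊x⌋₊ + 1)).filter (fun n =>
          (nthPrime n : ℝ) ≤ x ∧ ((nthPrime (n+1) : ℝ) - nthPrime n) ≤ h)).card : ℝ) ≤
      h * (1 + 3 * x^((1:ℝ)/2) + 8 * x / (Real.log x / 40)^2) := by
  have h1 := gap_count x h (by linarith)
  have h1' : (((Finset.range (⌊x⌋₊ + 1)).filter (fun n =>
          (nthPrime n : ℝ) ≤ x ∧ ((nthPrime (n+1) : ℝ) - nthPrime n) ≤ h)).card : ℝ) ≤
      1 + ∑ k ∈ (Finset.Icc 1 ⌊h⌋₊).filter (fun k => 2 ∣ k),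
        (((Finset.range (⌊x⌋₊+1)).filter (fun n => n.Prime ∧ (n + k).Prime)).card : ℝ) := by
    exact_mod_cast h1
  refine h1'.trans ?_
  set u : ℝ := x^((1:ℝ)/40) with hu
  set y : ℕ := ⌊u⌋₊ with hy
  have hu1 : 1 ≤ u := Real.one_le_rpow (by linarith) (by norm_num)
  have hy1 : 1 ≤ y := Nat.le_floor (by simpa using hu1)
  have hyu : (y:ℝ) ≤ u := Nat.floor_le (by linarith)
  have hy20 : (y:ℝ)^20 ≤ x^((1:ℝ)/2) := by
    calc (y:ℝ)^20 ≤ u^20 := by gcongr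
      _ = x^((1:ℝ)/2) := by
        rw [hu, ← Real.rpow_natCast, ← Real.rpow_mul (by linarith)]; norm_num
  have hLx : 0 < Real.log x := Real.log_pos (by linarith)
  have hL : Real.log x / 40 ≤ Real.log (y+1) := by
    have : Real.log u = Real.log x / 40 := by
      rw [hu, Real.log_rpow (by linarith)]; ring
    rw [← this]
    exact Real.log_le_log (by linarith) (Nat.lt_floor_add_one u).le
  have hN : ((⌊x⌋₊+1 : ℕ):ℝ) ≤ 2 * x := by
    push_cast
    have := Nat.floor_le (a := x) (by linarith)
    linarith
  have hH : (⌊h⌋₊:ℝ) ≤ h := Nat.floor_le (by linarith)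
  have hs0 : ∀ k, 0 ≤ sW k := fun k => Finset.sum_nonneg (fun _ _ => by positivity)
  set A : ℝ := 3 * x^((1:ℝ)/2) with hA
  set B : ℝ := 4 * x / (Real.log x / 40)^2 with hB
  have hA0 : 0 ≤ A := by positivity
  have hB0 : 0 ≤ B := by positivity
  have h2 : ∀ k ∈ (Finset.Icc 1 ⌊h⌋₊).filter (fun k => 2 ∣ k),
      (((Finset.range (⌊x⌋₊+1)).filter (fun n => n.Prime ∧ (n + k).Prime)).card : ℝ)
        ≤ A + B * sW k := by
    intro k hk
    rw [Finset.mem_filter, Finset.mem_Icc] at hk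
    refine (pair_count_le2 hk.2 (by omega) (⌊x⌋₊+1) hy1).trans ?_
    have hb : 2 * ((⌊x⌋₊+1 : ℕ):ℝ) / Real.log (y+1)^2 ≤ B := by
      rw [hB]
      have h4 : 2 * ((⌊x⌋₊+1 : ℕ):ℝ) ≤ 4 * x := by linarith
      gcongr
    have := mul_le_mul_of_nonneg_right hb (hs0 k)
    linarith
  have h3 : ∑ k ∈ (Finset.Icc 1 ⌊h⌋₊).filter (fun k => 2 ∣ k),
        (((Finset.range (⌊x⌋₊+1)).filter (fun n => n.Prime ∧ (n + k).Prime)).card : ℝ)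
        ≤ ⌊h⌋₊ * A + B * (2 * ⌊h⌋₊) := by
    calc _ ≤ ∑ k ∈ (Finset.Icc 1 ⌊h⌋₊).filter (fun k => 2 ∣ k), (A + B * sW k) :=
          Finset.sum_le_sum h2
      _ ≤ ∑ k ∈ Finset.Icc 1 ⌊h⌋₊, (A + B * sW k) :=
          Finset.sum_le_sum_of_subset_of_nonneg (Finset.filter_subset _ _)
            (fun k _ _ => add_nonneg hA0 (mul_nonneg hB0 (hs0 k)))
      _ = ⌊h⌋₊ * A + B * ∑ k ∈ Finset.Icc 1 ⌊h⌋₊, sW k := by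
          rw [Finset.sum_add_distrib, Finset.mul_sum, Finset.sum_const, nsmul_eq_mul, Nat.card_Icc,
            Nat.add_sub_cancel]
      _ ≤ _ := by
          have := mul_le_mul_of_nonneg_left (sum_sW ⌊h⌋₊) hB0
          linarith
  have h8 : 8 * x / (Real.log x / 40)^2 = 2 * B := by rw [hB]; ring
  rw [h8]
  have e1 := mul_le_mul_of_nonneg_right hH hA0
  have e2 := mul_le_mul_of_nonneg_right hH hB0
  nlinarith

theorem ev_facts : ∃ x₀ : ℝ, ∀ x : ℝ, x₀ ≤ x → 2 ≤ x ∧ 1 + 3 * x^((1:ℝ)/2) ≤ x / (Real.log x)^2 ∧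
    x / 2 ≤ (x-1) * Real.log 2 - Real.log (x+2) := by
  refine ⟨16^8, fun x hx => ?_⟩
  have hx2 : 2 ≤ x := le_trans (by norm_num) hx
  set u : ℝ := x^((1:ℝ)/8) with hu
  have hu0 : 0 ≤ u := by positivity
  have hux : u^8 = x := by
    rw [hu, ← Real.rpow_natCast, ← Real.rpow_mul (by linarith)]; norm_num
  have hu16 : 16 ≤ u := by
    rw [← hux] at hx
    exact le_of_pow_le_pow_left₀ (by norm_num) hu0 hx
  have hs : x^((1:ℝ)/2) = u^4 := by
    rw [hu, ← Real.rpow_natCast, ← Real.rpow_mul (by linarith)]; norm_num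
  have hlog : Real.log x ≤ 8 * u := by
    rw [← hux, Real.log_pow]
    have := Real.log_le_sub_one_of_pos (x := u) (by linarith)
    push_cast
    linarith
  have hL : 0 < Real.log x := Real.log_pos (by linarith)
  refine ⟨hx2, ?_, ?_⟩
  · rw [hs, le_div_iff₀ (by positivity)]
    have h1 : Real.log x^2 ≤ 64 * u^2 := by nlinarith
    have h4 : 1 ≤ u^4 := one_le_pow₀ (by linarith)
    calc (1 + 3*u^4) * Real.log x^2 ≤ (4 * u^4) * (64 * u^2) := by
          gcongr; linarith
      _ = 256 * u^6 := by ring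
      _ ≤ u^2 * u^6 := by gcongr; nlinarith
      _ = x := by rw [← hux]; ring
  · have hl2 := Real.log_two_gt_d9
    have hl2' := Real.log_two_lt_d9
    have h1 : Real.log (x+2) ≤ Real.log 2 + Real.log x := by
      rw [← Real.log_mul (by norm_num) (by linarith)]
      exact Real.log_le_log (by linarith) (by linarith)
    have h7 : (16:ℝ)^7 ≤ u^7 := by gcongr
    have h8 : 16^7 * u ≤ x := by
      rw [← hux]
      calc 16^7 * u ≤ u^7 * u := by gcongr
        _ = u^8 := by ring
    nlinarith

/-- **Theorem 3 (GPY IV), first part.** There is an absolute constant `C` such that for any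
`h > 2` and all sufficiently large `x`,
`#{n : p_n ≤ x, p_{n+1} - p_n ≤ h} ≤ C · min(h/log x, 1) · π(x)`. -/
theorem small_gaps_sparse :
    ∃ C : ℝ, 0 < C ∧ ∃ x₀ : ℝ, ∀ x : ℝ, x₀ ≤ x → ∀ h : ℝ, 2 < h →
      (((Finset.range (⌊x⌋₊ + 1)).filter (fun n =>
          (nthPrime n : ℝ) ≤ x ∧ ((nthPrime (n+1) : ℝ) - nthPrime n) ≤ h)).card : ℝ)
        ≤ C * min (h / Real.log x) 1 * (primePi x : ℝ) := by
  obtain ⟨x₀, hx₀⟩ := ev_facts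
  refine ⟨25602, by norm_num, x₀, fun x hx h hh => ?_⟩
  obtain ⟨h2, hA, hB⟩ := hx₀ x hx
  have hL : 0 < Real.log x := Real.log_pos (by linarith)
  have hpi : (x/2) / Real.log x ≤ (primePi x : ℝ) := by
    refine le_trans ?_ (Chebyshev.pi_ge' (x := x) (by linarith))
    gcongr
  rcases le_total (h / Real.log x) 1 with hc | hc
  · rw [min_eq_left hc]
    refine (count_bound x h (by linarith) hh).trans ?_
    have h1 : 8 * x / (Real.log x / 40)^2 = 12800 * (x / Real.log x^2) := by
      field_simp; ring
    calc h * (1 + 3 * x^((1:ℝ)/2) + 8 * x / (Real.log x / 40)^2)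
        ≤ h * (12801 * (x / Real.log x^2)) := by
          apply mul_le_mul_of_nonneg_left _ (by linarith)
          rw [h1]; linarith
      _ = 25602 * (h / Real.log x) * ((x/2) / Real.log x) := by field_simp; ring
      _ ≤ _ := by gcongr
  · rw [min_eq_right hc]
    have := trivial_count x h (by linarith)
    have h' : (((Finset.range (⌊x⌋₊ + 1)).filter (fun n =>
          (nthPrime n : ℝ) ≤ x ∧ ((nthPrime (n+1) : ℝ) - nthPrime n) ≤ h)).card : ℝ) ≤ primePi x := by
      exact_mod_cast this
    have : (0:ℝ) ≤ primePi x := Nat.cast_nonneg _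
    linarith
end

section
/- If h = h(x) satisfies h(x)/log x → 0 as x → ∞, then #{n : p_n ≤ x, p_{n+1} − p_n ≤ h(x)} = o(π(x)) as x → ∞; i.e., very small gaps between consecutive primes do not constitute a positive proportion of all gaps. -/
open Finset

namespace SmallGaps
open ArithmeticFunction BoundingSieve
open scoped ArithmeticFunction.Moebius ArithmeticFunction.sigma

lemma moebius_between {P l m : ℕ} (hP : Squarefree P) (hm : m ∣ P) :
    (∑ d ∈ P.divisors, if l ∣ d ∧ d ∣ m then (μ d : ℝ) else 0) =
      if m = l then (μ l : ℝ) else 0 := by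
  have hm0 : m ≠ 0 := ne_zero_of_dvd_ne_zero hP.ne_zero hm
  have hms : Squarefree m := hP.squarefree_of_dvd hm
  by_cases hl : l ∣ m
  · obtain ⟨e, rfl⟩ := hl
    have hl0 : l ≠ 0 := left_ne_zero_of_mul hm0
    have he0 : e ≠ 0 := right_ne_zero_of_mul hm0
    have hcop : l.Coprime e := Nat.coprime_of_squarefree_mul hms
    rw [← sum_filter]
    have : P.divisors.filter (fun d => l ∣ d ∧ d ∣ l * e) = e.divisors.image (fun c => l * c) := by
      ext d
      simp only [mem_filter, Nat.mem_divisors, mem_image]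
      constructor
      · rintro ⟨-, ⟨c, rfl⟩, h⟩
        exact ⟨c, ⟨Nat.dvd_of_mul_dvd_mul_left (Nat.pos_of_ne_zero hl0) h, he0⟩, rfl⟩
      · rintro ⟨c, ⟨hc, -⟩, rfl⟩
        exact ⟨⟨(Nat.mul_dvd_mul_left l hc).trans hm, hP.ne_zero⟩, Dvd.intro _ rfl,
          Nat.mul_dvd_mul_left l hc⟩
    rw [this, sum_image (fun a _ b _ h => Nat.eq_of_mul_eq_mul_left (Nat.pos_of_ne_zero hl0) h)]
    have h2 : ∀ c ∈ e.divisors, (μ (l * c) : ℝ) = μ l * μ c := by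
      intro c hc
      rw [isMultiplicative_moebius.map_mul_of_coprime
        (hcop.coprime_dvd_right (Nat.dvd_of_mem_divisors hc))]
      push_cast; rfl
    rw [sum_congr rfl h2, ← mul_sum]
    have h3 : (∑ c ∈ e.divisors, (μ c : ℝ)) = if e = 1 then 1 else 0 := by
      have h4 := congrArg (fun f : ArithmeticFunction ℤ => f e) moebius_mul_coe_zeta
      simp only [coe_mul_zeta_apply, one_apply] at h4
      exact_mod_cast h4
    rw [h3]
    have h5 : (l * e = l) ↔ e = 1 := by
      constructor
      · intro h
        exact Nat.eq_of_mul_eq_mul_left (Nat.pos_of_ne_zero hl0) (by omega)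
      · rintro rfl; simp
    simp only [h5]
    split_ifs <;> simp
  · rw [if_neg (by rintro rfl; exact hl dvd_rfl)]
    apply sum_eq_zero
    intro d _
    rw [if_neg]
    rintro ⟨h1, h2⟩
    exact hl (h1.trans h2)

/-- The sum `L = ∑_{l ∣ P, l ≤ R} g(l)`. -/
noncomputable def LL (s : BoundingSieve) (R : ℕ) : ℝ :=
  ∑ l ∈ s.prodPrimes.divisors.filter (· ≤ R), s.selbergTerms l

/-- Selberg's optimal weights. -/
noncomputable def wt (s : BoundingSieve) (R d : ℕ) : ℝ :=
  if d ∣ s.prodPrimes then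
    (s.nu d)⁻¹ * (μ d * ((∑ l ∈ s.prodPrimes.divisors.filter (· ≤ R),
      if d ∣ l then s.selbergTerms l else 0) / LL s R)) else 0

lemma LL_pos (s : BoundingSieve) {R : ℕ} (hR : 1 ≤ R) : 0 < LL s R := by
  unfold LL
  apply sum_pos
  · intro l hl
    simp only [mem_filter, Nat.mem_divisors] at hl
    exact selbergTerms_pos hl.1.1
  · exact ⟨1, by simp [hR, prodPrimes_ne_zero]⟩

lemma wt_one (s : BoundingSieve) {R : ℕ} (hR : 1 ≤ R) : wt s R 1 = 1 := by
  have := LL_pos s hR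
  simp only [wt, one_dvd, if_true, s.nu_mult.map_one]
  simp only [inv_one, moebius_apply_one, Int.cast_one, one_mul]
  exact div_self this.ne'

lemma wt_zero_of_lt (s : BoundingSieve) {R d : ℕ} (hd : R < d) : wt s R d = 0 := by
  unfold wt
  split_ifs
  · rw [sum_eq_zero]
    · simp
    · intro l hl
      simp only [mem_filter, Nat.mem_divisors] at hl
      rw [if_neg]
      intro h
      have := Nat.le_of_dvd (Nat.pos_of_ne_zero (ne_zero_of_dvd_ne_zero hl.1.2 hl.1.1)) h
      omega
  · rfl

lemma abs_wt_le (s : BoundingSieve) {R d : ℕ} (hR : 1 ≤ R) (hd : d ∣ s.prodPrimes) :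
    |wt s R d| ≤ (s.nu d)⁻¹ := by
  have hL := LL_pos s hR
  have hn := nu_pos_of_dvd_prodPrimes hd
  rw [wt, if_pos hd, abs_mul, abs_of_pos (inv_pos.2 hn)]
  apply mul_le_of_le_one_right (inv_pos.2 hn).le
  rw [abs_mul]
  have h1 : |((μ d : ℤ) : ℝ)| ≤ 1 := by exact_mod_cast abs_moebius_le_one
  have hpos : ∀ l ∈ s.prodPrimes.divisors.filter (· ≤ R), 0 ≤ s.selbergTerms l := by
    intro l hl
    simp only [mem_filter, Nat.mem_divisors] at hl
    exact (selbergTerms_pos hl.1.1).le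
  have h2 : |(∑ l ∈ s.prodPrimes.divisors.filter (· ≤ R),
      if d ∣ l then s.selbergTerms l else 0) / LL s R| ≤ 1 := by
    rw [abs_of_nonneg, div_le_one hL]
    · apply sum_le_sum
      intro l hl
      split_ifs
      · rfl
      · exact hpos l hl
    · apply div_nonneg (sum_nonneg _) hL.le
      intro l hl
      split_ifs
      · exact hpos l hl
      · rfl
  exact mul_le_one₀ h1 (abs_nonneg _) h2

lemma wt_diag (s : BoundingSieve) {R l : ℕ} (hl : l ∈ s.prodPrimes.divisors) :
    (∑ d ∈ s.prodPrimes.divisors, if l ∣ d then s.nu d * wt s R d else 0) =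
      if l ≤ R then μ l * s.selbergTerms l / LL s R else 0 := by
  have h1 : ∀ d ∈ s.prodPrimes.divisors, (if l ∣ d then s.nu d * wt s R d else 0) =
      (∑ m ∈ s.prodPrimes.divisors.filter (· ≤ R),
        (if l ∣ d ∧ d ∣ m then (μ d : ℝ) else 0) * s.selbergTerms m) / LL s R := by
    intro d hd
    have hn := nu_pos_of_dvd_prodPrimes (Nat.dvd_of_mem_divisors hd)
    rw [wt, if_pos (Nat.dvd_of_mem_divisors hd), mul_inv_cancel_left₀ hn.ne', ← mul_div_assoc,
      mul_sum]
    split_ifs with h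
    · congr 1
      apply sum_congr rfl
      intro m _
      simp only [h, true_and]
      split_ifs <;> simp
    · simp [h]
  rw [sum_congr rfl h1, ← sum_div, sum_comm]
  have h2 : ∀ m ∈ s.prodPrimes.divisors.filter (· ≤ R),
      (∑ d ∈ s.prodPrimes.divisors, (if l ∣ d ∧ d ∣ m then (μ d : ℝ) else 0) * s.selbergTerms m)
      = if m = l then (μ l : ℝ) * s.selbergTerms l else 0 := by
    intro m hm
    simp only [mem_filter, Nat.mem_divisors] at hm
    rw [← sum_mul, moebius_between s.prodPrimes_squarefree hm.1.1]
    split_ifs with h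
    · rw [h]
    · simp
  rw [sum_congr rfl h2, sum_ite_eq']
  simp only [mem_filter, hl, true_and]
  split_ifs <;> simp

lemma mainSum_wt_le (s : BoundingSieve) {R : ℕ} (hR : 1 ≤ R) :
    s.mainSum (lambdaSquared (wt s R)) ≤ (LL s R)⁻¹ := by
  have hL := LL_pos s hR
  rw [mainSum_lambdaSquared_eq_sum_mul_sum_sq]
  have h1 : ∀ l ∈ s.prodPrimes.divisors, (s.selbergTerms l)⁻¹ *
        (∑ d ∈ s.prodPrimes.divisors, if l ∣ d then s.nu d * wt s R d else 0) ^ 2 ≤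
        if l ≤ R then s.selbergTerms l / (LL s R) ^ 2 else 0 := by
    intro l hl
    have hg := selbergTerms_pos (Nat.dvd_of_mem_divisors hl)
    rw [wt_diag s hl]
    split_ifs
    · have hmu : ((μ l : ℤ) : ℝ) ^ 2 ≤ 1 := by
        have : |((μ l : ℤ) : ℝ)| ≤ 1 := by exact_mod_cast abs_moebius_le_one
        exact (sq_le_one_iff_abs_le_one _).2 this
      have : (s.selbergTerms l)⁻¹ * (μ l * s.selbergTerms l / LL s R) ^ 2 =
        (μ l : ℝ) ^ 2 * (s.selbergTerms l / (LL s R) ^ 2) := by field_simp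
      rw [this]
      exact mul_le_of_le_one_left (by positivity) hmu
    · simp
  refine (sum_le_sum h1).trans ?_
  rw [← sum_filter, ← sum_div, ← LL]
  apply le_of_eq
  field_simp

lemma abs_lambdaSquared_le (s : BoundingSieve) {R d : ℕ} (hR : 1 ≤ R) (hd : d ∣ s.prodPrimes)
    (hnu : ∀ e, e ∣ s.prodPrimes → (s.nu e)⁻¹ ≤ e) :
    |lambdaSquared (wt s R) d| ≤ if d ≤ R ^ 2 then (R : ℝ) ^ 8 else 0 := by
  have hw : ∀ e ∈ d.divisors, |wt s R e| ≤ R := by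
    intro e he
    by_cases h : e ≤ R
    · have he' := (Nat.dvd_of_mem_divisors he).trans hd
      exact ((abs_wt_le s hR he').trans (hnu e he')).trans (by exact_mod_cast h)
    · rw [wt_zero_of_lt s (by omega)]; simp
  unfold lambdaSquared
  split_ifs with h
  · refine (abs_sum_le_sum_abs _ _).trans ?_
    have h1 : ∀ e ∈ d.divisors, |∑ d2 ∈ d.divisors,
        if d = Nat.lcm e d2 then wt s R e * wt s R d2 else 0| ≤ (R : ℝ) ^ 4 := by
      intro e he
      refine (abs_sum_le_sum_abs _ _).trans ?_
      have h2 : ∀ f ∈ d.divisors, |if d = Nat.lcm e f then wt s R e * wt s R f else 0|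
          ≤ (R : ℝ) ^ 2 := by
        intro f hf
        split_ifs
        · rw [abs_mul, sq]
          exact mul_le_mul (hw e he) (hw f hf) (abs_nonneg _) (by positivity)
        · simp
      refine (sum_le_card_nsmul _ _ _ h2).trans ?_
      have h3 : (d.divisors.card : ℝ) ≤ R ^ 2 := by
        exact_mod_cast (Nat.card_divisors_le_self d).trans h
      rw [nsmul_eq_mul, show (R : ℝ) ^ 4 = R ^ 2 * R ^ 2 by ring]
      gcongr
    refine (sum_le_card_nsmul _ _ _ h1).trans ?_
    have h3 : (d.divisors.card : ℝ) ≤ R ^ 4 := by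
      have := (Nat.card_divisors_le_self d).trans h
      have h4 : R ^ 2 ≤ R ^ 4 := Nat.pow_le_pow_right hR (by norm_num)
      exact_mod_cast this.trans h4
    rw [nsmul_eq_mul, show (R : ℝ) ^ 8 = R ^ 4 * R ^ 4 by ring]
    gcongr
  · rw [abs_nonpos_iff]
    apply sum_eq_zero; intro e he
    apply sum_eq_zero; intro f hf
    split_ifs with h3
    · by_cases he1 : R < e
      · rw [wt_zero_of_lt s he1]; simp
      by_cases hf1 : R < f
      · rw [wt_zero_of_lt s hf1]; simp
      exfalso
      apply h
      have h5 : e ≠ 0 := (Nat.pos_of_mem_divisors he).ne'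
      have h6 : f ≠ 0 := (Nat.pos_of_mem_divisors hf).ne'
      have : Nat.lcm e f ≤ e * f := Nat.le_of_dvd (by positivity) (Nat.lcm_dvd_mul e f)
      rw [h3, sq]
      exact this.trans (Nat.mul_le_mul (by omega) (by omega))
    · rfl

/-- A crude Selberg sieve. -/
lemma selberg (s : BoundingSieve) {R : ℕ} (hR : 1 ≤ R) (hX : 0 ≤ s.totalMass)
    (hnu : ∀ e, e ∣ s.prodPrimes → (s.nu e)⁻¹ ≤ e)
    (hrem : ∀ d, d ∣ s.prodPrimes → |s.rem d| ≤ d) :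
    s.siftedSum ≤ s.totalMass / LL s R + (R : ℝ) ^ 12 := by
  refine (siftedSum_le_mainSum_errSum_of_upperMoebius _
    (upperMoebius_lambdaSquared _ (wt_one s hR))).trans ?_
  apply add_le_add
  · rw [div_eq_mul_inv]
    exact mul_le_mul_of_nonneg_left (mainSum_wt_le s hR) hX
  · unfold errSum
    have h1 : ∀ d ∈ s.prodPrimes.divisors, |lambdaSquared (wt s R) d| * |s.rem d| ≤
        if d ≤ R ^ 2 then (R : ℝ) ^ 10 else 0 := by
      intro d hd
      have hd' := Nat.dvd_of_mem_divisors hd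
      have h2 := abs_lambdaSquared_le s hR hd' hnu
      split_ifs at h2 ⊢ with h
      · rw [show (R : ℝ) ^ 10 = R ^ 8 * R ^ 2 by ring]
        apply mul_le_mul h2 ((hrem d hd').trans (by exact_mod_cast h)) (abs_nonneg _) (by positivity)
      · rw [abs_nonpos_iff.1 h2]; simp
    refine (sum_le_sum h1).trans ?_
    rw [← sum_filter, sum_const, nsmul_eq_mul]
    have h2 : (s.prodPrimes.divisors.filter (· ≤ R ^ 2)).card ≤ R ^ 2 := by
      have : s.prodPrimes.divisors.filter (· ≤ R ^ 2) ⊆ Icc 1 (R ^ 2) := by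
        intro d hd
        simp only [mem_filter] at hd
        exact mem_Icc.2 ⟨Nat.pos_of_mem_divisors hd.1, hd.2⟩
      simpa using card_le_card this
    have h3 : ((s.prodPrimes.divisors.filter (· ≤ R ^ 2)).card : ℝ) ≤ R ^ 2 := by exact_mod_cast h2
    rw [show (R : ℝ) ^ 12 = R ^ 2 * R ^ 10 by ring]
    gcongr


lemma card_progression (N r v : ℕ) (hr : 0 < r) :
    |(((Ioc 0 N).filter (fun n => n ≡ v [MOD r])).card : ℝ) - (N : ℝ) / r| ≤ 1 := by
  have h := Nat.Ioc_filter_modEq_card 0 N hr v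
  have hr' : (0 : ℚ) < r := by exact_mod_cast hr
  set A : ℕ := ((Ioc 0 N).filter (fun n => n ≡ v [MOD r])).card
  have hle : ⌊((0 : ℕ) - v : ℚ) / r⌋ ≤ ⌊((N : ℕ) - v : ℚ) / r⌋ := by
    apply Int.floor_le_floor
    gcongr
    simp
  rw [max_eq_left (by linarith)] at h
  have h1 := Int.floor_le (((N : ℕ) - v : ℚ) / r)
  have h2 := Int.lt_floor_add_one (((N : ℕ) - v : ℚ) / r)
  have h3 := Int.floor_le (((0 : ℕ) - v : ℚ) / r)
  have h4 := Int.lt_floor_add_one (((0 : ℕ) - v : ℚ) / r)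
  have h5 : ((N : ℕ) - v : ℚ) / r = (N : ℚ) / r + ((0 : ℕ) - v : ℚ) / r := by
    push_cast; ring
  have h6 : (A : ℚ) = (⌊((N : ℕ) - v : ℚ) / r⌋ : ℚ) - (⌊((0 : ℕ) - v : ℚ) / r⌋ : ℚ) := by
    exact_mod_cast h
  have h7 : |(A : ℚ) - (N : ℚ) / r| ≤ 1 := by
    rw [abs_le]; constructor <;> linarith
  have h8 : ((|(A : ℚ) - (N : ℚ) / r| : ℚ) : ℝ) ≤ ((1 : ℚ) : ℝ) := Rat.cast_le.2 h7
  push_cast at h8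
  exact h8

lemma card_two_class (N k a b : ℕ) (ha : 0 < a) (hb : 0 < b) (hab : a.Coprime b) :
    |(((Ioc 0 N).filter (fun n => a ∣ n ∧ b ∣ n + k)).card : ℝ) - (N : ℝ) / (a * b : ℕ)| ≤ 1 := by
  obtain ⟨v, hv1, hv2⟩ := Nat.chineseRemainder hab 0 (k * (b - 1))
  have : (Ioc 0 N).filter (fun n => a ∣ n ∧ b ∣ n + k) =
      (Ioc 0 N).filter (fun n => n ≡ v [MOD (a * b)]) := by
    apply filter_congr
    intro n _
    rw [← Nat.modEq_and_modEq_iff_modEq_mul hab]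
    have h1 : a ∣ n ↔ n ≡ v [MOD a] := by
      rw [← Nat.modEq_zero_iff_dvd]
      exact ⟨fun h => h.trans hv1.symm, fun h => h.trans hv1⟩
    have h2 : b ∣ n + k ↔ n ≡ v [MOD b] := by
      have h3 : v + k ≡ 0 [MOD b] := by
        refine (Nat.ModEq.add_right k hv2).trans ?_
        rw [Nat.modEq_zero_iff_dvd]
        refine ⟨k, ?_⟩
        obtain ⟨c, rfl⟩ : ∃ c, b = c + 1 := ⟨b - 1, by omega⟩
        simp only [Nat.add_sub_cancel]; ring
      rw [← Nat.modEq_zero_iff_dvd]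
      exact ⟨fun h => Nat.ModEq.add_right_cancel' k (h.trans h3.symm),
        fun h => (Nat.ModEq.add_right k h).trans h3⟩
    rw [h1, h2]
  rw [this]
  exact card_progression N (a * b) v (Nat.mul_pos ha hb)

lemma fiber_iff {d k n a b : ℕ} (hd : Squarefree d) (hk : d.Coprime k) (hab : a * b = d) :
    (d ∣ n * (n + k) ∧ d.gcd n = a) ↔ (a ∣ n ∧ b ∣ n + k) := by
  have hd0 := hd.ne_zero
  subst hab
  have ha : 0 < a := Nat.pos_of_ne_zero (left_ne_zero_of_mul hd0)
  constructor
  · rintro ⟨h1, h2⟩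
    have h3 : a ∣ n := h2 ▸ Nat.gcd_dvd_right (a * b) n
    refine ⟨h3, ?_⟩
    obtain ⟨m, rfl⟩ := h3
    rw [Nat.gcd_mul_left] at h2
    have h4 : b.Coprime m := Nat.eq_of_mul_eq_mul_left ha (by simpa using h2)
    rw [mul_assoc] at h1
    exact h4.dvd_of_dvd_mul_left (Nat.dvd_of_mul_dvd_mul_left ha h1)
  · rintro ⟨⟨m, rfl⟩, h2⟩
    refine ⟨by rw [mul_assoc]; exact mul_dvd_mul_left a (h2.mul_left m), ?_⟩
    rw [Nat.gcd_mul_left]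
    have h4 : b.Coprime m := by
      have h5 : b.gcd m ∣ k := by
        have h6 : b.gcd m ∣ a * m + k := (Nat.gcd_dvd_left b m).trans h2
        exact (Nat.dvd_add_right ((Nat.gcd_dvd_right b m).mul_left a)).1 h6
      have h7 : b.gcd m ∣ a * b := (Nat.gcd_dvd_left b m).mul_left a
      exact Nat.eq_one_of_dvd_coprimes hk h7 h5
    rw [h4.gcd_eq_one, mul_one]

lemma card_dvd_eq (N : ℕ) {d k : ℕ} (hd : Squarefree d) (hk : d.Coprime k) :
    ((Ioc 0 N).filter (fun n => d ∣ n * (n + k))).card =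
      ∑ x ∈ d.divisorsAntidiagonal, ((Ioc 0 N).filter (fun n => x.1 ∣ n ∧ x.2 ∣ n + k)).card := by
  have hd0 := hd.ne_zero
  rw [card_eq_sum_card_fiberwise (f := fun n => (d.gcd n, d / d.gcd n))
    (t := d.divisorsAntidiagonal)]
  · apply sum_congr rfl
    rintro ⟨a, b⟩ hx
    rw [Nat.mem_divisorsAntidiagonal] at hx
    congr 1
    rw [filter_filter]
    apply filter_congr
    intro n _
    rw [← fiber_iff (n := n) hd hk hx.1]
    simp only [Prod.mk.injEq]
    constructor
    · rintro ⟨h1, h2, h3⟩; exact ⟨h1, h2⟩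
    · rintro ⟨h1, h2⟩
      refine ⟨h1, h2, ?_⟩
      rw [h2]
      apply Nat.div_eq_of_eq_mul_right _ hx.1.symm
      apply Nat.pos_of_ne_zero
      rintro rfl
      simp at hx
      exact hd0 hx.1.symm
  · intro n _
    simp only [mem_coe, Nat.mem_divisorsAntidiagonal]
    exact ⟨Nat.mul_div_cancel' (Nat.gcd_dvd_left d n), hd0⟩

lemma card_dvd (N : ℕ) {d k : ℕ} (hd : Squarefree d) (hk : d.Coprime k) :
    |(((Ioc 0 N).filter (fun n => d ∣ n * (n + k))).card : ℝ) -
      (d.divisors.card : ℝ) / d * N| ≤ d := by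
  have hd0 := hd.ne_zero
  have hc : d.divisorsAntidiagonal.card = d.divisors.card := by
    rw [← Nat.map_div_right_divisors, card_map]
  rw [card_dvd_eq N hd hk, ← hc]
  have : ((∑ x ∈ d.divisorsAntidiagonal,
      ((Ioc 0 N).filter (fun n => x.1 ∣ n ∧ x.2 ∣ n + k)).card : ℕ) : ℝ) -
      (d.divisorsAntidiagonal.card : ℝ) / d * N =
      ∑ x ∈ d.divisorsAntidiagonal,
      ((((Ioc 0 N).filter (fun n => x.1 ∣ n ∧ x.2 ∣ n + k)).card : ℝ) - (N : ℝ) / d) := by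
    rw [sum_sub_distrib, sum_const, nsmul_eq_mul]
    push_cast
    ring
  rw [this]
  refine (abs_sum_le_sum_abs _ _).trans ?_
  have h1 : ∀ x ∈ d.divisorsAntidiagonal,
      |(((Ioc 0 N).filter (fun n => x.1 ∣ n ∧ x.2 ∣ n + k)).card : ℝ) - (N : ℝ) / d| ≤ 1 := by
    rintro ⟨a, b⟩ hx
    rw [Nat.mem_divisorsAntidiagonal] at hx
    obtain ⟨rfl, -⟩ := hx
    exact card_two_class N k a b (Nat.pos_of_ne_zero (left_ne_zero_of_mul hd0))
      (Nat.pos_of_ne_zero (right_ne_zero_of_mul hd0)) (Nat.coprime_of_squarefree_mul hd)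
  refine (sum_le_card_nsmul _ _ _ h1).trans ?_
  rw [hc]
  simp only [nsmul_eq_mul, mul_one]
  exact_mod_cast Nat.card_divisors_le_self d

/-- The product of the sieving primes. -/
def PP (R k : ℕ) : ℕ := ∏ p ∈ (range (R + 1)).filter (fun p => p.Prime ∧ p.Coprime (2 * k)), p

lemma PP_squarefree (R k : ℕ) : Squarefree (PP R k) := by
  unfold PP
  apply Finset.squarefree_prod_of_pairwise_isCoprime
  · intro p hp q hq hpq
    simp only [coe_filter, Set.mem_ofPred_eq] at hp hq
    simp only [Function.onFun, ← Nat.coprime_iff_isRelPrime]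
    exact (Nat.coprime_primes hp.2.1 hq.2.1).2 hpq
  · intro p hp
    simp only [mem_filter] at hp
    exact hp.2.1.prime.squarefree

lemma PP_coprime (R k : ℕ) : (PP R k).Coprime (2 * k) := by
  unfold PP
  apply Nat.Coprime.prod_left
  intro p hp
  simp only [mem_filter] at hp
  exact hp.2.2

lemma dvd_PP {R k l : ℕ} (hl : Squarefree l) (hlR : l ≤ R) (hk : l.Coprime (2 * k)) :
    l ∣ PP R k := by
  rw [← Nat.prod_primeFactors_of_squarefree hl]
  apply prod_dvd_prod_of_subset
  intro p hp
  rw [Nat.mem_primeFactors] at hp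
  simp only [mem_filter, mem_range]
  have := Nat.le_of_dvd (Nat.pos_of_ne_zero hp.2.2) hp.2.1
  exact ⟨by omega, hp.1, hk.coprime_dvd_left hp.2.1⟩

lemma prime_of_dvd_PP {R k p : ℕ} (hp : p.Prime) (h : p ∣ PP R k) : p ≤ R := by
  unfold PP at h
  obtain ⟨q, hq, hpq⟩ := (hp.prime.dvd_finsetProd_iff _).1 h
  simp only [mem_filter, mem_range] at hq
  have := (Nat.prime_dvd_prime_iff_eq hp hq.2.1).1 hpq
  omega

/-- `ν(d) = τ(d)/d`. -/
noncomputable def nuF : ArithmeticFunction ℝ := ⟨fun d => (d.divisors.card : ℝ) / d, by simp⟩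

lemma nuF_apply (d : ℕ) : nuF d = (d.divisors.card : ℝ) / d := rfl

lemma nuF_mult : nuF.IsMultiplicative := by
  refine ⟨by simp [nuF_apply], ?_⟩
  intro m n h
  simp only [nuF_apply]
  rw [h.card_divisors_mul]
  push_cast
  rw [mul_div_mul_comm]

/-- The sieve. -/
noncomputable def sv (N R k : ℕ) : BoundingSieve where
  support := (Ioc 0 N).image (fun n => n * (n + k))
  prodPrimes := PP R k
  prodPrimes_squarefree := PP_squarefree R k
  weights := fun _ => 1
  weights_nonneg := fun _ => zero_le_one
  totalMass := N
  nu := nuF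
  nu_mult := nuF_mult
  nu_pos_of_prime := by
    intro p hp _
    have := hp.pos
    rw [nuF_apply, hp.divisors, card_pair hp.one_lt.ne]
    positivity
  nu_lt_one_of_prime := by
    intro p hp h
    have h2 : p ≠ 2 := by
      rintro rfl
      have := (PP_coprime R k).coprime_dvd_left h
      simp [Nat.coprime_mul_iff_right] at this
    have h3 : 2 < p := lt_of_le_of_ne hp.two_le h2.symm
    have h4 : (2 : ℝ) < p := by exact_mod_cast h3
    rw [nuF_apply, hp.divisors, card_pair hp.one_lt.ne, div_lt_one (by linarith)]
    exact_mod_cast h3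

lemma inj_poly (k : ℕ) : Set.InjOn (fun n => n * (n + k)) Set.univ := by
  intro a _ b _ h
  simp only at h
  rcases lt_trichotomy a b with h1 | h1 | h1
  · have : a * (a + k) < b * (b + k) := by
      apply Nat.mul_lt_mul_of_lt_of_le h1 (by omega) (by omega)
    omega
  · exact h1
  · have : b * (b + k) < a * (a + k) := by
      apply Nat.mul_lt_mul_of_lt_of_le h1 (by omega) (by omega)
    omega

lemma sv_rem (N R k d : ℕ) (hd : d ∣ PP R k) : |(sv N R k).rem d| ≤ d := by
  have h1 : d.Coprime k := ((PP_coprime R k).coprime_dvd_left hd).coprime_dvd_right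
    (Dvd.intro_left 2 rfl)
  have h2 := card_dvd N ((PP_squarefree R k).squarefree_of_dvd hd) h1
  unfold rem multSum
  simp only [sv]
  rw [sum_image ((inj_poly k).mono (Set.subset_univ _)), nuF_apply]
  simpa using h2

lemma sv_nu (N R k e : ℕ) (he : e ∣ (sv N R k).prodPrimes) : ((sv N R k).nu e)⁻¹ ≤ e := by
  change (nuF e)⁻¹ ≤ e
  have h0 : e ≠ 0 := ne_zero_of_dvd_ne_zero (PP_squarefree R k).ne_zero he
  rw [nuF_apply, inv_div]
  apply div_le_self (by positivity)
  have : 0 < e.divisors.card := card_pos.2 ⟨1, by simp [h0]⟩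
  exact_mod_cast this

lemma sifted_ge (N R k : ℕ) :
    (((Ioc 0 N).filter (fun p => p.Prime ∧ (p + k).Prime)).card : ℝ) ≤
      (sv N R k).siftedSum + R := by
  have h1 : (sv N R k).siftedSum =
      (((Ioc 0 N).filter (fun n => (PP R k).Coprime (n * (n + k)))).card : ℝ) := by
    unfold siftedSum
    rw [← sum_filter, show (sv N R k).support = (Ioc 0 N).image (fun n => n * (n + k)) from rfl,
      show (sv N R k).prodPrimes = PP R k from rfl, sum_filter,
      sum_image ((inj_poly k).mono (Set.subset_univ _)), ← sum_filter]
    simp [sv]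
  rw [h1]
  have h2 : (Ioc 0 N).filter (fun p => p.Prime ∧ (p + k).Prime) ⊆
      (Ioc 0 N).filter (fun n => (PP R k).Coprime (n * (n + k))) ∪ Ioc 0 R := by
    intro p hp
    simp only [mem_filter, mem_union, mem_Ioc] at hp ⊢
    by_cases hpR : p ≤ R
    · right; exact ⟨hp.1.1, hpR⟩
    · left
      refine ⟨hp.1, ?_⟩
      have h3 : ∀ q, q.Prime → R < q → (PP R k).Coprime q := by
        intro q hq hqR
        rw [Nat.coprime_comm, hq.coprime_iff_not_dvd]
        intro h
        have := prime_of_dvd_PP hq h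
        omega
      exact Nat.Coprime.mul_right (h3 p hp.2.1 (by omega)) (h3 _ hp.2.2 (by omega))
  have h3 := (card_le_card h2).trans (card_union_le _ _)
  simp only [Nat.card_Ioc, Nat.sub_zero] at h3
  exact_mod_cast h3


lemma sum_inj_le {α β : Type*} [DecidableEq β] {s : Finset α} {t : Finset β}
    {f : α → ℝ} {g : β → ℝ} (i : α → β) (hi : ∀ x ∈ s, i x ∈ t)
    (hinj : ∀ x ∈ s, ∀ x' ∈ s, i x = i x' → x = x') (hfg : ∀ x ∈ s, f x ≤ g (i x))
    (hg : ∀ y ∈ t, 0 ≤ g y) : ∑ x ∈ s, f x ≤ ∑ y ∈ t, g y := by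
  refine (sum_le_sum hfg).trans ?_
  rw [← sum_image (f := g) (fun x hx x' hx' h => hinj x hx x' hx' h)]
  apply sum_le_sum_of_subset_of_nonneg
  · intro y hy
    obtain ⟨x, hx, rfl⟩ := mem_image.1 hy
    exact hi x hx
  · intro y hy _
    exact hg y hy

lemma nuF_nonneg (d : ℕ) : 0 ≤ nuF d := by rw [nuF_apply]; positivity

/-- squarefree numbers in `[1, R]` -/
def SF (R : ℕ) : Finset ℕ := (Icc 1 R).filter Squarefree

/-- The arithmetic weight. -/
noncomputable def ff (m : ℕ) : ℝ := ∑ e ∈ m.divisors, nuF e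

lemma LL_ge (N R k : ℕ) :
    ∑ l ∈ (SF R).filter (fun l => l.Coprime (2 * k)), nuF l ≤ LL (sv N R k) R := by
  unfold LL
  apply sum_inj_le id
  · intro l hl
    simp only [SF, mem_filter, mem_Icc] at hl
    simp only [id, mem_filter, Nat.mem_divisors]
    exact ⟨⟨dvd_PP hl.1.2 hl.1.1.2 hl.2, (PP_squarefree R k).ne_zero⟩, hl.1.1.2⟩
  · intro x _ y _ h; exact h
  · intro l hl
    simp only [SF, mem_filter, mem_Icc] at hl
    have hdvd := dvd_PP hl.1.2 hl.1.1.2 hl.2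
    rw [id, selbergTerms_apply]
    change nuF l ≤ nuF l * _
    apply le_mul_of_one_le_right (nuF_nonneg l)
    apply Finset.one_le_prod
    intro p hp
    have hpp := Nat.prime_of_mem_primeFactors hp
    have hpd := (Nat.dvd_of_mem_primeFactors hp).trans hdvd
    have h1 := (sv N R k).nu_lt_one_of_prime p hpp hpd
    have h2 := (sv N R k).nu_pos_of_prime p hpp hpd
    apply (one_le_inv₀ (by linarith)).2
    linarith
  · intro l hl
    simp only [mem_filter, Nat.mem_divisors] at hl
    exact (selbergTerms_pos hl.1.1).le

lemma coprime_reduce (R : ℕ) {m : ℕ} (hm : m ≠ 0) :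
    ∑ l ∈ SF R, nuF l ≤ ff m * ∑ l ∈ (SF R).filter (fun l => l.Coprime m), nuF l := by
  unfold ff
  rw [sum_mul_sum, ← sum_product']
  apply sum_inj_le (fun l => (l.gcd m, l / l.gcd m))
  · intro l hl
    simp only [SF, mem_filter, mem_Icc] at hl
    simp only [mem_product, Nat.mem_divisors, SF, mem_filter, mem_Icc]
    have hg : 0 < l.gcd m := Nat.gcd_pos_of_pos_left m hl.1.1
    have hdiv : l / l.gcd m ∣ l := Nat.div_dvd_of_dvd (Nat.gcd_dvd_left l m)
    refine ⟨⟨Nat.gcd_dvd_right l m, hm⟩, ⟨⟨?_, ?_⟩, hl.2.squarefree_of_dvd hdiv⟩, ?_⟩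
    · exact Nat.div_pos (Nat.le_of_dvd hl.1.1 (Nat.gcd_dvd_left l m)) hg
    · exact (Nat.le_of_dvd hl.1.1 hdiv).trans hl.1.2
    · have h1 : (l.gcd m * (l / l.gcd m)) = l := Nat.mul_div_cancel' (Nat.gcd_dvd_left l m)
      have h2 : (l.gcd m).Coprime (l / l.gcd m) := Nat.coprime_of_squarefree_mul (h1.symm ▸ hl.2)
      have h3 : (l / l.gcd m).gcd m ∣ l.gcd m :=
        Nat.dvd_gcd ((Nat.gcd_dvd_left _ _).trans hdiv) (Nat.gcd_dvd_right _ _)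
      exact Nat.eq_one_of_dvd_coprimes h2 h3 (Nat.gcd_dvd_left _ _)
  · intro l _ l' _ h
    simp only [Prod.mk.injEq] at h
    have e1 := Nat.mul_div_cancel' (Nat.gcd_dvd_left l m)
    have e2 := Nat.mul_div_cancel' (Nat.gcd_dvd_left l' m)
    rw [h.2, h.1] at e1
    rw [← e1, e2]
  · intro l hl
    simp only [SF, mem_filter, mem_Icc] at hl
    have h1 : (l.gcd m * (l / l.gcd m)) = l := Nat.mul_div_cancel' (Nat.gcd_dvd_left l m)
    have h2 : (l.gcd m).Coprime (l / l.gcd m) := Nat.coprime_of_squarefree_mul (h1.symm ▸ hl.2)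
    simp only
    rw [← nuF_mult.map_mul_of_coprime h2, h1]
  · rintro ⟨a, b⟩ _
    exact mul_nonneg (nuF_nonneg _) (nuF_nonneg _)

lemma sum_inv_sq_le (y : ℕ) : ∑ b ∈ Icc 1 y, ((b : ℝ) ^ 2)⁻¹ ≤ 2 := by
  have h := sum_Ioo_inv_sq_le (α := ℝ) 0 (y + 1)
  have h2 : Ioo 0 (y + 1) = Icc 1 y := by ext; simp; omega
  rw [h2] at h
  simpa using h

lemma sum_inv_le (y : ℕ) : ∑ n ∈ Icc 1 y, (n : ℝ)⁻¹ ≤ 2 * ∑ a ∈ SF y, (a : ℝ)⁻¹ := by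
  have h1 : ∑ n ∈ Icc 1 y, (n : ℝ)⁻¹ ≤
      (∑ b ∈ Icc 1 y, ((b : ℝ) ^ 2)⁻¹) * ∑ a ∈ SF y, (a : ℝ)⁻¹ := by
    rw [sum_mul_sum, ← sum_product']
    have hex : ∀ n : ℕ, ∃ q : ℕ × ℕ, q.1 ^ 2 * q.2 = n ∧ Squarefree q.2 := by
      intro n
      obtain ⟨a, b, h1, h2⟩ := Nat.sq_mul_squarefree n
      exact ⟨(b, a), h1, h2⟩
    choose q hq1 hq2 using hex
    apply sum_inj_le q
    · intro n hn
      rw [mem_Icc] at hn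
      have h1 := hq1 n
      have h0 : (q n).1 ^ 2 * (q n).2 ≠ 0 := by omega
      have ha : (q n).1 ≠ 0 := by intro h; simp [h] at h0
      have hb : (q n).2 ≠ 0 := by intro h; simp [h] at h0
      simp only [mem_product, SF, mem_filter, mem_Icc]
      have h3 : (q n).1 ∣ n := by
        conv_rhs => rw [← h1]
        exact (dvd_pow_self _ two_ne_zero).mul_right _
      have h4 : (q n).2 ∣ n := by
        conv_rhs => rw [← h1]
        exact Dvd.intro_left _ rfl
      have h5 := Nat.le_of_dvd hn.1 h3
      have h6 := Nat.le_of_dvd hn.1 h4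
      exact ⟨⟨by omega, by omega⟩, ⟨by omega, by omega⟩, hq2 n⟩
    · intro n _ n' _ h
      rw [← hq1 n, h, hq1]
    · intro n _
      conv_lhs => rw [← hq1 n]
      push_cast
      rw [mul_inv]
    · intro x _; positivity
  refine h1.trans ?_
  apply mul_le_mul_of_nonneg_right (sum_inv_sq_le y)
  apply sum_nonneg; intro x _; positivity

lemma Q_sq_le (y : ℕ) : (∑ a ∈ SF y, (a : ℝ)⁻¹) ^ 2 ≤ 2 * ∑ l ∈ SF (y ^ 2), nuF l := by
  have h1 : (∑ a ∈ SF y, (a : ℝ)⁻¹) ^ 2 ≤ (∑ b ∈ Icc 1 y, ((b : ℝ) ^ 2)⁻¹) *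
      ∑ z ∈ (SF (y ^ 2)).sigma (fun l => l.divisorsAntidiagonal), (z.1 : ℝ)⁻¹ := by
    rw [sq, sum_mul_sum, ← sum_product', sum_mul_sum, ← sum_product']
    apply sum_inj_le (fun p : ℕ × ℕ => (p.1.gcd p.2,
      (⟨p.1 / p.1.gcd p.2 * (p.2 / p.1.gcd p.2), (p.1 / p.1.gcd p.2, p.2 / p.1.gcd p.2)⟩ :
        Sigma (fun _ : ℕ => ℕ × ℕ))))
    · rintro ⟨a, b⟩ h
      simp only [mem_product, SF, mem_filter, mem_Icc] at h
      obtain ⟨⟨⟨ha1, hay⟩, has⟩, ⟨hb1, hby⟩, hbs⟩ := h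
      have hg : 0 < a.gcd b := Nat.gcd_pos_of_pos_left b ha1
      have hga := Nat.gcd_dvd_left a b
      have hgb := Nat.gcd_dvd_right a b
      have hda : a / a.gcd b ∣ a := Nat.div_dvd_of_dvd hga
      have hdb : b / a.gcd b ∣ b := Nat.div_dvd_of_dvd hgb
      have hpa : 0 < a / a.gcd b := Nat.div_pos (Nat.le_of_dvd ha1 hga) hg
      have hpb : 0 < b / a.gcd b := Nat.div_pos (Nat.le_of_dvd hb1 hgb) hg
      have hc : (a / a.gcd b).Coprime (b / a.gcd b) := Nat.coprime_div_gcd_div_gcd hg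
      simp only [mem_product, mem_sigma, SF, mem_filter, mem_Icc, Nat.mem_divisorsAntidiagonal]
      refine ⟨⟨hg, (Nat.le_of_dvd ha1 hga).trans hay⟩, ⟨⟨Nat.mul_pos hpa hpb, ?_⟩, ?_⟩, trivial,
        (Nat.mul_pos hpa hpb).ne'⟩
      · rw [sq]
        exact Nat.mul_le_mul ((Nat.le_of_dvd ha1 hda).trans hay)
          ((Nat.le_of_dvd hb1 hdb).trans hby)
      · exact (Nat.squarefree_mul hc).2 ⟨has.squarefree_of_dvd hda, hbs.squarefree_of_dvd hdb⟩
    · rintro ⟨a, b⟩ _ ⟨a', b'⟩ _ h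
      simp only [Prod.mk.injEq, Sigma.mk.injEq, heq_eq_eq] at h
      obtain ⟨h1, -, h2, h3⟩ := h
      have e1 := Nat.mul_div_cancel' (Nat.gcd_dvd_left a b)
      have e2 := Nat.mul_div_cancel' (Nat.gcd_dvd_right a b)
      have e3 := Nat.mul_div_cancel' (Nat.gcd_dvd_left a' b')
      have e4 := Nat.mul_div_cancel' (Nat.gcd_dvd_right a' b')
      rw [h2, h1] at e1
      rw [h3, h1] at e2
      rw [Prod.mk.injEq]
      exact ⟨by rw [← e1, e3], by rw [← e2, e4]⟩
    · rintro ⟨a, b⟩ h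
      simp only [mem_product, SF, mem_filter, mem_Icc] at h
      obtain ⟨⟨⟨ha1, hay⟩, has⟩, ⟨hb1, hby⟩, hbs⟩ := h
      have hg : 0 < a.gcd b := Nat.gcd_pos_of_pos_left b ha1
      have e1 := Nat.mul_div_cancel' (Nat.gcd_dvd_left a b)
      have e2 := Nat.mul_div_cancel' (Nat.gcd_dvd_right a b)
      simp only
      rw [← mul_inv, ← mul_inv]
      apply le_of_eq
      congr 1
      have : a * b = (a.gcd b) ^ 2 * (a / a.gcd b * (b / a.gcd b)) := by
        calc a * b = (a.gcd b * (a / a.gcd b)) * (a.gcd b * (b / a.gcd b)) := by rw [e1, e2]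
          _ = _ := by ring
      exact_mod_cast this
    · intro x _; positivity
  refine h1.trans ?_
  have h2 : ∑ z ∈ (SF (y ^ 2)).sigma (fun l => l.divisorsAntidiagonal), (z.1 : ℝ)⁻¹ =
      ∑ l ∈ SF (y ^ 2), nuF l := by
    rw [sum_sigma]
    apply sum_congr rfl
    intro l _
    have hc : l.divisorsAntidiagonal.card = l.divisors.card := by
      rw [← Nat.map_div_right_divisors, card_map]
    simp only [sum_const, nsmul_eq_mul, hc, nuF_apply]
    rfl
  rw [h2]
  apply mul_le_mul_of_nonneg_right (sum_inv_sq_le y)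
  exact sum_nonneg fun x _ => nuF_nonneg x

lemma log_sq_le {y : ℕ} (hy : 1 ≤ y) : Real.log y ^ 2 ≤ 8 * ∑ l ∈ SF (y ^ 2), nuF l := by
  have h1 : Real.log y ≤ ∑ n ∈ Icc 1 y, (n : ℝ)⁻¹ := by
    have h := log_add_one_le_harmonic y
    rw [harmonic_eq_sum_Icc] at h
    push_cast at h
    refine le_trans ?_ h
    apply Real.log_le_log (by exact_mod_cast hy)
    linarith
  have h2 := h1.trans (sum_inv_le y)
  have h3 := Q_sq_le y
  have h4 : 0 ≤ Real.log y := Real.log_natCast_nonneg y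
  nlinarith

lemma sum_ff_le (M : ℕ) : ∑ j ∈ Icc 1 M, ff j ≤ 4 * M := by
  have h1 : ∑ j ∈ Icc 1 M, ff j ≤ ∑ e ∈ Icc 1 M, nuF e * ((M : ℝ) / e) := by
    have h2 : ∀ j ∈ Icc 1 M, ff j = ∑ e ∈ Icc 1 M, if e ∣ j then nuF e else 0 := by
      intro j hj
      rw [mem_Icc] at hj
      rw [← sum_filter, ff]
      apply sum_congr _ (fun _ _ => rfl)
      ext e
      simp only [Nat.mem_divisors, mem_filter, mem_Icc]
      constructor
      · rintro ⟨h, _⟩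
        have := Nat.le_of_dvd hj.1 h
        have := Nat.pos_of_dvd_of_pos h hj.1
        exact ⟨⟨by omega, by omega⟩, h⟩
      · rintro ⟨_, h⟩; exact ⟨h, by omega⟩
    rw [sum_congr rfl h2, sum_comm]
    apply sum_le_sum
    intro e _
    rw [← sum_filter, sum_const, nsmul_eq_mul, mul_comm]
    apply mul_le_mul_of_nonneg_left _ (nuF_nonneg e)
    have h3 : (Icc 1 M).filter (fun j => e ∣ j) = (Ioc 0 M).filter (fun j => e ∣ j) := by
      congr 1
    rw [h3, Nat.Ioc_filter_dvd_card_eq_div]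
    exact Nat.cast_div_le
  have h4 : ∑ e ∈ Icc 1 M, nuF e * ((M : ℝ) / e) ≤
      M * ((∑ a ∈ Icc 1 M, ((a : ℝ) ^ 2)⁻¹) * (∑ a ∈ Icc 1 M, ((a : ℝ) ^ 2)⁻¹)) := by
    have h5 : ∑ e ∈ Icc 1 M, nuF e * ((M : ℝ) / e) = M *
        ∑ z ∈ (Icc 1 M).sigma (fun l => l.divisorsAntidiagonal), ((z.1 : ℝ) ^ 2)⁻¹ := by
      rw [sum_sigma, mul_sum]
      apply sum_congr rfl
      intro l hl
      have hc : l.divisorsAntidiagonal.card = l.divisors.card := by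
        rw [← Nat.map_div_right_divisors, card_map]
      simp only [sum_const, nsmul_eq_mul, hc, nuF_apply]
      field_simp
    rw [h5]
    apply mul_le_mul_of_nonneg_left _ (by positivity)
    rw [sum_mul_sum, ← sum_product']
    apply sum_inj_le (fun z : Sigma (fun _ : ℕ => ℕ × ℕ) => z.2)
    · rintro ⟨l, a, b⟩ h
      simp only [mem_sigma, mem_Icc, Nat.mem_divisorsAntidiagonal, mem_product] at h ⊢
      obtain ⟨⟨h1, h2⟩, rfl, h3⟩ := h
      have ha : 0 < a := Nat.pos_of_ne_zero (left_ne_zero_of_mul h3)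
      have hb : 0 < b := Nat.pos_of_ne_zero (right_ne_zero_of_mul h3)
      exact ⟨⟨ha, (Nat.le_mul_of_pos_right a hb).trans h2⟩,
        ⟨hb, (Nat.le_mul_of_pos_left b ha).trans h2⟩⟩
    · rintro ⟨l, a, b⟩ h ⟨l', a', b'⟩ h' heq
      simp only [mem_sigma, mem_Icc, Nat.mem_divisorsAntidiagonal] at h h'
      simp only [Prod.mk.injEq] at heq
      obtain ⟨-, rfl, -⟩ := h
      obtain ⟨-, rfl, -⟩ := h'
      obtain ⟨rfl, rfl⟩ := heq
      rfl
    · rintro ⟨l, a, b⟩ h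
      simp only [mem_sigma, mem_Icc, Nat.mem_divisorsAntidiagonal] at h
      obtain ⟨-, rfl, -⟩ := h
      simp only
      push_cast
      rw [← mul_inv, mul_pow]
    · intro x _; positivity
  have h6 := sum_inv_sq_le M
  have h7 : (0 : ℝ) ≤ ∑ a ∈ Icc 1 M, ((a : ℝ) ^ 2)⁻¹ := sum_nonneg fun _ _ => by positivity
  refine h1.trans (h4.trans ?_)
  rw [mul_comm (4 : ℝ)]
  apply mul_le_mul_of_nonneg_left _ (by positivity)
  nlinarith

lemma sum_ff_two_le (H : ℕ) : ∑ k ∈ Icc 1 H, ff (2 * k) ≤ 8 * H := by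
  have h := sum_ff_le (2 * H)
  have h2 : ∑ k ∈ Icc 1 H, ff (2 * k) ≤ ∑ j ∈ Icc 1 (2 * H), ff j := by
    apply sum_inj_le (fun k => 2 * k)
    · intro k hk
      rw [mem_Icc] at hk ⊢
      omega
    · intro a _ b _ hab
      omega
    · intro _ _; exact le_rfl
    · intro j _
      exact sum_nonneg fun x _ => nuF_nonneg x
  push_cast at h
  linarith

/-- Upper bound for prime pairs. -/
lemma pair_bound (N y k : ℕ) (hy : 2 ≤ y) (hk : 1 ≤ k) :
    (((Ioc 0 N).filter (fun p => p.Prime ∧ (p + k).Prime)).card : ℝ) ≤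
      8 * N / Real.log y ^ 2 * ff (2 * k) + 2 * (y : ℝ) ^ 24 := by
  have hy1 : (1 : ℝ) < y := by exact_mod_cast hy
  have hlog : 0 < Real.log y := Real.log_pos hy1
  have hR : 1 ≤ y ^ 2 := Nat.one_le_pow _ _ (by omega)
  have h1 := sifted_ge N (y ^ 2) k
  have h2 := selberg (sv N (y ^ 2) k) hR (Nat.cast_nonneg N) (sv_nu N (y ^ 2) k)
    (sv_rem N (y ^ 2) k)
  have h3 := log_sq_le (y := y) (by omega)
  have h4 := coprime_reduce (y ^ 2) (m := 2 * k) (by omega)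
  have h5 := LL_ge N (y ^ 2) k
  have hff : 0 ≤ ff (2 * k) := sum_nonneg fun x _ => nuF_nonneg x
  have hL := LL_pos (sv N (y ^ 2) k) hR
  have h6 : Real.log y ^ 2 ≤ 8 * (ff (2 * k) * LL (sv N (y ^ 2) k) (y ^ 2)) := by
    refine h3.trans ?_
    have := mul_le_mul_of_nonneg_left h5 hff
    linarith
  have h7 : (sv N (y ^ 2) k).totalMass / LL (sv N (y ^ 2) k) (y ^ 2) ≤
      8 * N / Real.log y ^ 2 * ff (2 * k) := by
    change (N : ℝ) / _ ≤ _
    rw [div_mul_eq_mul_div, div_le_div_iff₀ hL (by positivity)]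
    have := mul_le_mul_of_nonneg_left h6 (Nat.cast_nonneg (α := ℝ) N)
    linarith
  have h8 : (((y ^ 2 : ℕ) : ℝ)) ^ 12 = (y : ℝ) ^ 24 := by push_cast; ring
  have h9 : (((y ^ 2 : ℕ) : ℝ)) ≤ (y : ℝ) ^ 24 := by
    push_cast
    exact pow_le_pow_right₀ hy1.le (by norm_num)
  linarith

/-- All small differences at once. -/
lemma all_pairs (N y H : ℕ) (hy : 2 ≤ y) :
    ∑ k ∈ Icc 1 H, (((Ioc 0 N).filter (fun p => p.Prime ∧ (p + k).Prime)).card : ℝ) ≤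
      64 * N / Real.log y ^ 2 * H + 2 * (y : ℝ) ^ 24 * H := by
  have h1 : ∑ k ∈ Icc 1 H, (((Ioc 0 N).filter (fun p => p.Prime ∧ (p + k).Prime)).card : ℝ) ≤
      ∑ k ∈ Icc 1 H, (8 * N / Real.log y ^ 2 * ff (2 * k) + 2 * (y : ℝ) ^ 24) := by
    apply sum_le_sum
    intro k hk
    exact pair_bound N y k hy (mem_Icc.1 hk).1
  refine h1.trans ?_
  rw [sum_add_distrib, ← mul_sum, sum_const, Nat.card_Icc, nsmul_eq_mul]
  have h2 := mul_le_mul_of_nonneg_left (sum_ff_two_le H)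
    (show (0 : ℝ) ≤ 8 * N / Real.log y ^ 2 by positivity)
  have h3 : 8 * (N : ℝ) / Real.log y ^ 2 * (8 * H) = 64 * N / Real.log y ^ 2 * H := by ring
  simp only [Nat.add_sub_cancel]
  linarith

lemma exists_root (N : ℕ) (hN : 2 ^ 48 ≤ N) :
    ∃ y : ℕ, 2 ≤ y ∧ (y : ℝ) ^ 24 ≤ √N ∧ Real.log N / 96 ≤ Real.log y := by
  set y := Nat.findGreatest (fun y => y ^ 48 ≤ N) N with hydef
  have h1 : y ^ 48 ≤ N :=
    Nat.findGreatest_spec (P := fun y => y ^ 48 ≤ N) (m := 0) (Nat.zero_le N) (by simp)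
  have h2 : 2 ≤ y := Nat.le_findGreatest (by omega) hN
  have h3 : N < (y + 1) ^ 48 := by
    by_contra h
    have h4 : (y + 1) ^ 48 ≤ N := by omega
    have h5 : y + 1 ≤ N := (Nat.le_self_pow (by norm_num) _).trans h4
    have := Nat.le_findGreatest (P := fun y => y ^ 48 ≤ N) h5 h4
    omega
  refine ⟨y, h2, ?_, ?_⟩
  · apply Real.le_sqrt_of_sq_le
    rw [← pow_mul]
    exact_mod_cast h1
  · have h4 : y + 1 ≤ y ^ 2 := by nlinarith
    have h5 : N ≤ y ^ 96 := by
      calc N ≤ (y + 1) ^ 48 := h3.le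
        _ ≤ (y ^ 2) ^ 48 := Nat.pow_le_pow_left h4 48
        _ = y ^ 96 := by rw [← pow_mul]
    have h6 : Real.log N ≤ Real.log ((y : ℝ) ^ 96) := by
      apply Real.log_le_log
      · have : 0 < N := by omega
        exact_mod_cast this
      · exact_mod_cast h5
    rw [Real.log_pow] at h6
    push_cast at h6
    linarith

lemma pairs_final (N H : ℕ) (hN : 2 ^ 48 ≤ N) :
    ∑ k ∈ Icc 1 H, (((Ioc 0 N).filter (fun p => p.Prime ∧ (p + k).Prime)).card : ℝ) ≤
      (589824 * N / Real.log N ^ 2 + 2 * √N) * H := by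
  obtain ⟨y, hy, h1, h2⟩ := exists_root N hN
  refine (all_pairs N y H hy).trans ?_
  rw [← add_mul]
  apply mul_le_mul_of_nonneg_right _ (Nat.cast_nonneg H)
  have hN1 : (1 : ℝ) < N := by
    have : 1 < N := by omega
    exact_mod_cast this
  have hlog : 0 < Real.log N := Real.log_pos hN1
  have h3 : 64 * (N : ℝ) / Real.log y ^ 2 ≤ 64 * N / (Real.log N / 96) ^ 2 := by
    gcongr
  have h4 : 64 * (N : ℝ) / (Real.log N / 96) ^ 2 = 589824 * N / Real.log N ^ 2 := by
    field_simp
    norm_num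
  linarith

lemma count_le (x t : ℝ) (hx : 0 ≤ x) :
    (((Finset.range (⌊x⌋₊ + 1)).filter (fun n =>
          (nthPrime n : ℝ) ≤ x ∧ ((nthPrime (n+1) : ℝ) - nthPrime n) ≤ t)).card : ℝ) ≤
    ∑ k ∈ Icc 1 ⌊t⌋₊,
      (((Ioc 0 ⌊x⌋₊).filter (fun p => p.Prime ∧ (p + k).Prime)).card : ℝ) := by
  have hmono : StrictMono nthPrime := Nat.nth_strictMono Nat.infinite_setOfPred_prime
  have hpr : ∀ n, (nthPrime n).Prime := fun n => Nat.prime_nth_prime n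
  have h1 : ((Finset.range (⌊x⌋₊ + 1)).filter (fun n =>
          (nthPrime n : ℝ) ≤ x ∧ ((nthPrime (n+1) : ℝ) - nthPrime n) ≤ t)).card ≤
      ((Icc 1 ⌊t⌋₊).biUnion (fun k =>
        (Ioc 0 ⌊x⌋₊).filter (fun p => p.Prime ∧ (p + k).Prime))).card := by
    apply card_le_card_of_injOn nthPrime
    · intro n hn
      simp only [coe_filter, mem_range, Set.mem_ofPred_eq] at hn
      have hlt : nthPrime n < nthPrime (n + 1) := hmono (Nat.lt_succ_self n)
      simp only [coe_biUnion, Set.mem_iUnion, mem_coe, mem_Icc, mem_filter, mem_Ioc]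
      refine ⟨nthPrime (n + 1) - nthPrime n, ⟨by omega, ?_⟩, ⟨(hpr n).pos, ?_⟩, hpr n, ?_⟩
      · apply Nat.le_floor
        rw [Nat.cast_sub hlt.le]
        exact hn.2.2
      · exact Nat.le_floor hn.2.1
      · rw [Nat.add_sub_cancel' hlt.le]
        exact hpr _
    · exact hmono.injective.injOn
  exact_mod_cast h1.trans card_biUnion_le

lemma ev_log_sq : ∀ᶠ N : ℕ in Filter.atTop, Real.log N ^ 2 ≤ √N := by
  have h := (isLittleO_log_rpow_rpow_atTop (s := 1 / 2) 2 (by norm_num)).bound one_pos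
  have h2 := tendsto_natCast_atTop_atTop (R := ℝ) |>.eventually h
  filter_upwards [h2] with N hN
  rw [one_mul, ← Real.sqrt_eq_rpow, Real.norm_of_nonneg (Real.sqrt_nonneg _)] at hN
  have := (le_abs_self _).trans hN
  exact_mod_cast this

lemma ev_pi : ∀ᶠ N : ℕ in Filter.atTop, (N : ℝ) ≤ 4 * (Nat.primeCounting N * Real.log N) := by
  filter_upwards [ev_log_sq, Filter.eventually_ge_atTop 10000] with N hN hN2
  have hN3 : (10000 : ℝ) ≤ N := by exact_mod_cast hN2
  have hlog : 0 < Real.log N := Real.log_pos (by linarith)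
  have h1 := Chebyshev.pi_ge N
  rw [div_le_iff₀ hlog] at h1
  have h2 := Real.log_two_gt_d9
  have h3 : Real.log (N + 1) ≤ 2 * Real.log N := by
    have : Real.log ((N : ℝ) ^ 2) = 2 * Real.log N := by rw [Real.log_pow]; norm_num
    rw [← this]
    apply Real.log_le_log <;> nlinarith
  have h4 : (100 : ℝ) ≤ √N := Real.le_sqrt_of_sq_le (by linarith)
  have h5 : √(N : ℝ) * √N = N := Real.mul_self_sqrt (by linarith)
  have h6 : Real.log N ≤ N / 10 := by nlinarith
  nlinarith

end SmallGaps

theorem very_small_gaps_zero_density (h : ℝ → ℝ)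
    (hh : Filter.Tendsto (fun x => h x / Real.log x) Filter.atTop (nhds 0)) :
    Filter.Tendsto (fun x : ℝ =>
      (((Finset.range (⌊x⌋₊ + 1)).filter (fun n =>
          (nthPrime n : ℝ) ≤ x ∧ ((nthPrime (n+1) : ℝ) - nthPrime n) ≤ h x)).card : ℝ)
        / (primePi x : ℝ)) Filter.atTop (nhds 0) := by
  rw [Metric.tendsto_atTop']
  have key : ∀ ε : ℝ, 0 < ε → ∀ᶠ x : ℝ in Filter.atTop,
      (((Finset.range (⌊x⌋₊ + 1)).filter (fun n =>
          (nthPrime n : ℝ) ≤ x ∧ ((nthPrime (n+1) : ℝ) - nthPrime n) ≤ h x)).card : ℝ)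
        / (primePi x : ℝ) ≤ 5000000 * ε := by
    intro ε hε
    have e1 : ∀ᶠ x : ℝ in Filter.atTop, h x / Real.log x < ε := hh.eventually_lt_const hε
    have e2 := (tendsto_nat_floor_atTop (α := ℝ)).eventually SmallGaps.ev_log_sq
    have e3 := (tendsto_nat_floor_atTop (α := ℝ)).eventually SmallGaps.ev_pi
    have e4 := (tendsto_nat_floor_atTop (α := ℝ)).eventually
      (Filter.eventually_ge_atTop (2 ^ 48))
    filter_upwards [e1, e2, e3, e4, Filter.eventually_ge_atTop 2] with x h1 h2 h3 h4 hx
    have hc := SmallGaps.count_le x (h x) (by linarith)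
    have hp := SmallGaps.pairs_final ⌊x⌋₊ ⌊h x⌋₊ h4
    have hA := hc.trans hp
    have hfl := Nat.lt_floor_add_one x
    unfold primePi
    set N := ⌊x⌋₊ with hNdef
    set A := (((Finset.range (N + 1)).filter (fun n =>
          (nthPrime n : ℝ) ≤ x ∧ ((nthPrime (n+1) : ℝ) - nthPrime n) ≤ h x)).card : ℝ)
    have hN2 : (2 : ℝ) ≤ N := by
      have : 2 ≤ N := by omega
      exact_mod_cast this
    have hlogN : 0 < Real.log N := Real.log_pos (by linarith)
    have hlogx : 0 < Real.log x := Real.log_pos (by linarith)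
    have hlx : Real.log x ≤ 2 * Real.log N := by
      have : Real.log ((N : ℝ) ^ 2) = 2 * Real.log N := by rw [Real.log_pow]; norm_num
      rw [← this]
      apply Real.log_le_log (by linarith)
      nlinarith
    have hH : (⌊h x⌋₊ : ℝ) ≤ 2 * ε * Real.log N := by
      rw [div_lt_iff₀ hlogx] at h1
      have h5 : h x ≤ 2 * ε * Real.log N := by nlinarith
      rcases le_or_gt 0 (h x) with h6 | h6
      · exact (Nat.floor_le h6).trans h5
      · rw [Nat.floor_of_nonpos h6.le]
        simp only [Nat.cast_zero]
        positivity
    have hA2 : A ≤ (589824 * N / Real.log N ^ 2 + 2 * √N) * (2 * ε * Real.log N) :=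
      hA.trans (mul_le_mul_of_nonneg_left hH (by positivity))
    have hA3 : A * Real.log N ≤ 2 * ε * (589826 * N) := by
      have h7 : √(N : ℝ) * √N = N := Real.mul_self_sqrt (by linarith)
      have h8 : √(N : ℝ) * Real.log N ^ 2 ≤ N := by
        calc √(N : ℝ) * Real.log N ^ 2 ≤ √N * √N :=
              mul_le_mul_of_nonneg_left h2 (Real.sqrt_nonneg _)
          _ = N := h7
      calc A * Real.log N
          ≤ (589824 * N / Real.log N ^ 2 + 2 * √N) * (2 * ε * Real.log N) * Real.log N :=
            mul_le_mul_of_nonneg_right hA2 hlogN.le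
        _ = 2 * ε * (589824 * N + 2 * (√N * Real.log N ^ 2)) := by
            field_simp
        _ ≤ 2 * ε * (589826 * N) := by
            apply mul_le_mul_of_nonneg_left _ (by positivity)
            linarith
    have hpi : (0 : ℝ) < Nat.primeCounting N := by
      by_contra hcon
      have : (Nat.primeCounting N : ℝ) * Real.log N ≤ 0 :=
        mul_nonpos_of_nonpos_of_nonneg (not_lt.1 hcon) hlogN.le
      linarith
    rw [div_le_iff₀ hpi]
    have h9 : A * Real.log N ≤ (5000000 * ε * Nat.primeCounting N) * Real.log N := by
      have h10 := mul_le_mul_of_nonneg_left h3 hε.le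
      have h11 : 0 ≤ ε * N := by positivity
      linarith
    exact le_of_mul_le_mul_right h9 hlogN
  intro δ hδ
  have hk := key (δ / 10000000) (by positivity)
  obtain ⟨a, ha⟩ := Filter.eventually_atTop.1 hk
  refine ⟨a, fun x hx => ?_⟩
  have h1 := ha x hx.le
  rw [Real.dist_0_eq_abs, abs_of_nonneg (by positivity)]
  linarith
end

section
/- There is an absolute constant C such that for all sufficiently large N and all 2 < h ≤ N, the number of ordered pairs of primes (p, p') with N < p, p' ≤ 2N and 0 < p' − p ≤ h is at most C·h·N/(log N)², and hence is ≪ (h/log N)·π(N). -/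
open Finset

lemma cpp_moebius_between {P : ℕ} (hP : Squarefree P) {l m : ℕ} (hl : l ∣ P) (hm : m ∣ P) :
    (∑ d ∈ P.divisors, if l ∣ d ∧ d ∣ m then (ArithmeticFunction.moebius d : ℝ) else 0)
      = if l = m then (ArithmeticFunction.moebius l : ℝ) else 0 := by
  have hm0 : m ≠ 0 := ne_zero_of_dvd_ne_zero hP.ne_zero hm
  have hl0 : l ≠ 0 := ne_zero_of_dvd_ne_zero hP.ne_zero hl
  have hmsq : Squarefree m := hP.squarefree_of_dvd hm
  by_cases hlm : l ∣ m
  · obtain ⟨e, rfl⟩ := hlm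
    have he0 : e ≠ 0 := by rintro rfl; simp at hm0
    have hcop : ∀ f, f ∣ e → Nat.Coprime l f := fun f hf =>
      (Nat.coprime_of_squarefree_mul hmsq).coprime_dvd_right hf
    rw [← sum_filter]
    have : P.divisors.filter (fun d => l ∣ d ∧ d ∣ l * e) = e.divisors.image (fun f => l * f) := by
      ext d
      simp only [mem_filter, Nat.mem_divisors, mem_image]
      constructor
      · rintro ⟨_, ⟨f, rfl⟩, h2⟩
        exact ⟨f, ⟨Nat.dvd_of_mul_dvd_mul_left (Nat.pos_of_ne_zero hl0) h2, he0⟩, rfl⟩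
      · rintro ⟨f, ⟨h1, _⟩, rfl⟩
        exact ⟨⟨(mul_dvd_mul_left l h1).trans hm, hP.ne_zero⟩, dvd_mul_right _ _,
          mul_dvd_mul_left l h1⟩
    rw [this, sum_image (by
      intro a _ b _ h; exact Nat.eq_of_mul_eq_mul_left (Nat.pos_of_ne_zero hl0) h)]
    have h2 : ∀ f ∈ e.divisors, (ArithmeticFunction.moebius (l * f) : ℝ)
        = ArithmeticFunction.moebius l * (ArithmeticFunction.moebius f : ℝ) := by
      intro f hf
      rw [ArithmeticFunction.isMultiplicative_moebius.map_mul_of_coprime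
        (hcop f (Nat.dvd_of_mem_divisors hf))]
      push_cast; rfl
    rw [sum_congr rfl h2, ← mul_sum]
    have h3 : (∑ f ∈ e.divisors, (ArithmeticFunction.moebius f : ℝ)) = if e = 1 then 1 else 0 := by
      have := congrArg (fun F => F e) ArithmeticFunction.coe_zeta_mul_moebius
      simp only [ArithmeticFunction.coe_zeta_mul_apply, ArithmeticFunction.one_apply] at this
      exact_mod_cast this
    rw [h3]
    by_cases he : e = 1
    · simp [he]
    · have : l ≠ l * e := by
        intro h
        apply he
        apply Nat.eq_of_mul_eq_mul_left (Nat.pos_of_ne_zero hl0)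
        omega
      simp [he, this]
  · rw [if_neg (by rintro rfl; exact hlm dvd_rfl)]
    apply sum_eq_zero
    intro d _
    rw [if_neg]
    rintro ⟨h1, h2⟩
    exact hlm (h1.trans h2)

lemma cpp_selberg (s : BoundingSieve) (Y : ℕ) (hY : 1 ≤ Y)
    (hX : 0 ≤ s.totalMass)
    (hnu : ∀ d, d ∣ s.prodPrimes → (s.nu d)⁻¹ ≤ d)
    (hrem : ∀ d, d ∣ s.prodPrimes → |s.rem d| ≤ d) :
    s.siftedSum ≤ s.totalMass / (∑ l ∈ s.prodPrimes.divisors.filter (· ≤ Y), s.nu l)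
      + (Y : ℝ) ^ 10 := by
  classical
  set P := s.prodPrimes with hPdef
  have hP : Squarefree P := s.prodPrimes_squarefree
  set T := P.divisors.filter (· ≤ Y) with hT
  set g := s.selbergTerms with hg
  set G := ∑ l ∈ T, g l with hGdef
  have hTP : ∀ l ∈ T, l ∣ P := fun l hl => Nat.dvd_of_mem_divisors (mem_filter.1 hl).1
  have hgpos : ∀ l, l ∣ P → 0 < g l := fun l hl => BoundingSieve.selbergTerms_pos hl
  have h1T : 1 ∈ T := by simp [hT, hP.ne_zero, hY]
  have hGpos : 0 < G := sum_pos (fun l hl => hgpos l (hTP l hl)) ⟨1, h1T⟩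
  have hnupos : ∀ l, l ∣ P → 0 < s.nu l := fun l hl => BoundingSieve.nu_pos_of_dvd_prodPrimes hl
  have hVpos : 0 < ∑ l ∈ T, s.nu l := sum_pos (fun l hl => hnupos l (hTP l hl)) ⟨1, h1T⟩
  have hVG : ∑ l ∈ T, s.nu l ≤ G := by
    apply sum_le_sum
    intro l hl
    rw [hg, BoundingSieve.selbergTerms_apply]
    apply le_mul_of_one_le_right (hnupos l (hTP l hl)).le
    refine Finset.prod_induction _ (fun x : ℝ => 1 ≤ x) (fun a b ha hb => one_le_mul_of_one_le_of_one_le ha hb)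
      le_rfl ?_
    intro p hp
    have hpp := Nat.prime_of_mem_primeFactors hp
    have hpd : p ∣ P := (Nat.dvd_of_mem_primeFactors hp).trans (hTP l hl)
    have h1 := s.nu_lt_one_of_prime p hpp hpd
    have h2 := s.nu_pos_of_prime p hpp hpd
    rw [one_le_inv₀ (by linarith)]
    linarith
  let w : ℕ → ℝ := fun d =>
    (ArithmeticFunction.moebius d : ℝ) * (s.nu d)⁻¹ * G⁻¹ * ∑ m ∈ T, if d ∣ m then g m else 0
  have hw1 : w 1 = 1 := by
    have : s.nu 1 = 1 := s.nu_mult.map_one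
    simp [w, this, ← hGdef, hGpos.ne']
  have hwabs : ∀ d, d ∣ P → |w d| ≤ d := by
    intro d hd
    have hs0 : 0 ≤ ∑ m ∈ T, (if d ∣ m then g m else 0) := sum_nonneg fun m hm => by
      split_ifs; exacts [(hgpos m (hTP m hm)).le, le_rfl]
    have hs1 : ∑ m ∈ T, (if d ∣ m then g m else 0) ≤ G := sum_le_sum fun m hm => by
      split_ifs; exacts [le_rfl, (hgpos m (hTP m hm)).le]
    have hmu : |(ArithmeticFunction.moebius d : ℝ)| ≤ 1 := by
      exact_mod_cast ArithmeticFunction.abs_moebius_le_one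
    have hn := hnupos d hd
    have : |w d| = |(ArithmeticFunction.moebius d : ℝ)| * (s.nu d)⁻¹ *
        (G⁻¹ * ∑ m ∈ T, if d ∣ m then g m else 0) := by
      simp only [w]
      rw [mul_assoc, abs_mul, abs_mul, abs_of_nonneg (inv_nonneg.2 hn.le),
        abs_of_nonneg (mul_nonneg (inv_nonneg.2 hGpos.le) hs0)]
    rw [this]
    have h4 : (G⁻¹ * ∑ m ∈ T, if d ∣ m then g m else 0) ≤ 1 := by
      rw [inv_mul_le_iff₀ hGpos]; linarith
    have h5 : 0 ≤ (G⁻¹ * ∑ m ∈ T, if d ∣ m then g m else 0) := by positivity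
    calc _ ≤ 1 * (s.nu d)⁻¹ * 1 := by gcongr
      _ ≤ d := by simpa using hnu d hd
  have hw0 : ∀ d, Y < d → w d = 0 := by
    intro d hd
    have : ∑ m ∈ T, (if d ∣ m then g m else 0) = 0 := by
      apply sum_eq_zero
      intro m hm
      rw [if_neg]
      intro h
      have h1 := (mem_filter.1 hm).2
      have h2 := Nat.le_of_dvd (Nat.pos_of_dvd_of_pos (hTP m hm) (Nat.pos_of_ne_zero hP.ne_zero)) h
      omega
    simp [w, this]
  have hmain : s.mainSum (BoundingSieve.lambdaSquared w) = G⁻¹ := by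
    rw [BoundingSieve.mainSum_lambdaSquared_eq_sum_mul_sum_sq, ← hPdef, ← hg]
    have key : ∀ l ∈ P.divisors, (∑ d ∈ P.divisors, if l ∣ d then s.nu d * w d else 0)
        = if l ∈ T then G⁻¹ * g l * (ArithmeticFunction.moebius l : ℝ) else 0 := by
      intro l hl
      have hlP := Nat.dvd_of_mem_divisors hl
      calc (∑ d ∈ P.divisors, if l ∣ d then s.nu d * w d else 0)
          = ∑ d ∈ P.divisors, ∑ m ∈ T, G⁻¹ * g m *
              (if l ∣ d ∧ d ∣ m then (ArithmeticFunction.moebius d : ℝ) else 0) := by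
            apply sum_congr rfl
            intro d hd
            have hn := hnupos d (Nat.dvd_of_mem_divisors hd)
            by_cases h : l ∣ d
            · simp only [h, if_true, true_and, w]
              rw [mul_sum, mul_sum]
              apply sum_congr rfl
              intro m _
              split_ifs
              · field_simp
              · simp
            · simp [h]
        _ = ∑ m ∈ T, G⁻¹ * g m * (if l = m then (ArithmeticFunction.moebius l : ℝ) else 0) := by
            rw [sum_comm]
            apply sum_congr rfl
            intro m hm
            rw [← mul_sum, cpp_moebius_between hP hlP (hTP m hm)]
        _ = _ := by
            simp
    rw [sum_congr rfl (fun l hl => by rw [key l hl])]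
    have : ∀ l ∈ P.divisors, (g l)⁻¹ *
        (if l ∈ T then G⁻¹ * g l * (ArithmeticFunction.moebius l : ℝ) else 0) ^ 2
        = if l ≤ Y then G⁻¹ ^ 2 * g l else 0 := by
      intro l hl
      have hlP := Nat.dvd_of_mem_divisors hl
      have hgl := hgpos l hlP
      have hiff : l ∈ T ↔ l ≤ Y := by simp [hT, hlP, hP.ne_zero]
      simp only [hiff]
      split_ifs
      · have : (ArithmeticFunction.moebius l : ℝ) ^ 2 = 1 := by
          exact_mod_cast ArithmeticFunction.moebius_sq_eq_one_of_squarefree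
            (hP.squarefree_of_dvd hlP)
        rw [mul_pow, this]
        field_simp
      · simp
    rw [sum_congr rfl this, ← sum_filter, ← mul_sum, ← hT, ← hGdef]
    field_simp
  have herr : s.errSum (BoundingSieve.lambdaSquared w) ≤ (Y : ℝ) ^ 10 := by
    have hb : ∀ d ∈ P.divisors, |BoundingSieve.lambdaSquared w d| * |s.rem d|
        ≤ if d ∈ Icc 1 (Y ^ 2) then (Y : ℝ) ^ 8 else 0 := by
      intro d hd
      have hdP := Nat.dvd_of_mem_divisors hd
      have hdpos : 0 < d := Nat.pos_of_dvd_of_pos hdP (Nat.pos_of_ne_zero hP.ne_zero)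
      have hterm : ∀ d1 ∈ d.divisors, ∀ d2 ∈ d.divisors,
          |if d = Nat.lcm d1 d2 then w d1 * w d2 else 0| ≤ if d ≤ Y ^ 2 then (Y : ℝ) ^ 2 else 0 := by
        intro d1 h1 d2 h2
        have h1P := (Nat.dvd_of_mem_divisors h1).trans hdP
        have h2P := (Nat.dvd_of_mem_divisors h2).trans hdP
        have hn : (0:ℝ) ≤ if d ≤ Y ^ 2 then (Y : ℝ) ^ 2 else 0 := by split_ifs <;> positivity
        by_cases hl : d = Nat.lcm d1 d2
        · rw [if_pos hl]
          by_cases hd1 : Y < d1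
          · simpa [hw0 d1 hd1] using hn
          by_cases hd2 : Y < d2
          · simpa [hw0 d2 hd2] using hn
          push Not at hd1 hd2
          have : d ≤ Y ^ 2 := by
            rw [hl, sq]
            refine le_trans (Nat.le_of_dvd ?_ (Nat.lcm_dvd_mul d1 d2)) (Nat.mul_le_mul hd1 hd2)
            exact Nat.mul_pos (Nat.pos_of_mem_divisors h1) (Nat.pos_of_mem_divisors h2)
          rw [if_pos this, abs_mul, sq]
          have e1 : (d1 : ℝ) ≤ Y := by exact_mod_cast hd1
          have e2 : (d2 : ℝ) ≤ Y := by exact_mod_cast hd2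
          exact mul_le_mul ((hwabs d1 h1P).trans e1) ((hwabs d2 h2P).trans e2) (abs_nonneg _)
            (by positivity)
        · rw [if_neg hl]; simpa using hn
      have hL : |BoundingSieve.lambdaSquared w d| ≤
          (d : ℝ) * (d * (if d ≤ Y ^ 2 then (Y : ℝ) ^ 2 else 0)) := by
        have hn : (0:ℝ) ≤ if d ≤ Y ^ 2 then (Y : ℝ) ^ 2 else 0 := by split_ifs <;> positivity
        have hcard : (d.divisors.card : ℝ) ≤ d := by exact_mod_cast Nat.card_divisors_le_self d
        unfold BoundingSieve.lambdaSquared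
        calc _ ≤ ∑ d1 ∈ d.divisors, ∑ d2 ∈ d.divisors,
              |if d = Nat.lcm d1 d2 then w d1 * w d2 else 0| :=
              (abs_sum_le_sum_abs _ _).trans (sum_le_sum fun _ _ => abs_sum_le_sum_abs _ _)
          _ ≤ ∑ d1 ∈ d.divisors, ∑ d2 ∈ d.divisors, (if d ≤ Y ^ 2 then (Y : ℝ) ^ 2 else 0) :=
              sum_le_sum fun d1 h1 => sum_le_sum fun d2 h2 => hterm d1 h1 d2 h2
          _ = (d.divisors.card : ℝ) * (d.divisors.card * (if d ≤ Y ^ 2 then (Y : ℝ) ^ 2 else 0)) := by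
              simp only [sum_const, nsmul_eq_mul]
          _ ≤ _ := by gcongr
      have hr := hrem d hdP
      by_cases hdY : d ≤ Y ^ 2
      · rw [if_pos hdY] at hL
        rw [if_pos (by simp; omega)]
        have hdY' : (d : ℝ) ≤ (Y:ℝ) ^ 2 := by exact_mod_cast hdY
        calc _ ≤ ((d : ℝ) * (d * (Y : ℝ) ^ 2)) * d := by gcongr
          _ ≤ ((Y:ℝ) ^ 2 * ((Y:ℝ) ^ 2 * (Y : ℝ) ^ 2)) * (Y:ℝ) ^ 2 := by gcongr
          _ = _ := by ring
      · rw [if_neg hdY] at hL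
        rw [if_neg (by simp; omega)]
        have : |BoundingSieve.lambdaSquared w d| = 0 := le_antisymm (by simpa using hL) (abs_nonneg _)
        simp [this]
    unfold BoundingSieve.errSum
    calc _ ≤ ∑ d ∈ P.divisors, if d ∈ Icc 1 (Y ^ 2) then (Y : ℝ) ^ 8 else 0 := sum_le_sum hb
      _ = ∑ d ∈ P.divisors.filter (· ∈ Icc 1 (Y ^ 2)), (Y : ℝ) ^ 8 := by rw [sum_filter]
      _ ≤ ∑ d ∈ Icc 1 (Y ^ 2), (Y : ℝ) ^ 8 := by
          apply sum_le_sum_of_subset_of_nonneg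
          · intro d hd; exact (mem_filter.1 hd).2
          · intros; positivity
      _ = (Y : ℝ) ^ 10 := by simp; ring
  have hfin := BoundingSieve.siftedSum_le_mainSum_errSum_of_upperMoebius (s := s)
    (BoundingSieve.lambdaSquared w) (BoundingSieve.upperMoebius_lambdaSquared w hw1)
  rw [hmain] at hfin
  calc _ ≤ s.totalMass * G⁻¹ + _ := hfin
    _ ≤ s.totalMass / (∑ l ∈ T, s.nu l) + _ := by
        rw [← div_eq_mul_inv]
        gcongr



lemma cpp_sum_inj {α β : Type*} [DecidableEq β] {s : Finset α} {t : Finset β} {f : α → ℝ} {g : β → ℝ}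
    (i : α → β) (hi : ∀ a ∈ s, i a ∈ t) (hinj : ∀ a ∈ s, ∀ b ∈ s, i a = i b → a = b)
    (hle : ∀ a ∈ s, f a ≤ g (i a)) (hg : ∀ b ∈ t, 0 ≤ g b) :
    ∑ a ∈ s, f a ≤ ∑ b ∈ t, g b := by
  calc ∑ a ∈ s, f a ≤ ∑ a ∈ s, g (i a) := sum_le_sum hle
    _ = ∑ b ∈ s.image i, g b := by
        rw [sum_image]
        intro a ha b hb h
        exact hinj a ha b hb h
    _ ≤ _ := by
        apply sum_le_sum_of_subset_of_nonneg
        · intro b hb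
          obtain ⟨a, ha, rfl⟩ := mem_image.1 hb
          exact hi a ha
        · intro b hb _
          exact hg b hb

lemma cpp_zeta2 (t : ℕ) : ∑ a ∈ Icc 1 t, (1 : ℝ) / (a : ℝ) ^ 2 ≤ 2 := by
  have := sum_Ioo_inv_sq_le (α := ℝ) 0 (t + 1)
  have e : Ioo 0 (t + 1) = Icc 1 t := by ext; simp; omega
  rw [e] at this
  simpa [one_div] using this

/-- `τ(n)/n` -/
noncomputable def cppNu (n : ℕ) : ℝ := (n.divisors.card : ℝ) / n

lemma cppNu_nonneg (n : ℕ) : 0 ≤ cppNu n := by unfold cppNu; positivity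

lemma cppNu_mul {m n : ℕ} (h : Nat.Coprime m n) : cppNu (m * n) = cppNu m * cppNu n := by
  unfold cppNu
  rw [Nat.Coprime.card_divisors_mul h]
  push_cast
  rw [mul_div_mul_comm]

lemma cpp_harm_le (t : ℕ) : Real.log (t + 1) ≤
    2 * ∑ m ∈ (Icc 1 t).filter Squarefree, (1 : ℝ) / m := by
  have h1 : Real.log (t + 1) ≤ ∑ a ∈ Icc 1 t, (1 : ℝ) / a := by
    have := log_add_one_le_harmonic t
    rw [harmonic_eq_sum_Icc] at this
    push_cast at this
    simpa [one_div] using this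
  refine h1.trans ?_
  have h2 : ∑ a ∈ Icc 1 t, (1 : ℝ) / a ≤
      ∑ x ∈ (Icc 1 t) ×ˢ ((Icc 1 t).filter Squarefree), (1 / (x.1 : ℝ) ^ 2) * (1 / (x.2 : ℝ)) := by
    choose A B hAB hA using Nat.sq_mul_squarefree
    apply cpp_sum_inj (fun n => (B n, A n))
    · intro n hn
      have hn' := mem_Icc.1 hn
      have e := hAB n
      have hA0 : 0 < A n := Nat.pos_of_ne_zero (fun h => by rw [h] at e; omega)
      have hB0 : 0 < B n := Nat.pos_of_ne_zero (fun h => by rw [h] at e; simp at e; omega)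
      simp only [mem_product, mem_filter, mem_Icc]
      refine ⟨⟨hB0, ?_⟩, ⟨hA0, ?_⟩, hA n⟩
      · nlinarith [Nat.mul_le_mul (Nat.mul_le_mul hB0 (le_refl (B n))) hA0]
      · nlinarith [Nat.mul_le_mul (Nat.mul_le_mul hB0 hB0) (le_refl (A n))]
    · intro a _ b _ h
      simp only [Prod.mk.injEq] at h
      rw [← hAB a, ← hAB b, h.1, h.2]
    · intro a _
      have : (a : ℝ) = (B a : ℝ) ^ 2 * A a := by exact_mod_cast (hAB a).symm
      rw [this, div_mul_div_comm, one_mul]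
    · intro b _; positivity
  refine h2.trans ?_
  rw [sum_product]
  simp only
  rw [← sum_mul_sum]
  gcongr
  exact cpp_zeta2 t

lemma cpp_sq_le (t : ℕ) : (∑ m ∈ (Icc 1 t).filter Squarefree, (1 : ℝ) / m) ^ 2 ≤
    2 * ∑ n ∈ (Icc 1 (t ^ 2)).filter Squarefree, cppNu n := by
  have h0 : ∀ n : ℕ, cppNu n = ∑ x ∈ n.divisorsAntidiagonal, 1 / ((x.1 : ℝ) * x.2) := by
    intro n
    have : ∀ x ∈ n.divisorsAntidiagonal, 1 / ((x.1 : ℝ) * x.2) = 1 / n := by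
      intro x hx
      have := (Nat.mem_divisorsAntidiagonal.1 hx).1
      rw [← this]; push_cast; rfl
    rw [sum_congr rfl this, sum_const, nsmul_eq_mul, cppNu]
    rw [← Nat.map_div_right_divisors, card_map]
    ring
  have h1 : (∑ m ∈ (Icc 1 t).filter Squarefree, (1 : ℝ) / m) ^ 2 ≤
      ∑ y ∈ (Icc 1 t) ×ˢ (((Icc 1 (t ^ 2)).filter Squarefree).sigma
        fun n => n.divisorsAntidiagonal),
        (1 / (y.1 : ℝ) ^ 2) * (1 / ((y.2.2.1 : ℝ) * y.2.2.2)) := by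
    rw [sq, sum_mul_sum, ← sum_product']
    apply cpp_sum_inj (fun x => (Nat.gcd x.1 x.2,
      ⟨(x.1 / Nat.gcd x.1 x.2) * (x.2 / Nat.gcd x.1 x.2),
        (x.1 / Nat.gcd x.1 x.2, x.2 / Nat.gcd x.1 x.2)⟩))
    · rintro ⟨a, b⟩ hx
      simp only [mem_product, mem_filter, mem_Icc] at hx
      obtain ⟨⟨⟨ha1, ha2⟩, ha3⟩, ⟨hb1, hb2⟩, hb3⟩ := hx
      have hg : 0 < Nat.gcd a b := Nat.gcd_pos_of_pos_left _ ha1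
      have hga := Nat.gcd_dvd_left a b
      have hgb := Nat.gcd_dvd_right a b
      have hcop : Nat.Coprime (a / Nat.gcd a b) (b / Nat.gcd a b) := Nat.coprime_div_gcd_div_gcd hg
      have ha' : 0 < a / Nat.gcd a b := Nat.div_pos (Nat.le_of_dvd ha1 hga) hg
      have hb' : 0 < b / Nat.gcd a b := Nat.div_pos (Nat.le_of_dvd hb1 hgb) hg
      simp only [mem_product, mem_sigma, mem_filter, mem_Icc, Nat.mem_divisorsAntidiagonal]
      refine ⟨⟨hg, (Nat.le_of_dvd ha1 hga).trans ha2⟩, ⟨⟨Nat.mul_pos ha' hb', ?_⟩, ?_⟩, ?_, ?_⟩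
      · rw [sq]
        exact Nat.mul_le_mul ((Nat.div_le_self _ _).trans ha2) ((Nat.div_le_self _ _).trans hb2)
      · rw [Nat.squarefree_mul_iff]
        exact ⟨hcop, ha3.squarefree_of_dvd (Nat.div_dvd_of_dvd hga),
          hb3.squarefree_of_dvd (Nat.div_dvd_of_dvd hgb)⟩
      · trivial
      · exact (Nat.mul_pos ha' hb').ne'
    · rintro ⟨a, b⟩ _ ⟨c, d⟩ _ h
      simp only [Prod.mk.injEq, Sigma.mk.injEq] at h
      obtain ⟨h1, _, h2⟩ := h
      have h2 := eq_of_heq h2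
      simp only [Prod.mk.injEq] at h2
      have e1 : a = c := by
        rw [← Nat.div_mul_cancel (Nat.gcd_dvd_left a b), ← Nat.div_mul_cancel (Nat.gcd_dvd_left c d),
          h2.1, h1]
      have e2 : b = d := by
        rw [← Nat.div_mul_cancel (Nat.gcd_dvd_right a b),
          ← Nat.div_mul_cancel (Nat.gcd_dvd_right c d), h2.2, h1]
      rw [e1, e2]
    · rintro ⟨a, b⟩ _
      have e1 : (a : ℝ) = ((a / Nat.gcd a b : ℕ) : ℝ) * (Nat.gcd a b : ℕ) := by
        exact_mod_cast (Nat.div_mul_cancel (Nat.gcd_dvd_left a b)).symm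
      have e2 : (b : ℝ) = ((b / Nat.gcd a b : ℕ) : ℝ) * (Nat.gcd a b : ℕ) := by
        exact_mod_cast (Nat.div_mul_cancel (Nat.gcd_dvd_right a b)).symm
      apply le_of_eq
      simp only
      rw [div_mul_div_comm, div_mul_div_comm]
      congr 1
      conv_lhs => rw [e1, e2]
      ring
    · intro b _; positivity
  refine h1.trans ?_
  rw [sum_product]
  simp only
  rw [← sum_mul_sum, sum_sigma]
  simp only
  rw [sum_congr rfl (fun n _ => h0 n)]
  gcongr
  exact cpp_zeta2 t

lemma cpp_S (t : ℕ) : Real.log (t + 1) ^ 2 ≤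
    8 * ∑ n ∈ (Icc 1 (t ^ 2)).filter Squarefree, cppNu n := by
  have h1 := cpp_harm_le t
  have h2 := cpp_sq_le t
  have h0 : 0 ≤ Real.log ((t : ℝ) + 1) := Real.log_nonneg (by linarith [(Nat.cast_nonneg t : (0:ℝ) ≤ t)])
  nlinarith [pow_le_pow_left₀ h0 h1 2]

/-- product of primes up to `Y` not dividing `2k` -/
noncomputable def cppP (Y k : ℕ) : ℕ := ∏ p ∈ (Icc 1 Y).filter (fun p => p.Prime ∧ ¬ p ∣ 2 * k), p

lemma cppP_sq (Y k : ℕ) : Squarefree (cppP Y k) := by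
  unfold cppP
  refine Finset.squarefree_prod_of_pairwise_isCoprime (fun p hp q hq hpq => ?_) ?_
  · simp only [coe_filter, mem_Icc, Set.mem_ofPred_eq] at hp hq
    exact Nat.coprime_iff_isRelPrime.1 ((Nat.coprime_primes hp.2.1 hq.2.1).2 hpq)
  · intro p hp
    exact (mem_filter.1 hp).2.1.prime.squarefree

lemma cppP_prime (Y k p : ℕ) (hp : p.Prime) : p ∣ cppP Y k ↔ p ≤ Y ∧ ¬ p ∣ 2 * k := by
  unfold cppP
  rw [hp.prime.dvd_finsetProd_iff]
  constructor
  · rintro ⟨q, hq, h⟩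
    simp only [mem_filter, mem_Icc] at hq
    have := (Nat.prime_dvd_prime_iff_eq hp hq.2.1).1 h
    subst this
    exact ⟨hq.1.2, hq.2.2⟩
  · rintro ⟨h1, h2⟩
    exact ⟨p, by simp [h1, h2, hp, hp.one_le], dvd_rfl⟩

lemma cpp_G (Y k : ℕ) (hk : 1 ≤ k) : ∑ n ∈ (Icc 1 Y).filter Squarefree, cppNu n ≤
    (∑ m ∈ (2 * k).divisors, cppNu m) * ∑ l ∈ (cppP Y k).divisors.filter (· ≤ Y), cppNu l := by
  rw [sum_mul_sum, ← sum_product']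
  apply cpp_sum_inj (fun n => (Nat.gcd n (2 * k), n / Nat.gcd n (2 * k)))
  · intro n hn
    simp only [mem_filter, mem_Icc] at hn
    obtain ⟨⟨h1, h2⟩, h3⟩ := hn
    have hg := Nat.gcd_dvd_left n (2 * k)
    have e := Nat.div_mul_cancel hg
    simp only [mem_product, mem_filter, Nat.mem_divisors]
    refine ⟨⟨Nat.gcd_dvd_right _ _, by omega⟩, ⟨?_, (cppP_sq Y k).ne_zero⟩,
      (Nat.div_le_self _ _).trans h2⟩
    have hsq : Squarefree (n / Nat.gcd n (2 * k)) := h3.squarefree_of_dvd (Nat.div_dvd_of_dvd hg)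
    rw [← Nat.prod_primeFactors_of_squarefree hsq]
    apply prod_dvd_prod_of_subset
    intro p hp
    have hpp := Nat.prime_of_mem_primeFactors hp
    have hpd := Nat.dvd_of_mem_primeFactors hp
    have hpn : p ∣ n := hpd.trans (Nat.div_dvd_of_dvd hg)
    simp only [mem_filter, mem_Icc]
    refine ⟨⟨hpp.one_le, (Nat.le_of_dvd h1 hpn).trans h2⟩, hpp, fun h => ?_⟩
    have hpg : p ∣ Nat.gcd n (2 * k) := Nat.dvd_gcd hpn h
    have hpp2 : p * p ∣ n := by rw [← e]; exact mul_dvd_mul hpd hpg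
    exact hpp.one_lt.ne' (Nat.isUnit_iff.1 (h3 p hpp2))
  · intro a _ b _ h
    simp only [Prod.mk.injEq] at h
    rw [← Nat.div_mul_cancel (Nat.gcd_dvd_left a (2 * k)),
      ← Nat.div_mul_cancel (Nat.gcd_dvd_left b (2 * k)), h.2, h.1]
  · intro n hn
    simp only [mem_filter, mem_Icc] at hn
    have e := Nat.div_mul_cancel (Nat.gcd_dvd_left n (2 * k))
    have hc : Nat.Coprime (Nat.gcd n (2 * k)) (n / Nat.gcd n (2 * k)) := by
      apply Nat.coprime_of_squarefree_mul
      rw [mul_comm, e]; exact hn.2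
    rw [← cppNu_mul hc, mul_comm, e]
  · intro b _
    exact mul_nonneg (cppNu_nonneg _) (cppNu_nonneg _)

lemma cpp_F (H : ℕ) : ∑ k ∈ Icc 1 H, ∑ m ∈ (2 * k).divisors, cppNu m ≤ 8 * H := by
  have h0 : ∀ n ∈ Icc 1 (2 * H), cppNu n / n = ∑ x ∈ n.divisorsAntidiagonal,
      1 / (x.1 : ℝ) ^ 2 * (1 / (x.2 : ℝ) ^ 2) := by
    intro n _
    have : ∀ x ∈ n.divisorsAntidiagonal, 1 / (x.1 : ℝ) ^ 2 * (1 / (x.2 : ℝ) ^ 2) = 1 / (n : ℝ) ^ 2 := by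
      intro x hx
      have := (Nat.mem_divisorsAntidiagonal.1 hx).1
      rw [← this]; push_cast; rw [mul_pow, div_mul_div_comm, one_mul]
    rw [sum_congr rfl this, sum_const, nsmul_eq_mul, cppNu]
    rw [← Nat.map_div_right_divisors, card_map]
    ring
  have h1 : ∑ n ∈ Icc 1 (2 * H), cppNu n / n ≤ 4 := by
    rw [sum_congr rfl h0, sum_sigma']
    calc _ ≤ ∑ x ∈ Icc 1 (2 * H) ×ˢ Icc 1 (2 * H), 1 / (x.1 : ℝ) ^ 2 * (1 / (x.2 : ℝ) ^ 2) := by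
          apply cpp_sum_inj (fun y => y.2)
          · rintro ⟨n, a, b⟩ h
            simp only [mem_sigma, mem_Icc, Nat.mem_divisorsAntidiagonal] at h
            obtain ⟨⟨h1, h2⟩, h3, h4⟩ := h
            have ha : 0 < a := Nat.pos_of_ne_zero (by rintro rfl; simp at h3; omega)
            have hb : 0 < b := Nat.pos_of_ne_zero (by rintro rfl; simp at h3; omega)
            simp only [mem_product, mem_Icc]
            refine ⟨⟨ha, ?_⟩, hb, ?_⟩ <;> nlinarith
          · rintro ⟨n, a, b⟩ h ⟨m, c, d⟩ h' hh
            simp only [mem_sigma, mem_Icc, Nat.mem_divisorsAntidiagonal] at h h'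
            simp only [Prod.mk.injEq] at hh
            obtain ⟨rfl, rfl⟩ := hh
            have : n = m := by rw [← h.2.1, ← h'.2.1]
            subst this
            rfl
          · intros; exact le_rfl
          · intros; positivity
      _ = (∑ a ∈ Icc 1 (2 * H), (1 : ℝ) / (a : ℝ) ^ 2) * (∑ a ∈ Icc 1 (2 * H), (1 : ℝ) / (a : ℝ) ^ 2) := by
          rw [sum_mul_sum, ← sum_product']
      _ ≤ 2 * 2 := by
          have := cpp_zeta2 (2 * H)
          have h0 : (0:ℝ) ≤ ∑ a ∈ Icc 1 (2 * H), (1 : ℝ) / (a : ℝ) ^ 2 := sum_nonneg fun _ _ => by positivity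
          gcongr
      _ = 4 := by norm_num
  calc ∑ k ∈ Icc 1 H, ∑ m ∈ (2 * k).divisors, cppNu m
      ≤ ∑ j ∈ Icc 1 (2 * H), ∑ m ∈ j.divisors, cppNu m := by
        apply cpp_sum_inj (fun k => 2 * k)
        · intro k hk; simp only [mem_Icc] at *; omega
        · intro a _ b _ h; omega
        · intros; exact le_rfl
        · intros; exact sum_nonneg fun _ _ => cppNu_nonneg _
    _ = ∑ j ∈ Icc 1 (2 * H), ∑ m ∈ Icc 1 (2 * H), if m ∣ j then cppNu m else 0 := by
        apply sum_congr rfl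
        intro j hj
        rw [← sum_filter]
        apply sum_congr _ (fun _ _ => rfl)
        ext m
        simp only [mem_Icc] at hj
        simp only [Nat.mem_divisors, mem_filter, mem_Icc]
        constructor
        · rintro ⟨h1, h2⟩
          have := Nat.le_of_dvd (by omega) h1
          have := Nat.pos_of_dvd_of_pos h1 (by omega)
          exact ⟨⟨by omega, by omega⟩, h1⟩
        · rintro ⟨_, h⟩; exact ⟨h, by omega⟩
    _ = ∑ m ∈ Icc 1 (2 * H), cppNu m * ((2 * H / m : ℕ) : ℝ) := by
        rw [sum_comm]
        apply sum_congr rfl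
        intro m _
        rw [← sum_filter, sum_const, nsmul_eq_mul, mul_comm]
        have := Nat.Ioc_filter_dvd_card_eq_div (2 * H) m
        have e : Ioc 0 (2 * H) = Icc 1 (2 * H) := by ext; simp; omega
        rw [e] at this
        rw [this]
    _ ≤ ∑ m ∈ Icc 1 (2 * H), cppNu m * (2 * H / m) := by
        apply sum_le_sum
        intro m _
        apply mul_le_mul_of_nonneg_left _ (cppNu_nonneg _)
        have := @Nat.cast_div_le ℝ _ _ _ (2 * H) m
        push_cast at this
        exact this
    _ = 2 * H * ∑ m ∈ Icc 1 (2 * H), cppNu m / m := by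
        rw [mul_sum]
        apply sum_congr rfl
        intro m _
        ring
    _ ≤ 2 * H * 4 := by gcongr
    _ = 8 * H := by ring



lemma cpp_count (N d v : ℕ) (hd : 0 < d) :
    |((#{n ∈ Ioc N (2 * N) | n ≡ v [MOD d]} : ℕ) : ℝ) - N / d| ≤ 1 := by
  have h := Nat.Ioc_filter_modEq_card N (2 * N) hd v
  have hd' : (0 : ℚ) < d := by exact_mod_cast hd
  set A : ℚ := (((2 * N : ℕ) : ℚ) - v) / d with hA
  set B : ℚ := ((N : ℚ) - v) / d with hB
  have hAB : A = B + N / d := by rw [hA, hB]; push_cast; ring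
  have hN : (0 : ℚ) ≤ N / d := by positivity
  have hmono : ⌊B⌋ ≤ ⌊A⌋ := Int.floor_mono (by linarith)
  rw [max_eq_left (by linarith)] at h
  have h' : ((#{n ∈ Ioc N (2 * N) | n ≡ v [MOD d]} : ℕ) : ℚ) = (⌊A⌋ : ℚ) - ⌊B⌋ := by exact_mod_cast h
  have hq : |((#{n ∈ Ioc N (2 * N) | n ≡ v [MOD d]} : ℕ) : ℚ) - N / d| ≤ 1 := by
    rw [h', abs_le]
    have := Int.floor_le A
    have := Int.lt_floor_add_one A
    have := Int.floor_le B
    have := Int.lt_floor_add_one B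
    constructor <;> linarith
  have hr := (Rat.cast_le (K := ℝ)).2 hq
  push_cast at hr
  exact hr

lemma cpp_split (d k n : ℕ) (hd : Squarefree d) (hk : Nat.Coprime d k) :
    (if d ∣ n * (n + k) then (1 : ℝ) else 0) =
      ∑ x ∈ d.divisorsAntidiagonal, if x.1 ∣ n ∧ x.2 ∣ n + k then (1 : ℝ) else 0 := by
  have hd0 : 0 < d := Nat.pos_of_ne_zero hd.ne_zero
  have huniq : ∀ a b, a * b = d → a ∣ n → b ∣ n + k → a = Nat.gcd n d := by
    intro a b hab ha hb
    apply Nat.dvd_antisymm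
    · exact Nat.dvd_gcd ha ⟨b, hab.symm⟩
    · have hc : Nat.Coprime (Nat.gcd n d) b := by
        apply Nat.Coprime.symm
        rw [Nat.coprime_iff_gcd_eq_one]
        apply Nat.eq_one_of_dvd_one
        have hk' : Nat.gcd b (Nat.gcd n d) ∣ Nat.gcd d k := by
          apply Nat.dvd_gcd
          · exact (Nat.gcd_dvd_right _ _).trans (Nat.gcd_dvd_right _ _)
          · have h1 : Nat.gcd b (Nat.gcd n d) ∣ n := (Nat.gcd_dvd_right _ _).trans (Nat.gcd_dvd_left _ _)
            have h2 : Nat.gcd b (Nat.gcd n d) ∣ n + k := (Nat.gcd_dvd_left _ _).trans hb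
            exact (Nat.dvd_add_right h1).1 h2
        rwa [hk] at hk'
      apply hc.dvd_of_dvd_mul_right
      rw [hab]
      exact Nat.gcd_dvd_right _ _
  by_cases h : d ∣ n * (n + k)
  · rw [if_pos h]
    have hg := Nat.gcd_dvd_right n d
    have hgpos : 0 < Nat.gcd n d := Nat.gcd_pos_of_pos_right _ hd0
    rw [sum_eq_single (Nat.gcd n d, d / Nat.gcd n d)]
    · rw [if_pos]
      refine ⟨Nat.gcd_dvd_left _ _, ?_⟩
      have hc : Nat.Coprime (d / Nat.gcd n d) (n / Nat.gcd n d) :=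
        (Nat.coprime_div_gcd_div_gcd hgpos).symm
      apply hc.dvd_of_dvd_mul_left
      apply Nat.dvd_of_mul_dvd_mul_left hgpos
      rw [Nat.mul_div_cancel' hg, ← mul_assoc, Nat.mul_div_cancel' (Nat.gcd_dvd_left n d)]
      exact h
    · rintro ⟨a, b⟩ hx hne
      rw [if_neg]
      rintro ⟨ha, hb⟩
      have hab := (Nat.mem_divisorsAntidiagonal.1 hx).1
      have e := huniq a b hab ha hb
      apply hne
      simp only at hab
      rw [Prod.mk.injEq]
      refine ⟨e, ?_⟩
      rw [← e]
      have : 0 < a := by rw [e]; exact hgpos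
      rw [← hab, Nat.mul_div_cancel_left _ this]
    · intro hx
      exfalso
      apply hx
      rw [Nat.mem_divisorsAntidiagonal]
      exact ⟨Nat.mul_div_cancel' hg, hd0.ne'⟩
  · rw [if_neg h]
    symm
    apply sum_eq_zero
    rintro ⟨a, b⟩ hx
    rw [if_neg]
    rintro ⟨ha, hb⟩
    apply h
    rw [← (Nat.mem_divisorsAntidiagonal.1 hx).1]
    exact mul_dvd_mul ha hb

lemma cpp_rem (N d k : ℕ) (hd : Squarefree d) (hk : Nat.Coprime d k) :
    |(∑ n ∈ Ioc N (2 * N), if d ∣ n * (n + k) then (1 : ℝ) else 0) - cppNu d * N| ≤ d := by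
  have hd0 : 0 < d := Nat.pos_of_ne_zero hd.ne_zero
  have hcard : d.divisorsAntidiagonal.card = d.divisors.card := by
    rw [← Nat.map_div_right_divisors, card_map]
  have e1 : (∑ n ∈ Ioc N (2 * N), if d ∣ n * (n + k) then (1 : ℝ) else 0) - cppNu d * N =
      ∑ x ∈ d.divisorsAntidiagonal,
        ((∑ n ∈ Ioc N (2 * N), if x.1 ∣ n ∧ x.2 ∣ n + k then (1 : ℝ) else 0) - N / d) := by
    rw [sum_congr rfl (fun n _ => cpp_split d k n hd hk), sum_comm, sum_sub_distrib, sum_const,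
      nsmul_eq_mul, hcard, cppNu]
    ring
  rw [e1]
  calc _ ≤ ∑ x ∈ d.divisorsAntidiagonal,
        |(∑ n ∈ Ioc N (2 * N), if x.1 ∣ n ∧ x.2 ∣ n + k then (1 : ℝ) else 0) - N / d| :=
        abs_sum_le_sum_abs _ _
    _ ≤ ∑ x ∈ d.divisorsAntidiagonal, (1 : ℝ) := by
        apply sum_le_sum
        rintro ⟨a, b⟩ hx
        have hab := (Nat.mem_divisorsAntidiagonal.1 hx).1
        simp only at hab ⊢
        have hc : Nat.Coprime a b := Nat.coprime_of_squarefree_mul (hab ▸ hd)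
        have hb : 0 < b := Nat.pos_of_ne_zero (by rintro rfl; simp at hab; omega)
        obtain ⟨v, hv1, hv2⟩ := Nat.chineseRemainder hc 0 (k * (b - 1))
        have hiff : ∀ n, (a ∣ n ∧ b ∣ n + k) ↔ n ≡ v [MOD d] := by
          intro n
          rw [← hab, ← Nat.modEq_and_modEq_iff_modEq_mul hc]
          have ea : a ∣ n ↔ n ≡ v [MOD a] := by
            rw [← Nat.modEq_zero_iff_dvd]
            exact ⟨fun h => h.trans hv1.symm, fun h => h.trans hv1⟩
          have eb : b ∣ n + k ↔ n ≡ v [MOD b] := by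
            have hz : v + k ≡ 0 [MOD b] := by
              refine (hv2.add_right k).trans ?_
              rw [Nat.modEq_zero_iff_dvd]
              refine ⟨k, ?_⟩
              obtain ⟨c, rfl⟩ : ∃ c, b = c + 1 := ⟨b - 1, by omega⟩
              simp; ring
            rw [← Nat.modEq_zero_iff_dvd]
            exact ⟨fun h => Nat.ModEq.add_right_cancel' k (h.trans hz.symm),
              fun h => (h.add_right k).trans hz⟩
          rw [ea, eb]
        have : (∑ n ∈ Ioc N (2 * N), if a ∣ n ∧ b ∣ n + k then (1 : ℝ) else 0)
            = ((#{n ∈ Ioc N (2 * N) | n ≡ v [MOD d]} : ℕ) : ℝ) := by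
          simp only [hiff]
          rw [sum_boole]
        rw [this]
        exact cpp_count N d v hd0
    _ = d.divisors.card := by simp [hcard]
    _ ≤ d := by exact_mod_cast Nat.card_divisors_le_self d

/-- `τ(n)/n` as an arithmetic function -/
noncomputable def cppNuAF : ArithmeticFunction ℝ := ⟨cppNu, by simp [cppNu]⟩

lemma cppNuAF_apply (n : ℕ) : cppNuAF n = cppNu n := rfl

lemma cppNuAF_mult : cppNuAF.IsMultiplicative := by
  constructor
  · simp [cppNuAF_apply, cppNu]
  · intro m n h
    exact cppNu_mul h

/-- the sieve for `n (n + k)`, `N < n ≤ 2N` -/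
noncomputable def cppSieve (N Y k : ℕ) : BoundingSieve where
  support := (Ioc N (2 * N)).image (fun n => n * (n + k))
  prodPrimes := cppP Y k
  prodPrimes_squarefree := cppP_sq Y k
  weights := fun _ => 1
  weights_nonneg := fun _ => zero_le_one
  totalMass := N
  nu := cppNuAF
  nu_mult := cppNuAF_mult
  nu_pos_of_prime := by
    intro p hp _
    have := hp.pos
    simp only [cppNuAF_apply, cppNu, hp.divisors, card_pair hp.one_lt.ne]
    positivity
  nu_lt_one_of_prime := by
    intro p hp h
    rw [cppP_prime Y k p hp] at h
    have h2 : p ≠ 2 := by rintro rfl; exact h.2 (dvd_mul_right _ _)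
    have h3 : (2 : ℝ) < p := by
      have := hp.two_le
      exact_mod_cast (show 2 < p by omega)
    simp only [cppNuAF_apply, cppNu, hp.divisors, card_pair hp.one_lt.ne]
    rw [div_lt_one (by linarith)]
    exact_mod_cast h3

lemma cpp_pair (N Y k : ℕ) (hk : 1 ≤ k) (hY : 1 ≤ Y) (hYN : Y ≤ N) :
    ((#{n ∈ Ioc N (2 * N) | n.Prime ∧ (n + k).Prime} : ℕ) : ℝ) ≤
      N / (∑ l ∈ (cppP Y k).divisors.filter (· ≤ Y), cppNu l) + (Y : ℝ) ^ 10 := by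
  have hinj : Set.InjOn (fun n : ℕ => n * (n + k)) (Ioc N (2 * N) : Finset ℕ) := by
    intro a _ b _ h
    simp only at h
    rcases lt_trichotomy a b with hlt | heq | hgt
    · nlinarith
    · exact heq
    · nlinarith
  have hcop : ∀ d, d ∣ cppP Y k → Nat.Coprime d k := by
    intro d hd
    apply Nat.Coprime.coprime_dvd_left hd
    apply Nat.coprime_of_dvd
    intro p hp h1 h2
    exact ((cppP_prime Y k p hp).1 h1).2 (h2.mul_left 2)
  have h := cpp_selberg (cppSieve N Y k) Y hY (by simp [cppSieve]) (by
      intro d hd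
      change (cppNu d)⁻¹ ≤ d
      have hd0 : 0 < d := Nat.pos_of_dvd_of_pos hd (Nat.pos_of_ne_zero (cppP_sq Y k).ne_zero)
      have h1 : (1 : ℝ) ≤ d.divisors.card := by
        exact_mod_cast Finset.card_pos.2 ⟨1, by simp [hd0.ne']⟩
      unfold cppNu
      rw [inv_div]
      exact div_le_self (by positivity) h1) (by
      intro d hd
      have hr := cpp_rem N d k ((cppP_sq Y k).squarefree_of_dvd hd) (hcop d hd)
      simp only [BoundingSieve.rem, BoundingSieve.multSum]
      change |(∑ n ∈ (Ioc N (2 * N)).image (fun n => n * (n + k)), if d ∣ n then (1 : ℝ) else 0)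
        - cppNu d * N| ≤ d
      rw [sum_image hinj]
      exact hr)
  refine le_trans ?_ h
  unfold BoundingSieve.siftedSum
  change _ ≤ (∑ n ∈ (Ioc N (2 * N)).image (fun n => n * (n + k)),
    if Nat.Coprime (cppP Y k) n then (1 : ℝ) else 0)
  rw [sum_image hinj, sum_boole]
  norm_cast
  apply card_le_card
  intro n hn
  simp only [mem_filter, mem_Ioc] at hn ⊢
  refine ⟨hn.1, ?_⟩
  have hbig : ∀ q : ℕ, q.Prime → N < q → Nat.Coprime (cppP Y k) q := by
    intro q hq hNq
    apply Nat.Coprime.symm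
    rw [hq.coprime_iff_not_dvd, cppP_prime Y k q hq]
    omega
  exact Nat.Coprime.mul_right (hbig n hn.2.1 hn.1.1) (hbig (n + k) hn.2.2 (by omega))



lemma cpp_root (N : ℕ) (hN : 1 ≤ N) : ∃ t : ℕ, 1 ≤ t ∧ t ^ 40 ≤ N ∧ N < (t + 1) ^ 40 := by
  have hex : ∃ m : ℕ, N < (m + 1) ^ 40 :=
    ⟨N, lt_of_lt_of_le (Nat.lt_succ_self N) (Nat.le_self_pow (by norm_num) _)⟩
  classical
  refine ⟨Nat.find hex, ?_, ?_, Nat.find_spec hex⟩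
  · by_contra h
    have h0 : Nat.find hex = 0 := by omega
    have := Nat.find_spec hex
    rw [h0] at this
    simp at this
    omega
  · by_contra h
    push Not at h
    have hpos : Nat.find hex ≠ 0 := by
      intro h0
      rw [h0] at h
      simp at h
    obtain ⟨m, hm⟩ := Nat.exists_eq_succ_of_ne_zero hpos
    have := Nat.find_min hex (m := m) (by omega)
    rw [hm] at h
    exact this h

lemma cpp_card_le (N : ℕ) (h : ℝ) (hh : 0 ≤ h) :
    (((Finset.Ioc N (2*N)) ×ˢ (Finset.Ioc N (2*N))).filter (fun x =>
          x.1.Prime ∧ x.2.Prime ∧ x.1 < x.2 ∧ ((x.2 : ℝ) - (x.1 : ℝ)) ≤ h)).card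
      ≤ ∑ k ∈ Icc 1 ⌊h⌋₊, #{n ∈ Ioc N (2 * N) | n.Prime ∧ (n + k).Prime} := by
  rw [← card_sigma]
  apply card_le_card_of_injOn (fun x => (⟨x.2 - x.1, x.1⟩ : Σ _ : ℕ, ℕ))
  · rintro ⟨p, q⟩ hx
    simp only [coe_filter, mem_product, mem_Ioc, Set.mem_ofPred_eq] at hx
    obtain ⟨⟨hp, hq⟩, hpp, hqp, hlt, hle⟩ := hx
    simp only [coe_sigma, Set.mem_sigma_iff, mem_coe, mem_Icc, mem_filter, mem_Ioc]
    refine ⟨⟨by omega, ?_⟩, hp, hpp, ?_⟩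
    · apply Nat.le_floor
      rw [Nat.cast_sub hlt.le]
      exact hle
    · rwa [Nat.add_sub_cancel' hlt.le]
  · rintro ⟨p, q⟩ hx ⟨p', q'⟩ hx' he
    simp only [coe_filter, mem_product, mem_Ioc, Set.mem_ofPred_eq] at hx hx'
    simp only [Sigma.mk.injEq, heq_eq_eq] at he
    rw [Prod.mk.injEq]
    omega

lemma cpp_main (N : ℕ) (hN : 16 ≤ N) (h : ℝ) (hh : 2 < h) :
    ((((Finset.Ioc N (2*N)) ×ˢ (Finset.Ioc N (2*N))).filter (fun x =>
          x.1.Prime ∧ x.2.Prime ∧ x.1 < x.2 ∧ ((x.2 : ℝ) - (x.1 : ℝ)) ≤ h)).card : ℝ)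
        ≤ 104000 * h * N / (Real.log N)^2 := by
  obtain ⟨t, ht1, ht2, ht3⟩ := cpp_root N (by omega)
  have htR : (1 : ℝ) ≤ t := by exact_mod_cast ht1
  have hNR : (16 : ℝ) ≤ N := by exact_mod_cast hN
  have htN : (t : ℝ) ^ 40 ≤ N := by exact_mod_cast ht2
  set L := Real.log ((t : ℝ) + 1) with hL
  have hLpos : 0 < L := Real.log_pos (by linarith)
  have hLt : L ≤ t := by
    have := Real.log_le_sub_one_of_pos (show (0 : ℝ) < t + 1 by linarith)
    linarith
  have hlogpos : 0 < Real.log N := Real.log_pos (by linarith)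
  have hlogL : Real.log N ≤ 40 * L := by
    have h1 : (N : ℝ) ≤ ((t : ℝ) + 1) ^ 40 := by exact_mod_cast ht3.le
    have h2 := Real.log_le_log (by linarith) h1
    rw [Real.log_pow] at h2
    push_cast at h2
    linarith
  have hS := cpp_S t
  rw [← hL] at hS
  set S := ∑ n ∈ (Icc 1 (t ^ 2)).filter Squarefree, cppNu n with hSdef
  have hYN : t ^ 2 ≤ N := (Nat.pow_le_pow_right ht1 (by norm_num)).trans ht2
  have hpair : ∀ k ∈ Icc 1 ⌊h⌋₊,
      ((#{n ∈ Ioc N (2 * N) | n.Prime ∧ (n + k).Prime} : ℕ) : ℝ) ≤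
        8 * N / L ^ 2 * (∑ m ∈ (2 * k).divisors, cppNu m) + (t : ℝ) ^ 20 := by
    intro k hk
    have hk1 := (mem_Icc.1 hk).1
    have hp := cpp_pair N (t ^ 2) k hk1 (Nat.one_le_pow _ _ ht1) hYN
    have hG := cpp_G (t ^ 2) k hk1
    rw [← hSdef] at hG
    set V := ∑ l ∈ (cppP (t ^ 2) k).divisors.filter (· ≤ t ^ 2), cppNu l with hV
    set F := ∑ m ∈ (2 * k).divisors, cppNu m with hF
    have hF0 : 0 ≤ F := sum_nonneg fun _ _ => cppNu_nonneg _
    have hV0 : 0 ≤ V := sum_nonneg fun _ _ => cppNu_nonneg _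
    have hFV : L ^ 2 ≤ 8 * (F * V) := by linarith
    have hVpos : 0 < V := by
      rcases hV0.lt_or_eq with h | h
      · exact h
      · rw [← h] at hFV
        have : 0 < L ^ 2 := by positivity
        linarith
    refine hp.trans ?_
    have e : ((t ^ 2 : ℕ) : ℝ) ^ 10 = (t : ℝ) ^ 20 := by push_cast; ring
    rw [e]
    gcongr
    rw [div_le_iff₀ hVpos, div_mul_eq_mul_div, div_mul_eq_mul_div, le_div_iff₀ (by positivity)]
    have := mul_le_mul_of_nonneg_left hFV (show (0 : ℝ) ≤ N by positivity)
    linarith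
  have hfl : ((⌊h⌋₊ : ℕ) : ℝ) ≤ h := Nat.floor_le (by linarith)
  have hF := cpp_F ⌊h⌋₊
  have hc := cpp_card_le N h (by linarith)
  have hcR : ((((Finset.Ioc N (2*N)) ×ˢ (Finset.Ioc N (2*N))).filter (fun x =>
          x.1.Prime ∧ x.2.Prime ∧ x.1 < x.2 ∧ ((x.2 : ℝ) - (x.1 : ℝ)) ≤ h)).card : ℝ)
      ≤ ∑ k ∈ Icc 1 ⌊h⌋₊, ((#{n ∈ Ioc N (2 * N) | n.Prime ∧ (n + k).Prime} : ℕ) : ℝ) := by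
    exact_mod_cast hc
  refine hcR.trans ((sum_le_sum hpair).trans ?_)
  rw [sum_add_distrib, ← mul_sum, sum_const, nsmul_eq_mul, Nat.card_Icc, Nat.add_sub_cancel]
  have hlog2 : Real.log N ^ 2 ≤ 1600 * L ^ 2 := by
    have := pow_le_pow_left₀ hlogpos.le hlogL 2
    linarith [mul_pow 40 L 2]
  have b1 : 8 * N / L ^ 2 * (∑ k ∈ Icc 1 ⌊h⌋₊, ∑ m ∈ (2 * k).divisors, cppNu m)
      ≤ 102400 * h * N / Real.log N ^ 2 := by
    calc _ ≤ 8 * N / L ^ 2 * (8 * h) := by gcongr; linarith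
      _ ≤ 102400 * h * N / Real.log N ^ 2 := by
        rw [div_mul_eq_mul_div, div_le_div_iff₀ (by positivity) (by positivity)]
        have := mul_le_mul_of_nonneg_left hlog2 (show (0 : ℝ) ≤ 64 * N * h by positivity)
        linarith
  have b2 : (⌊h⌋₊ : ℝ) * (t : ℝ) ^ 20 ≤ 1600 * h * N / Real.log N ^ 2 := by
    rw [le_div_iff₀ (by positivity)]
    have c1 : Real.log N ^ 2 ≤ 1600 * (t : ℝ) ^ 2 := by
      refine hlog2.trans ?_
      gcongr
    have c2 : (t : ℝ) ^ 22 ≤ N := (pow_le_pow_right₀ htR (by norm_num)).trans htN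
    calc (⌊h⌋₊ : ℝ) * (t : ℝ) ^ 20 * Real.log N ^ 2
        ≤ h * (t : ℝ) ^ 20 * (1600 * (t : ℝ) ^ 2) := by gcongr
      _ = 1600 * h * (t : ℝ) ^ 22 := by ring
      _ ≤ 1600 * h * N := by gcongr
  calc _ ≤ 102400 * h * N / Real.log N ^ 2 + 1600 * h * N / Real.log N ^ 2 := add_le_add b1 b2
    _ = _ := by ring

lemma cpp_pi (N : ℕ) (hN : 16 ≤ N) : (N : ℝ) / Real.log N ≤ 2 * (Nat.primeCounting N : ℝ) := by
  have hNR : (16 : ℝ) ≤ N := by exact_mod_cast hN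
  have hlogpos : 0 < Real.log N := Real.log_pos (by linarith)
  have h := Chebyshev.pi_ge N
  have h2 := Real.log_two_gt_d9
  have h2' := Real.log_two_lt_d9
  have h3 : Real.log ((N : ℝ) + 1) ≤ N / 16 + 2 := by
    have e : (N : ℝ) + 1 = ((N + 1) / 16) * 2 ^ 4 := by ring
    rw [e, Real.log_mul (by positivity) (by positivity), Real.log_pow]
    have := Real.log_le_sub_one_of_pos (show (0 : ℝ) < ((N : ℝ) + 1) / 16 by positivity)
    push_cast
    linarith
  have h4 : (N : ℝ) / 2 ≤ N * Real.log 2 - Real.log (N + 1) := by nlinarith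
  have h5 : (N : ℝ) / 2 / Real.log N ≤ (N * Real.log 2 - Real.log (N + 1)) / Real.log N := by gcongr
  have h6 : (N : ℝ) / Real.log N = 2 * ((N : ℝ) / 2 / Real.log N) := by ring
  linarith



/-- **(4.5) of GPY IV.** There is an absolute constant `C` such that for all sufficiently
large `N` and all `2 < h ≤ N`, the number of pairs of primes `(p, p')` with
`N < p, p' ≤ 2N` and `0 < p' - p ≤ h` is at most `C h N/(log N)²`, and hence is
`≪ (h/log N) π(N)`. -/
theorem close_prime_pairs_bound :
    ∃ C : ℝ, 0 < C ∧ ∃ N₀ : ℕ, ∀ N : ℕ, N₀ ≤ N → ∀ h : ℝ, 2 < h → h ≤ N →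
      ((((Finset.Ioc N (2*N)) ×ˢ (Finset.Ioc N (2*N))).filter (fun x =>
          x.1.Prime ∧ x.2.Prime ∧ x.1 < x.2 ∧ ((x.2 : ℝ) - (x.1 : ℝ)) ≤ h)).card : ℝ)
        ≤ C * h * N / (Real.log N)^2
      ∧
      ((((Finset.Ioc N (2*N)) ×ˢ (Finset.Ioc N (2*N))).filter (fun x =>
          x.1.Prime ∧ x.2.Prime ∧ x.1 < x.2 ∧ ((x.2 : ℝ) - (x.1 : ℝ)) ≤ h)).card : ℝ)
        ≤ C * (h / Real.log N) * (Nat.primeCounting N : ℝ) := by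
  refine ⟨208000, by norm_num, 16, ?_⟩
  intro N hN h hh _
  have hNR : (16 : ℝ) ≤ N := by exact_mod_cast hN
  have hlogpos : 0 < Real.log N := Real.log_pos (by linarith)
  have hm := cpp_main N hN h hh
  refine ⟨hm.trans ?_, hm.trans ?_⟩
  · gcongr
    norm_num
  · have hp := cpp_pi N hN
    have hq : 0 ≤ 104000 * (h / Real.log N) := by positivity
    have := mul_le_mul_of_nonneg_left hp hq
    calc 104000 * h * N / Real.log N ^ 2 = 104000 * (h / Real.log N) * (N / Real.log N) := by
          field_simp
      _ ≤ _ := this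
      _ = _ := by ring
end
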